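/- arXiv:1802.02837 — 3 statements merged into one kernel-verified Lean document; each statement's English description precedes it below -/
import Mathlib

section
/- Let m, n ≥ 1 be integers. For A ∈ Matrix (Fin m) (Fin n) ℍ let S(A) = {(X,Y) ∈ 𝔲(m) × 𝔰𝔭(n) : (X mapped entrywise into ℍ)·A = A·Y}, regarded as a real vector space. Then the minimum over all A of dim_ℝ S(A) equals: (m−2n)² if n ≥ 2 and m ≥ 2n; (n−m)(2(n−m)+1) if m ≥ 3 and n ≥ m; 1 + (m−2)² if n = 1 and m ≥ 2; 1 + (n−m)(2(n−m)+1) if m ≤ 2 and n ≥ m; and 0 in the remaining cases (that is, when n ≥ 2 and n < m < 2n). (Infinitesimally, the identity component of a principal isotropy group of the action of U(m)×Sp(n) on ℂᵐ ⊗_ℂ ℍⁿ, given by (g,u)·A = (g mapped into ℍ) A u*, is U(m−2n), Sp(n−m), U(1)×U(m−2), U(1)×Sp(n−m), or trivial, in the respective cases.) -/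
open Matrix Quaternion

/-- `S(A) = {(X,Y) ∈ 𝔲(m) × 𝔰𝔭(n) : X·A = A·Y}`, where the skew-Hermitian complex matrix `X`
is mapped entrywise into the quaternions via the standard embedding `ℂ → ℍ`. -/
def stabSet8 {m n : ℕ} (A : Matrix (Fin m) (Fin n) (Quaternion ℝ)) :
    Set (Matrix (Fin m) (Fin m) ℂ × Matrix (Fin n) (Fin n) (Quaternion ℝ)) :=
  {p | p.1ᴴ = -p.1 ∧ p.2ᴴ = -p.2 ∧
    p.1.map (Quaternion.coeComplex) * A = A * p.2}

/-!
Writing `A = Z + W j` with complex `Z`, `W`, the equation `X A = A Y` says that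
`X (Z W) = (Z W) Y'`, where `Y'` is the complex `2n × 2n` matrix of `Y`.

Lower bound. Skew-Hermitian matrices `X` annihilating the `2n` columns of `(Z W)` and skew-Hermitian
matrices `Y` annihilating the rows of `A` give `𝔲(m - 2n)` and `𝔰𝔭(n - m)`. A skew-Hermitian `X`
commuting with the Gram matrix `A A*` always lifts to some `Y` with `X A = A Y`. If `m = 2`, then
`A A* = P + Q j` with `Q` alternating, so every traceless `X` satisfies `X Q = Q X̄` and it suffices
to take one commuting with `P`; this accounts for the extra dimension if `m ≤ 2`. If `n = 1`, the
same argument applies to the `2 × 2` Gram matrix `(Z W)* (Z W)`, since `𝔰𝔭(1) = 𝔰𝔲(2)`.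

Upper bound. Every `X` in the stabilizer commutes with the Gram matrix `P` of the rows of `A` as
complex vectors. If a new row is orthogonal over `ℂ` to all rows of `A` and its squared norm is not
an eigenvalue of `P`, then the stabilizer of the extended matrix is block diagonal, and the new
blocks are determined by the old ones as soon as the part of the new row lying over the old columns
is nonzero. Starting from an explicit `3 × 2` or `3 × 3` matrix with trivial stabilizer, or from the
`1 × 1` identity matrix if `min m (2n) ≤ 2`, rows are added until there are `min m (2n)` rows and
`min m n` columns; the rest of the matrix is filled with zeros.
-/

/-! ### Skew-Hermitian matrices -/

section SkewHermitian

variable {K : Type*} [Ring K] [StarRing K] [Algebra ℝ K] [StarModule ℝ K]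

/-- The real vector space of skew-Hermitian matrices over `K`: this is the Lie algebra `𝔲(k)` for
`K = ℂ` and `𝔰𝔭(k)` for `K = ℍ`. -/
abbrev skewHermitian (ι K : Type*) [Ring K] [StarRing K] [Algebra ℝ K] [StarModule ℝ K] :
    Submodule ℝ (Matrix ι ι K) :=
  skewAdjoint.submodule ℝ (Matrix ι ι K)

theorem mem_skewHermitian {ι : Type*} {X : Matrix ι ι K} :
    X ∈ skewHermitian ι K ↔ Xᴴ = -X :=
  Iff.rfl

theorem star_apply_of_mem_skewHermitian {ι : Type*} {X : Matrix ι ι K}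
    (hX : X ∈ skewHermitian ι K) (i j : ι) : star (X i j) = -X j i :=
  congrFun (congrFun hX j) i

theorem fromBlocks_mem_skewHermitian_iff {ι ι' : Type*} {X₁₁ : Matrix ι ι K} {X₁₂ : Matrix ι ι' K}
    {X₂₁ : Matrix ι' ι K} {X₂₂ : Matrix ι' ι' K} :
    fromBlocks X₁₁ X₁₂ X₂₁ X₂₂ ∈ skewHermitian (ι ⊕ ι') K ↔
      X₁₁ ∈ skewHermitian ι K ∧ X₂₁ᴴ = -X₁₂ ∧ X₁₂ᴴ = -X₂₁ ∧ X₂₂ ∈ skewHermitian ι' K := by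
  rw [mem_skewHermitian, fromBlocks_conjTranspose, fromBlocks_neg, fromBlocks_inj]
  rfl

/-- A skew-Hermitian matrix is determined by its entries above and on the diagonal. -/
def skewHermitianEquiv {ι : Type*} [LinearOrder ι] :
    skewHermitian ι K ≃ₗ[ℝ] ((j : ι) → Set.Iio j → K) × (ι → skewAdjoint.submodule ℝ K) where
  toFun X := (fun j i => X.1 i j, fun i => ⟨X.1 i i, star_apply_of_mem_skewHermitian X.2 i i⟩)
  invFun f := ⟨of fun i j => if h : i < j then f.1 j ⟨i, h⟩ else
      if h : j < i then -star (f.1 i ⟨j, h⟩) else f.2 i, by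
    rw [mem_skewHermitian]
    ext i j
    rcases lt_trichotomy i j with h | rfl | h
    · simp [h, h.not_gt]
    · have hdiag : star (f.2 i : K) = -f.2 i := (f.2 i).2
      simp [hdiag]
    · simp [h, h.not_gt]⟩
  map_add' _ _ := rfl
  map_smul' _ _ := rfl
  left_inv X := by
    ext i j
    rcases lt_trichotomy i j with h | rfl | h
    · simp [h]
    · simp
    · simp [h, h.not_gt, star_apply_of_mem_skewHermitian X.2]
  right_inv f := by
    refine Prod.ext (funext fun j => funext fun i => ?_) (funext fun i => Subtype.ext ?_)
    · simp [i.2.out]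
    · simp

theorem finrank_skewHermitian_fin (k : ℕ) [Module.Finite ℝ K] :
    Module.finrank ℝ (skewHermitian (Fin k) K) =
      k.choose 2 * Module.finrank ℝ K + k * Module.finrank ℝ (skewAdjoint.submodule ℝ K) := by
  have hsum : ∑ j : Fin k, Fintype.card (Set.Iio j) = k.choose 2 := by
    simp [Fin.sum_univ_eq_sum_range (fun i => i), Finset.sum_range_id, Nat.choose_two_right]
  rw [skewHermitianEquiv.finrank_eq, Module.finrank_prod]
  simp only [Module.finrank_pi_fintype, Finset.sum_const, Finset.card_univ, smul_eq_mul,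
    ← Finset.sum_mul, Fintype.card_fin, ← hsum]

end SkewHermitian

instance : StarModule ℝ ℍ[ℝ] := ⟨Quaternion.star_smul⟩

theorem finrank_skewAdjoint_complex : Module.finrank ℝ (skewAdjoint.submodule ℝ ℂ) = 1 := by
  have hker : skewAdjoint.submodule ℝ ℂ = LinearMap.ker Complex.reLm := by
    ext z
    simp [skewAdjoint.submodule, skewAdjoint.mem_iff, Complex.ext_iff, self_eq_neg]
  have hre : Complex.reLm ≠ 0 := fun h => by simpa using LinearMap.congr_fun h 1
  have hfinrank := Module.Dual.finrank_ker_add_one_of_ne_zero hre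
  rw [Complex.finrank_real_complex] at hfinrank
  rw [hker]
  exact Nat.add_right_cancel hfinrank

theorem finrank_skewAdjoint_quaternion : Module.finrank ℝ (skewAdjoint.submodule ℝ ℍ[ℝ]) = 3 := by
  have hker : skewAdjoint.submodule ℝ ℍ[ℝ] = LinearMap.ker (QuaternionAlgebra.reₗ (-1) 0 (-1)) := by
    ext q
    exact Quaternion.star_eq_neg
  have hre : QuaternionAlgebra.reₗ (-1 : ℝ) 0 (-1) ≠ 0 := fun h => by
    simpa using LinearMap.congr_fun h 1
  have hfinrank : Module.finrank ℝ _ + 1 = Module.finrank ℝ ℍ[ℝ] :=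
    Module.Dual.finrank_ker_add_one_of_ne_zero hre
  rw [Quaternion.finrank_eq_four] at hfinrank
  rw [hker]
  exact Nat.add_right_cancel hfinrank

theorem choose_two_mul_two_add_self (k : ℕ) : k.choose 2 * 2 + k = k ^ 2 := by
  rw [Nat.choose_two_right, Nat.div_mul_cancel (Nat.even_mul_pred_self k).two_dvd]
  rcases k with _ | k
  · rfl
  · rw [Nat.add_sub_cancel]
    ring

theorem finrank_skewHermitian_complex (k : ℕ) :
    Module.finrank ℝ (skewHermitian (Fin k) ℂ) = k ^ 2 := by
  rw [finrank_skewHermitian_fin, Complex.finrank_real_complex, finrank_skewAdjoint_complex,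
    mul_one, choose_two_mul_two_add_self]

theorem finrank_skewHermitian_quaternion (k : ℕ) :
    Module.finrank ℝ (skewHermitian (Fin k) ℍ[ℝ]) = k * (2 * k + 1) := by
  rw [finrank_skewHermitian_fin, Quaternion.finrank_eq_four, finrank_skewAdjoint_quaternion]
  linear_combination 2 * choose_two_mul_two_add_self k

/-! ### Annihilators and lifts of skew-Hermitian matrices -/

section Annihilator

variable {ι κ K : Type*} [Fintype ι] [Fintype κ]

theorem exists_mul_eq_zero_and_mul_eq_one [DivisionRing K] (A : Matrix ι κ K) {k : ℕ}
    (hk : k ≤ Fintype.card ι - Fintype.card κ) :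
    ∃ (C : Matrix (Fin k) ι K) (D : Matrix ι (Fin k) K), C * A = 0 ∧ C * D = 1 := by
  classical
  have hker : k ≤ Module.finrank K (LinearMap.ker (toLinearMapRight' A)) := by
    have := LinearMap.finrank_range_add_finrank_ker (toLinearMapRight' A)
    have := (LinearMap.range (toLinearMapRight' A)).finrank_le
    simp only [Module.finrank_fintype_fun_eq_card] at *
    omega
  obtain ⟨f, hf⟩ := exists_linearIndependent_of_le_finrank hker
  let C : Matrix (Fin k) ι K := of fun a => (f a : ι → K)
  have hC : LinearMap.ker (toLinearMapRight' C) = ⊥ :=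
    LinearMap.ker_eq_bot.2 <| vecMul_injective_iff.2 <| hf.map' _ (Submodule.ker_subtype _)
  obtain ⟨g, hg⟩ := LinearMap.exists_leftInverse_of_injective _ hC
  refine ⟨C, LinearMap.toMatrixRight' g, ?_, toLinearMapRight'.injective ?_⟩
  · exact ext_row fun a => (f a).2
  · simp [hg]

variable [DivisionRing K] [StarRing K] [Algebra ℝ K] [StarModule ℝ K]

theorem exists_le_skewHermitian_forall_mul_eq_zero (A : Matrix ι κ K) :
    ∃ U ≤ skewHermitian ι K,
      Module.finrank ℝ U =
        Module.finrank ℝ (skewHermitian (Fin (Fintype.card ι - Fintype.card κ)) K) ∧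
      ∀ X ∈ U, X * A = 0 := by
  obtain ⟨C, D, hCA, hCD⟩ := exists_mul_eq_zero_and_mul_eq_one A le_rfl
  let φ : Matrix _ _ K →ₗ[ℝ] Matrix ι ι K :=
    mulRightLinearMap ι ℝ C ∘ₗ mulLeftLinearMap _ ℝ Cᴴ
  have hφ (Z) : φ Z = Cᴴ * Z * C := rfl
  have hφ_inj : Function.Injective φ := by
    refine Function.LeftInverse.injective (g := fun X => Dᴴ * X * D) fun Z => ?_
    calc Dᴴ * (Cᴴ * Z * C) * D = (C * D)ᴴ * Z * (C * D) := by
          simp only [conjTranspose_mul, Matrix.mul_assoc]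
      _ = Z := by simp [hCD]
  refine ⟨(skewHermitian _ K).map φ, ?_, ?_, ?_⟩
  · rintro _ ⟨Z, hZ, rfl⟩
    rw [mem_skewHermitian, hφ]
    simp [mem_skewHermitian.1 hZ, Matrix.mul_assoc]
  · exact (Submodule.equivMapOfInjective φ hφ_inj _).finrank_eq.symm
  · rintro _ ⟨Z, -, rfl⟩
    rw [hφ, Matrix.mul_assoc, hCA, Matrix.mul_zero]

end Annihilator

section Lift

theorem mul_eq_zero_of_mul_mul_conjTranspose_eq_zero {ι κ K : Type*} [Fintype ι] [Fintype κ]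
    [Ring K] [StarRing K] (hK : ∀ v : κ → K, v ⬝ᵥ star v = 0 → v = 0)
    {A : Matrix ι κ K} {B : Matrix ι ι K}
    (h : B * (A * Aᴴ) = 0) : B * A = 0 := by
  have hgram : (B * A) * (B * A)ᴴ = 0 := by
    rw [conjTranspose_mul, Matrix.mul_assoc, ← Matrix.mul_assoc A, ← Matrix.mul_assoc, h,
      Matrix.zero_mul]
  exact ext_row fun i => hK _ (congrFun (congrFun hgram i) i)

variable {ι κ K : Type*} [Fintype ι] [Fintype κ] [DivisionRing K]

theorem exists_mul_mul_eq_self (M : Matrix ι ι K) : ∃ N, M * N * M = M := by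
  classical
  obtain ⟨h, hh⟩ := (toLinearMapRight' M).rangeRestrict.exists_rightInverse_of_surjective
    (LinearMap.range_rangeRestrict _)
  obtain ⟨g, hg⟩ := h.exists_extend
  refine ⟨LinearMap.toMatrixRight' g, toLinearMapRight'.injective ?_⟩
  refine LinearMap.ext fun v => ?_
  have hgv : g (toLinearMapRight' M v) = h ⟨toLinearMapRight' M v, v, rfl⟩ :=
    LinearMap.congr_fun hg ⟨toLinearMapRight' M v, v, rfl⟩
  have hhv : toLinearMapRight' M (h ⟨toLinearMapRight' M v, v, rfl⟩) = toLinearMapRight' M v :=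
    congrArg Subtype.val (LinearMap.congr_fun hh ⟨toLinearMapRight' M v, v, rfl⟩)
  rw [toLinearMapRight'_mul_apply, toLinearMapRight'_mul_apply, LinearEquiv.symm_apply_apply,
    hgv, hhv]

variable [StarRing K] [Algebra ℝ K] [StarModule ℝ K]

theorem exists_mem_skewHermitian_mul_eq_mul (hK : ∀ v : κ → K, v ⬝ᵥ star v = 0 → v = 0)
    (A : Matrix ι κ K) {X : Matrix ι ι K} (hX : X ∈ skewHermitian ι K)
    (hcomm : Commute X (A * Aᴴ)) : ∃ Y ∈ skewHermitian κ K, X * A = A * Y := by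
  classical
  obtain ⟨N, hN⟩ := exists_mul_mul_eq_self (A * Aᴴ)
  set G := A * Aᴴ with hG
  have hGH : Gᴴ = G := isHermitian_mul_conjTranspose_self A
  obtain ⟨Z, hZ⟩ : ∃ Z : Matrix ι κ K, G * Z = A := by
    refine ⟨N * A, sub_eq_zero.1 ?_⟩
    have h : (G * N - 1) * A = 0 := mul_eq_zero_of_mul_mul_conjTranspose_eq_zero hK <| by
      rw [← hG, sub_mul, hN, one_mul, sub_self]
    rwa [Matrix.sub_mul, Matrix.one_mul, Matrix.mul_assoc] at h
  have hZ' : Zᴴ * G = Aᴴ := by rw [← hZ, conjTranspose_mul, hGH]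
  refine ⟨Zᴴ * (G * X) * Z, ?_, ?_⟩
  · rw [mem_skewHermitian]
    simp only [conjTranspose_mul, conjTranspose_conjTranspose, hGH, mem_skewHermitian.1 hX,
      ← hcomm.eq, Matrix.neg_mul, Matrix.mul_neg, Matrix.mul_assoc]
  · calc X * A = G * X * Z := by rw [← hcomm.eq, Matrix.mul_assoc, hZ]
      _ = A * (Zᴴ * G * X * Z) := by
        rw [hZ', hG]
        simp only [Matrix.mul_assoc]
      _ = A * (Zᴴ * (G * X) * Z) := by simp only [Matrix.mul_assoc]

end Lift

/-! ### Quaternionic matrices as pairs of complex matrices -/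

section Quaternion

/-- The complex number `z` in the decomposition `q = z + w j` of a quaternion. -/
noncomputable def complexPart : ℍ[ℝ] →ₗ[ℝ] ℂ where
  toFun q := ⟨q.re, q.imI⟩
  map_add' _ _ := by apply Complex.ext <;> simp
  map_smul' _ _ := by apply Complex.ext <;> simp

/-- The complex number `w` in the decomposition `q = z + w j` of a quaternion. -/
noncomputable def jPart : ℍ[ℝ] →ₗ[ℝ] ℂ where
  toFun q := ⟨q.imJ, q.imK⟩
  map_add' _ _ := by apply Complex.ext <;> simp
  map_smul' _ _ := by apply Complex.ext <;> simp

theorem complexPart_coeComplex (z : ℂ) : complexPart z = z :=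
  rfl

theorem jPart_coeComplex (z : ℂ) : jPart z = 0 :=
  rfl

theorem complexPart_star (q : ℍ[ℝ]) : complexPart (star q) = star (complexPart q) := by
  apply Complex.ext <;> simp [complexPart]

theorem jPart_star (q : ℍ[ℝ]) : jPart (star q) = -jPart q := by
  apply Complex.ext <;> simp [jPart]

theorem complexPart_mul (p q : ℍ[ℝ]) :
    complexPart (p * q) = complexPart p * complexPart q - jPart p * star (jPart q) := by
  apply Complex.ext <;> simp [complexPart, jPart] <;> ring

theorem jPart_mul (p q : ℍ[ℝ]) :
    jPart (p * q) = complexPart p * jPart q + jPart p * star (complexPart q) := by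
  apply Complex.ext <;> simp [complexPart, jPart] <;> ring

theorem eq_of_complexPart_eq_of_jPart_eq {p q : ℍ[ℝ]} (h : complexPart p = complexPart q)
    (h' : jPart p = jPart q) : p = q :=
  Quaternion.ext _ _ (congrArg Complex.re h) (congrArg Complex.im h) (congrArg Complex.re h')
    (congrArg Complex.im h')

end Quaternion

section ComplexMatrix

variable {ι κ l : Type*}

theorem map_complexPart_conjTranspose (A : Matrix ι κ ℍ[ℝ]) :
    Aᴴ.map complexPart = (A.map complexPart)ᴴ := by
  ext i j
  exact complexPart_star _

theorem map_jPart_conjTranspose (A : Matrix ι κ ℍ[ℝ]) : Aᴴ.map jPart = -(A.map jPart)ᵀ := by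
  ext i j
  exact jPart_star _

theorem map_complexPart_mul [Fintype κ] (A : Matrix ι κ ℍ[ℝ]) (B : Matrix κ l ℍ[ℝ]) :
    (A * B).map complexPart =
      A.map complexPart * B.map complexPart - A.map jPart * (B.map jPart).map star := by
  ext i j
  simp [mul_apply, complexPart_mul]

theorem map_jPart_mul [Fintype κ] (A : Matrix ι κ ℍ[ℝ]) (B : Matrix κ l ℍ[ℝ]) :
    (A * B).map jPart =
      A.map complexPart * B.map jPart + A.map jPart * (B.map complexPart).map star := by
  ext i j
  simp [mul_apply, jPart_mul, Finset.sum_add_distrib]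

theorem map_coeComplex_map_complexPart (X : Matrix ι κ ℂ) :
    (X.map Quaternion.coeComplex).map complexPart = X :=
  rfl

theorem map_coeComplex_map_jPart (X : Matrix ι κ ℂ) :
    (X.map Quaternion.coeComplex).map jPart = 0 :=
  rfl

theorem eq_iff_map_complexPart_eq_and_map_jPart_eq {A B : Matrix ι κ ℍ[ℝ]} :
    A = B ↔ A.map complexPart = B.map complexPart ∧ A.map jPart = B.map jPart := by
  refine ⟨by rintro rfl; simp, fun h => ?_⟩
  ext1 i j
  exact eq_of_complexPart_eq_of_jPart_eq (congrFun (congrFun h.1 i) j) (congrFun (congrFun h.2 i) j)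

theorem commute_map_coeComplex_iff [Fintype ι] {X : Matrix ι ι ℂ} {G : Matrix ι ι ℍ[ℝ]} :
    Commute (X.map Quaternion.coeComplex) G ↔
      Commute X (G.map complexPart) ∧ X * G.map jPart = G.map jPart * X.map star := by
  rw [commute_iff_eq, commute_iff_eq, eq_iff_map_complexPart_eq_and_map_jPart_eq]
  simp only [map_complexPart_mul, map_jPart_mul, map_coeComplex_map_complexPart,
    map_coeComplex_map_jPart, Matrix.zero_mul, Matrix.map_zero _ (star_zero ℂ), Matrix.mul_zero,
    sub_zero, add_zero, zero_add]

/-- Writing `A = Z + W j` with `Z`, `W` complex, this is the complex matrix `(Z W)`: the rows of `A`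
as vectors of the complex left vector space `ℍᵏ = ℂᵏ ⊕ ℂᵏ j`. -/
noncomputable def toComplex (A : Matrix ι κ ℍ[ℝ]) : Matrix ι (κ ⊕ κ) ℂ :=
  fromCols (A.map complexPart) (A.map jPart)

theorem toComplex_injective : Function.Injective (toComplex : Matrix ι κ ℍ[ℝ] → _) := fun _ _ h =>
  eq_iff_map_complexPart_eq_and_map_jPart_eq.2 (fromCols_inj h)

theorem toComplex_map_coeComplex_mul [Fintype ι] (X : Matrix l ι ℂ) (A : Matrix ι κ ℍ[ℝ]) :
    toComplex (X.map Quaternion.coeComplex * A) = X * toComplex A := by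
  rw [toComplex, toComplex, mul_fromCols, map_complexPart_mul, map_jPart_mul,
    map_coeComplex_map_complexPart, map_coeComplex_map_jPart, Matrix.zero_mul, Matrix.zero_mul,
    sub_zero, add_zero]

theorem map_complexPart_mul_conjTranspose [Fintype κ] (A : Matrix ι κ ℍ[ℝ]) (B : Matrix l κ ℍ[ℝ]) :
    (A * Bᴴ).map complexPart = toComplex A * (toComplex B)ᴴ := by
  rw [toComplex, toComplex, conjTranspose_fromCols_eq_fromRows_conjTranspose, fromCols_mul_fromRows,
    map_complexPart_mul, map_complexPart_conjTranspose, map_jPart_conjTranspose, sub_eq_add_neg,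
    ← Matrix.mul_neg]
  congr 2
  ext
  simp

theorem toComplex_mul [Fintype κ] (A : Matrix ι κ ℍ[ℝ]) (Y : Matrix κ l ℍ[ℝ]) :
    toComplex (A * Y) = toComplex A * fromBlocks (Y.map complexPart) (Y.map jPart)
      (-(Y.map jPart).map star) ((Y.map complexPart).map star) := by
  simp [toComplex, fromCols_mul_fromBlocks, map_complexPart_mul, map_jPart_mul, sub_eq_add_neg]

/-- The infinitesimal stabilizer `S(A)` as a real vector space, for `A` with arbitrary finite index
types. The equation `X A = A Y` is encoded as the equality of two linear maps of `(X, Y)`. -/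
noncomputable def stabilizer [Fintype ι] [Fintype κ] (A : Matrix ι κ ℍ[ℝ]) :
    Submodule ℝ (Matrix ι ι ℂ × Matrix κ κ ℍ[ℝ]) :=
  (skewHermitian ι ℂ).prod (skewHermitian κ ℍ[ℝ]) ⊓
    LinearMap.eqLocus
      (mulRightLinearMap ι ℝ A ∘ₗ LinearMap.mapMatrix ofComplex.toLinearMap ∘ₗ LinearMap.fst ℝ _ _)
      (mulLeftLinearMap κ ℝ A ∘ₗ LinearMap.snd ℝ _ _)

variable [Fintype ι] [Fintype κ]

theorem mem_stabilizer {A : Matrix ι κ ℍ[ℝ]} {p : Matrix ι ι ℂ × Matrix κ κ ℍ[ℝ]} :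
    p ∈ stabilizer A ↔ p.1 ∈ skewHermitian ι ℂ ∧ p.2 ∈ skewHermitian κ ℍ[ℝ] ∧
      p.1.map Quaternion.coeComplex * A = A * p.2 :=
  and_assoc

theorem span_stabSet8 {m n : ℕ} (A : Matrix (Fin m) (Fin n) ℍ[ℝ]) :
    Submodule.span ℝ (stabSet8 A) = stabilizer A := by
  have : stabSet8 A = stabilizer A := Set.ext fun _ => mem_stabilizer.symm
  rw [this, Submodule.span_eq]

end ComplexMatrix

/-! ### Lower bound for the dimension of the stabilizer -/

section LowerBound

theorem complex_eq_zero_of_dotProduct_star_self {κ : Type*} [Fintype κ] (v : κ → ℂ)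
    (hv : v ⬝ᵥ star v = 0) : v = 0 := by
  open ComplexOrder in exact dotProduct_self_star_eq_zero.1 hv

theorem quaternion_dotProduct_star_self {κ : Type*} [Fintype κ] (v : κ → ℍ[ℝ]) :
    v ⬝ᵥ star v = algebraMap ℝ ℍ[ℝ] (∑ i, normSq (v i)) := by
  rw [map_sum]
  exact Finset.sum_congr rfl fun i _ => self_mul_star (v i)

theorem quaternion_eq_zero_of_dotProduct_star_self {κ : Type*} [Fintype κ] (v : κ → ℍ[ℝ])
    (hv : v ⬝ᵥ star v = 0) : v = 0 := by
  rw [quaternion_dotProduct_star_self, FaithfulSMul.algebraMap_eq_zero_iff] at hv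
  ext1 i
  exact normSq_eq_zero.1 <|
    (Finset.sum_eq_zero_iff_of_nonneg fun _ _ => normSq_nonneg).1 hv i (Finset.mem_univ i)

theorem map_coeComplex_mem_skewHermitian {ι : Type*} {X : Matrix ι ι ℂ}
    (hX : X ∈ skewHermitian ι ℂ) : X.map Quaternion.coeComplex ∈ skewHermitian ι ℍ[ℝ] := by
  have hstar : Function.Semiconj Quaternion.coeComplex star star := fun z => by
    apply Quaternion.ext <;> simp
  rw [mem_skewHermitian, ← conjTranspose_map _ hstar, mem_skewHermitian.1 hX]
  exact Matrix.map_neg _ (map_neg ofComplex) X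

variable {ι κ : Type*} [Fintype ι]

theorem exists_isHermitian_trace_eq_zero_commute [Nontrivial ι]
    {P : Matrix ι ι ℂ} (hP : P.IsHermitian) :
    ∃ H : Matrix ι ι ℂ, H.IsHermitian ∧ H ≠ 0 ∧ H.trace = 0 ∧ Commute H P := by
  classical
  by_cases hscalar : ∃ c : ℂ, P = c • 1
  · obtain ⟨c, rfl⟩ := hscalar
    obtain ⟨i, j, hij⟩ := exists_pair_ne ι
    refine ⟨single i i 1 - single j j 1, ?_, fun h => ?_, by simp,
      (Commute.one_right _).smul_right c⟩
    · simp [IsHermitian, conjTranspose_single]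
    · simpa [hij.symm] using congrFun (congrFun h i) i
  · have htrace : star P.trace = P.trace := by rw [← trace_conjTranspose, hP.eq]
    refine ⟨(Fintype.card ι : ℂ) • P - P.trace • 1, ?_, fun h => hscalar ?_, ?_, ?_⟩
    · rw [IsHermitian, conjTranspose_sub, conjTranspose_smul, conjTranspose_smul, hP.eq, htrace,
        conjTranspose_one, star_natCast]
    · refine ⟨(Fintype.card ι : ℂ)⁻¹ * P.trace, ?_⟩
      rw [mul_smul, eq_inv_smul_iff₀ (by simp), sub_eq_zero.1 h]
    · simp [trace_sub, mul_comm]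
    · exact ((Commute.refl P).smul_left _).sub_left ((Commute.one_left P).smul_left _)

theorem exists_mem_skewHermitian_trace_eq_zero_commute [Nontrivial ι]
    {P : Matrix ι ι ℂ} (hP : P.IsHermitian) :
    ∃ X ∈ skewHermitian ι ℂ, X ≠ 0 ∧ X.trace = 0 ∧ Commute X P := by
  obtain ⟨H, hH, hH0, htrace, hcomm⟩ := exists_isHermitian_trace_eq_zero_commute hP
  refine ⟨Complex.I • H, ?_, ?_, ?_, hcomm.smul_left _⟩
  · simp [mem_skewHermitian, conjTranspose_smul, hH.eq]
  · simpa using hH0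
  · simp [trace_smul, htrace]

/- The action of `X` on an alternating form; in dimension two these are multiples of the
determinant. -/
theorem mul_add_mul_transpose_eq_trace_smul (X : Matrix (Fin 2) (Fin 2) ℂ)
    {Q : Matrix (Fin 2) (Fin 2) ℂ} (hQ : Qᵀ = -Q) : X * Q + Q * Xᵀ = X.trace • Q := by
  have hQ' (i j) : Q j i = -Q i j := congrFun (congrFun hQ i) j
  ext i j
  fin_cases i <;> fin_cases j <;>
    simp [mul_apply, trace, self_eq_neg.1 (hQ' 0 0), self_eq_neg.1 (hQ' 1 1), hQ' 0 1] <;> ring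

theorem exists_mem_skewHermitian_commute_map_coeComplex {m : ℕ} (hm : 1 ≤ m) (hm' : m ≤ 2)
    {G : Matrix (Fin m) (Fin m) ℍ[ℝ]} (hG : G.IsHermitian) :
    ∃ X ∈ skewHermitian (Fin m) ℂ, X ≠ 0 ∧ Commute (X.map Quaternion.coeComplex) G := by
  have hP : (G.map complexPart).IsHermitian := by
    rw [IsHermitian, ← map_complexPart_conjTranspose, hG.eq]
  have hQ : (G.map jPart)ᵀ = -G.map jPart := by
    rw [eq_neg_iff_add_eq_zero, ← neg_eq_iff_add_eq_zero, ← map_jPart_conjTranspose, hG.eq]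
  simp only [commute_map_coeComplex_iff]
  interval_cases m
  · refine ⟨Complex.I • 1, ?_, ?_, (Commute.one_left _).smul_left _, ?_⟩
    · simp [mem_skewHermitian, conjTranspose_smul]
    · simp
    · have hQ0 : G.map jPart = 0 := by
        ext i j
        rw [Subsingleton.elim i j]
        exact self_eq_neg.1 (congrFun (congrFun hQ j) j)
      rw [hQ0, Matrix.mul_zero, Matrix.zero_mul]
  · obtain ⟨X, hX, hX0, htrace, hcomm⟩ := exists_mem_skewHermitian_trace_eq_zero_commute hP
    refine ⟨X, hX, hX0, hcomm, ?_⟩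
    have hstar : X.map star = -Xᵀ := by
      rw [← transpose_neg, ← mem_skewHermitian.1 hX]
      rfl
    rw [hstar, Matrix.mul_neg, eq_neg_iff_add_eq_zero, mul_add_mul_transpose_eq_trace_smul X hQ,
      htrace, zero_smul]

variable [Fintype κ]

theorem exists_mem_stabilizer_fst_ne_zero {m : ℕ} (hm : 1 ≤ m) (hm' : m ≤ 2)
    (A : Matrix (Fin m) κ ℍ[ℝ]) : ∃ p ∈ stabilizer A, p.1 ≠ 0 := by
  obtain ⟨X, hX, hX0, hcomm⟩ :=
    exists_mem_skewHermitian_commute_map_coeComplex hm hm' (isHermitian_mul_conjTranspose_self A)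
  obtain ⟨Y, hY, hXY⟩ := exists_mem_skewHermitian_mul_eq_mul
    quaternion_eq_zero_of_dotProduct_star_self A (map_coeComplex_mem_skewHermitian hX) hcomm
  exact ⟨(X, Y), mem_stabilizer.2 ⟨hX, hY, hXY⟩, hX0⟩

theorem exists_mem_skewHermitian_quaternion_eq_fromBlocks
    {Z : Matrix (Fin 1 ⊕ Fin 1) (Fin 1 ⊕ Fin 1) ℂ} (hZ : Z ∈ skewHermitian _ ℂ)
    (htrace : Z.trace = 0) :
    ∃ Y ∈ skewHermitian (Fin 1) ℍ[ℝ], Z = fromBlocks (Y.map complexPart) (Y.map jPart)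
      (-(Y.map jPart).map star) ((Y.map complexPart).map star) := by
  set a := Z (.inl 0) (.inl 0)
  set b := Z (.inl 0) (.inr 0)
  have hstar := star_apply_of_mem_skewHermitian hZ
  have htrace' : Z (.inr 0) (.inr 0) = -a := by
    rw [eq_neg_iff_add_eq_zero, add_comm]
    simpa [trace] using htrace
  refine ⟨of fun _ _ => ⟨a.re, a.im, b.re, b.im⟩, ?_, ?_⟩
  · have hre : a.re = 0 := by
      simpa [self_eq_neg] using congrArg Complex.re (hstar (.inl 0) (.inl 0))
    ext1 i j
    exact Quaternion.star_eq_neg.2 hre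
  · ext (i | i) (j | j) <;> rw [Subsingleton.elim i 0, Subsingleton.elim j 0]
    · rfl
    · rfl
    · exact neg_eq_iff_eq_neg.1 (hstar (.inl 0) (.inr 0)).symm
    · exact htrace'.trans (hstar (.inl 0) (.inl 0)).symm

theorem exists_mem_stabilizer_snd_ne_zero (A : Matrix ι (Fin 1) ℍ[ℝ]) :
    ∃ p ∈ stabilizer A, p.2 ≠ 0 := by
  have : Nontrivial (Fin 1 ⊕ Fin 1) := ⟨.inl 0, .inr 0, Sum.inl_ne_inr⟩
  obtain ⟨Z, hZ, hZ0, htrace, hcomm⟩ := exists_mem_skewHermitian_trace_eq_zero_commute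
    (isHermitian_mul_conjTranspose_self (toComplex A)ᴴ)
  obtain ⟨X, hX, hZX⟩ := exists_mem_skewHermitian_mul_eq_mul
    complex_eq_zero_of_dotProduct_star_self (toComplex A)ᴴ hZ hcomm
  obtain ⟨Y, hY, rfl⟩ := exists_mem_skewHermitian_quaternion_eq_fromBlocks hZ htrace
  refine ⟨(X, Y), mem_stabilizer.2 ⟨hX, hY, toComplex_injective ?_⟩, ?_⟩
  · have hXZ := congrArg conjTranspose hZX
    rw [conjTranspose_mul, conjTranspose_mul, mem_skewHermitian.1 hZ, mem_skewHermitian.1 hX,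
      conjTranspose_conjTranspose, Matrix.mul_neg, Matrix.neg_mul, neg_inj] at hXZ
    rw [toComplex_map_coeComplex_mul, toComplex_mul, hXZ]
  · rintro rfl
    exact hZ0 (by simp)

theorem finrank_submodule_prod {F V W : Type*} [DivisionRing F] [AddCommGroup V] [Module F V]
    [Module.Finite F V] [AddCommGroup W] [Module F W] [Module.Finite F W] (p : Submodule F V)
    (q : Submodule F W) :
    Module.finrank F (p.prod q) = Module.finrank F p + Module.finrank F q := by
  have hrange : p.prod q = LinearMap.range (p.subtype.prodMap q.subtype) := by
    rw [LinearMap.range_prodMap, p.range_subtype, q.range_subtype]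
  rw [hrange, LinearMap.finrank_range_of_inj (p.subtype_injective.prodMap q.subtype_injective),
    Module.finrank_prod]

theorem exists_prod_le_stabilizer (A : Matrix ι κ ℍ[ℝ]) :
    ∃ (U : Submodule ℝ (Matrix ι ι ℂ)) (V : Submodule ℝ (Matrix κ κ ℍ[ℝ])),
      U.prod V ≤ stabilizer A ∧
      Module.finrank ℝ U = (Fintype.card ι - 2 * Fintype.card κ) ^ 2 ∧
      Module.finrank ℝ V = (Fintype.card κ - Fintype.card ι) *
        (2 * (Fintype.card κ - Fintype.card ι) + 1) := by
  obtain ⟨U, hU, hUrank, hUA⟩ := exists_le_skewHermitian_forall_mul_eq_zero (toComplex A)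
  obtain ⟨V, hV, hVrank, hVA⟩ := exists_le_skewHermitian_forall_mul_eq_zero Aᴴ
  rw [finrank_skewHermitian_complex, Fintype.card_sum, ← two_mul] at hUrank
  rw [finrank_skewHermitian_quaternion] at hVrank
  refine ⟨U, V, ?_, hUrank, hVrank⟩
  rintro ⟨X, Y⟩ ⟨hX, hY⟩
  refine mem_stabilizer.2 ⟨hU hX, hV hY, toComplex_injective ?_⟩
  have hAY : A * Y = 0 := by
    simpa [mem_skewHermitian.1 (hV hY)] using congrArg conjTranspose (hVA Y hY)
  rw [toComplex_map_coeComplex_mul, hUA X hX, hAY]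
  exact fromCols_zero.symm

theorem le_finrank_stabilizer {m n : ℕ} (hm : 1 ≤ m) (hn : 1 ≤ n)
    (A : Matrix (Fin m) (Fin n) ℍ[ℝ]) :
    (if m ≤ 2 ∨ n = 1 then 1 else 0) + (m - 2 * n) ^ 2 + (n - m) * (2 * (n - m) + 1) ≤
      Module.finrank ℝ (stabilizer A) := by
  obtain ⟨U, V, hle, hU, hV⟩ := exists_prod_le_stabilizer A
  rw [Fintype.card_fin, Fintype.card_fin] at hU hV
  have hUV := finrank_submodule_prod U V
  split_ifs with h
  · have hlt : U.prod V < stabilizer A := by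
      refine lt_of_le_of_ne hle fun heq => ?_
      rcases h with hm2 | rfl
      · obtain ⟨p, hp, hp0⟩ := exists_mem_stabilizer_fst_ne_zero hm hm2 A
        have hUbot : U = ⊥ := by
          rw [← Submodule.finrank_eq_zero, hU, Nat.sub_eq_zero_of_le (by omega), sq, zero_mul]
        rw [← heq, hUbot] at hp
        exact hp0 hp.1
      · obtain ⟨p, hp, hp0⟩ := exists_mem_stabilizer_snd_ne_zero A
        have hVbot : V = ⊥ := by
          rw [← Submodule.finrank_eq_zero, hV, Nat.sub_eq_zero_of_le hm, zero_mul]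
        rw [← heq, hVbot] at hp
        exact hp0 hp.2
    have := Submodule.finrank_lt_finrank_of_lt hlt
    omega
  · have := Submodule.finrank_mono hle
    omega

end LowerBound

/-! ### Stabilizers of block triangular matrices -/

section UpperBound

variable {ι κ ι' κ' : Type*} [Fintype κ] [Fintype κ']

/-- The Gram matrix of the rows of `A` for the standard complex Hermitian form on `ℍᵏ = ℂ²ᵏ`, that
is, the complex part of the quaternionic Gram matrix `A * Aᴴ`. -/
noncomputable def complexGram (A : Matrix ι κ ℍ[ℝ]) : Matrix ι ι ℂ :=
  (A * Aᴴ).map complexPart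

theorem commute_complexGram_of_mem_stabilizer [Fintype ι] {A : Matrix ι κ ℍ[ℝ]}
    {p : Matrix ι ι ℂ × Matrix κ κ ℍ[ℝ]} (hp : p ∈ stabilizer A) :
    Commute p.1 (complexGram A) := by
  obtain ⟨hX, hY, hXY⟩ := mem_stabilizer.1 hp
  have hXYH := congrArg conjTranspose hXY
  rw [conjTranspose_mul, conjTranspose_mul,
    mem_skewHermitian.1 (map_coeComplex_mem_skewHermitian hX), mem_skewHermitian.1 hY,
    Matrix.mul_neg, Matrix.neg_mul, neg_inj] at hXYH
  have hcomm : Commute (p.1.map Quaternion.coeComplex) (A * Aᴴ) := by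
    rw [commute_iff_eq, ← Matrix.mul_assoc, hXY, Matrix.mul_assoc, Matrix.mul_assoc, hXYH]
  exact (commute_map_coeComplex_iff.1 hcomm).1

theorem complexGram_fromBlocks [DecidableEq ι'] {A : Matrix ι κ ℍ[ℝ]} {U : Matrix ι' κ ℍ[ℝ]}
    {T : Matrix ι' κ' ℍ[ℝ]} {c : ℂ} (hAU : (A * Uᴴ).map complexPart = 0)
    (hUT : (U * Uᴴ + T * Tᴴ).map complexPart = c • 1) :
    complexGram (fromBlocks A 0 U T) = fromBlocks (complexGram A) 0 0 (c • 1) := by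
  have hUA : (U * Aᴴ).map complexPart = 0 := by
    rw [← conjTranspose_conjTranspose U, ← conjTranspose_mul, map_complexPart_conjTranspose, hAU,
      conjTranspose_zero]
  rw [complexGram, fromBlocks_conjTranspose, fromBlocks_multiply, fromBlocks_map, hUT]
  simp [hAU, hUA, complexGram]

theorem eq_zero_of_mul_eq_smul_of_notMem_spectrum [Fintype ι] [DecidableEq ι]
    {P : Matrix ι ι ℂ} {Z : Matrix ι' ι ℂ} {c : ℂ}
    (hc : c ∉ spectrum ℂ P) (hZ : Z * P = c • Z) : Z = 0 := by
  obtain ⟨Q, hQ⟩ := (spectrum.notMem_iff.1 hc).exists_right_inv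
  have hker : Z * (algebraMap ℂ _ c - P) = 0 := by
    rw [Matrix.mul_sub, hZ, Algebra.algebraMap_eq_smul_one, Matrix.mul_smul, Matrix.mul_one,
      sub_self]
  rw [← Matrix.mul_one Z, ← hQ, ← Matrix.mul_assoc, hker, Matrix.zero_mul]

theorem finrank_stabilizer_reindex_le [Fintype ι] [Fintype ι'] (e : ι ≃ ι') (f : κ ≃ κ')
    (A : Matrix ι κ ℍ[ℝ]) :
    Module.finrank ℝ (stabilizer (reindex e f A)) ≤ Module.finrank ℝ (stabilizer A) := by
  have hle : stabilizer (reindex e f A) ≤ (stabilizer A).map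
      ((reindexLinearEquiv ℝ ℂ e e).prodCongr (reindexLinearEquiv ℝ ℍ[ℝ] f f)).toLinearMap := by
    intro p hp
    obtain ⟨hX, hY, hXY⟩ := mem_stabilizer.1 hp
    refine ⟨(p.1.submatrix e e, p.2.submatrix f f), mem_stabilizer.2 ⟨?_, ?_, ?_⟩, ?_⟩
    · rw [mem_skewHermitian, conjTranspose_submatrix, mem_skewHermitian.1 hX, submatrix_neg]
      rfl
    · rw [mem_skewHermitian, conjTranspose_submatrix, mem_skewHermitian.1 hY, submatrix_neg]
      rfl
    · have h := congrArg (fun M => M.submatrix e f) hXY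
      simpa [← submatrix_mul_equiv _ _ _ e, ← submatrix_mul_equiv _ _ _ f, submatrix_map] using h
    · simp
  exact (Submodule.finrank_mono hle).trans (Submodule.finrank_map_le _ _)

variable [Fintype ι] [Fintype ι'] [DecidableEq ι] [DecidableEq κ]

theorem exists_eq_fromBlocks_of_mem_stabilizer [DecidableEq ι'] {A : Matrix ι κ ℍ[ℝ]}
    {U : Matrix ι' κ ℍ[ℝ]} {T : Matrix ι' κ' ℍ[ℝ]} {L : Matrix κ ι ℍ[ℝ]} {c : ℂ} (hL : L * A = 1)
    (hAU : (A * Uᴴ).map complexPart = 0) (hUT : (U * Uᴴ + T * Tᴴ).map complexPart = c • 1)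
    (hc : c ∉ spectrum ℂ (complexGram A))
    {p : Matrix (ι ⊕ ι') (ι ⊕ ι') ℂ × Matrix (κ ⊕ κ') (κ ⊕ κ') ℍ[ℝ]}
    (hp : p ∈ stabilizer (fromBlocks A 0 U T)) :
    ∃ X₁ X₂ Y₁ Y₂, p = (fromBlocks X₁ 0 0 X₂, fromBlocks Y₁ 0 0 Y₂) ∧ (X₁, Y₁) ∈ stabilizer A ∧
      (X₂, Y₂) ∈ stabilizer T ∧ X₂.map Quaternion.coeComplex * U = U * Y₁ := by
  have hcomm := commute_complexGram_of_mem_stabilizer hp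
  obtain ⟨hX, hY, hXY⟩ := mem_stabilizer.1 hp
  obtain ⟨X, Y⟩ := p
  obtain ⟨X₁₁, X₁₂, X₂₁, X₂₂, rfl⟩ : ∃ X₁₁ X₁₂ X₂₁ X₂₂, X = fromBlocks X₁₁ X₁₂ X₂₁ X₂₂ :=
    ⟨_, _, _, _, (fromBlocks_toBlocks X).symm⟩
  obtain ⟨Y₁₁, Y₁₂, Y₂₁, Y₂₂, rfl⟩ : ∃ Y₁₁ Y₁₂ Y₂₁ Y₂₂, Y = fromBlocks Y₁₁ Y₁₂ Y₂₁ Y₂₂ :=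
    ⟨_, _, _, _, (fromBlocks_toBlocks Y).symm⟩
  obtain ⟨hX₁₁, hX₂₁, -, hX₂₂⟩ := fromBlocks_mem_skewHermitian_iff.1 hX
  obtain ⟨hY₁₁, -, hY₁₂, hY₂₂⟩ := fromBlocks_mem_skewHermitian_iff.1 hY
  have hX₂₁_zero : X₂₁ = 0 := by
    rw [complexGram_fromBlocks hAU hUT, commute_iff_eq, fromBlocks_multiply, fromBlocks_multiply,
      fromBlocks_inj] at hcomm
    exact eq_zero_of_mul_eq_smul_of_notMem_spectrum hc (by simpa using hcomm.2.2.1)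
  have hX₁₂_zero : X₁₂ = 0 := by simpa [hX₂₁_zero] using hX₂₁
  subst hX₂₁_zero hX₁₂_zero
  simp only [fromBlocks_map, fromBlocks_multiply, fromBlocks_inj, Matrix.map_zero _ coeComplex_zero,
    Matrix.zero_mul, Matrix.mul_zero, add_zero, zero_add] at hXY
  obtain ⟨hAY₁₁, hAY₁₂, hUY₁₁, hTY₂₂⟩ := hXY
  have hY₁₂_zero : Y₁₂ = 0 := by
    rw [← Matrix.one_mul Y₁₂, ← hL, Matrix.mul_assoc, ← hAY₁₂, Matrix.mul_zero]
  have hY₂₁_zero : Y₂₁ = 0 := by simpa [hY₁₂_zero] using hY₁₂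
  subst hY₁₂_zero hY₂₁_zero
  rw [Matrix.mul_zero, add_zero] at hUY₁₁
  rw [Matrix.mul_zero, zero_add] at hTY₂₂
  exact ⟨X₁₁, X₂₂, Y₁₁, Y₂₂, rfl, mem_stabilizer.2 ⟨hX₁₁, hY₁₁, hAY₁₁⟩,
    mem_stabilizer.2 ⟨hX₂₂, hY₂₂, hTY₂₂⟩, hUY₁₁⟩

/-- The block diagonal pairs of matrices, as a linear image of the pairs of their blocks. -/
noncomputable def blockDiagonalPair :
    (Matrix ι ι ℂ × Matrix κ κ ℍ[ℝ]) × (Matrix ι' ι' ℂ × Matrix κ' κ' ℍ[ℝ]) →ₗ[ℝ]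
      Matrix (ι ⊕ ι') (ι ⊕ ι') ℂ × Matrix (κ ⊕ κ') (κ ⊕ κ') ℍ[ℝ] where
  toFun p := (fromBlocks p.1.1 0 0 p.2.1, fromBlocks p.1.2 0 0 p.2.2)
  map_add' p q := by simp [fromBlocks_add]
  map_smul' r p := by simp [fromBlocks_smul]

/-- The pair of upper left blocks of a pair of block matrices. -/
def upperLeftPair :
    Matrix (ι ⊕ ι') (ι ⊕ ι') ℂ × Matrix (κ ⊕ κ') (κ ⊕ κ') ℍ[ℝ] →ₗ[ℝ]
      Matrix ι ι ℂ × Matrix κ κ ℍ[ℝ] where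
  toFun p := (p.1.toBlocks₁₁, p.2.toBlocks₁₁)
  map_add' _ _ := rfl
  map_smul' _ _ := rfl

theorem finrank_stabilizer_fromBlocks_zero_le {A : Matrix ι κ ℍ[ℝ]} {L : Matrix κ ι ℍ[ℝ]}
    (hL : L * A = 1) (hA : IsUnit (complexGram A)) :
    Module.finrank ℝ (stabilizer (fromBlocks A 0 0 (0 : Matrix ι' κ' ℍ[ℝ]))) ≤
      Module.finrank ℝ (stabilizer A) + (Module.finrank ℝ (skewHermitian ι' ℂ) +
        Module.finrank ℝ (skewHermitian κ' ℍ[ℝ])) := by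
  classical
  have hle : stabilizer (fromBlocks A 0 0 (0 : Matrix ι' κ' ℍ[ℝ])) ≤
      ((stabilizer A).prod ((skewHermitian ι' ℂ).prod (skewHermitian κ' ℍ[ℝ]))).map
        blockDiagonalPair := by
    intro p hp
    obtain ⟨X₁, X₂, Y₁, Y₂, rfl, h₁, h₂, -⟩ := exists_eq_fromBlocks_of_mem_stabilizer hL (c := 0)
      (by simp) (by simp) (spectrum.zero_notMem ℂ hA) hp
    obtain ⟨hX₂, hY₂, -⟩ := mem_stabilizer.1 h₂
    exact ⟨((X₁, Y₁), (X₂, Y₂)), ⟨h₁, hX₂, hY₂⟩, rfl⟩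
  have := Module.Finite.prod (R := ℝ) (M := Matrix ι ι ℂ × Matrix κ κ ℍ[ℝ])
    (N := Matrix ι' ι' ℂ × Matrix κ' κ' ℍ[ℝ])
  refine (Submodule.finrank_mono hle).trans ((Submodule.finrank_map_le _ _).trans_eq ?_)
  rw [finrank_submodule_prod, finrank_submodule_prod]

variable [DecidableEq ι'] [DecidableEq κ']

theorem finrank_stabilizer_fromBlocks_le {A : Matrix ι κ ℍ[ℝ]} {U : Matrix ι' κ ℍ[ℝ]}
    {T : Matrix ι' κ' ℍ[ℝ]} {L : Matrix κ ι ℍ[ℝ]} {V : Matrix κ ι' ℍ[ℝ]} {R : Matrix κ' ι' ℍ[ℝ]}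
    {c : ℂ} (hL : L * A = 1) (hAU : (A * Uᴴ).map complexPart = 0)
    (hUT : (U * Uᴴ + T * Tᴴ).map complexPart = c • 1) (hc : c ∉ spectrum ℂ (complexGram A))
    (hV : U * V = 1) (hR : R * T = 1) :
    Module.finrank ℝ (stabilizer (fromBlocks A 0 U T)) ≤ Module.finrank ℝ (stabilizer A) := by
  have hmaps : ∀ p ∈ stabilizer (fromBlocks A 0 U T), upperLeftPair p ∈ stabilizer A := by
    intro p hp
    obtain ⟨X₁, X₂, Y₁, Y₂, rfl, h₁, -⟩ := exists_eq_fromBlocks_of_mem_stabilizer hL hAU hUT hc hp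
    exact h₁
  refine LinearMap.finrank_le_finrank_of_injective (f := upperLeftPair.restrict hmaps) <|
    LinearMap.ker_eq_bot.1 <| (LinearMap.ker_eq_bot').2 ?_
  rintro ⟨p, hp⟩ hp₀
  obtain ⟨X₁, X₂, Y₁, Y₂, rfl, -, h₂, hUY₁⟩ :=
    exists_eq_fromBlocks_of_mem_stabilizer hL hAU hUT hc hp
  obtain ⟨hX₁ : X₁ = 0, hY₁ : Y₁ = 0⟩ := Prod.mk.inj (congrArg Subtype.val hp₀)
  have hX₂ : X₂.map Quaternion.coeComplex = 0 := by
    rw [← Matrix.mul_one (X₂.map _), ← hV, ← Matrix.mul_assoc, hUY₁, hY₁, Matrix.mul_zero,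
      Matrix.zero_mul]
  have hY₂ : Y₂ = 0 := by
    rw [← Matrix.one_mul Y₂, ← hR, Matrix.mul_assoc, ← (mem_stabilizer.1 h₂).2.2, hX₂,
      Matrix.zero_mul, Matrix.mul_zero]
  have hX₂' : X₂ = 0 := congrArg (fun X => X.map complexPart) hX₂
  simp [hX₁, hX₂', hY₁, hY₂]

/-- The nondegeneracy that makes the row-by-row construction of a matrix with small stabilizer
work: the columns of `A` are independent over `ℍ` and its rows are independent over `ℂ`. -/
structure IsNondegenerate (A : Matrix ι κ ℍ[ℝ]) : Prop where
  exists_mul_eq_one : ∃ L : Matrix κ ι ℍ[ℝ], L * A = 1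
  isUnit_complexGram : IsUnit (complexGram A)

theorem IsNondegenerate.fromBlocks {A : Matrix ι κ ℍ[ℝ]} {U : Matrix ι' κ ℍ[ℝ]}
    {T : Matrix ι' κ' ℍ[ℝ]} {R : Matrix κ' ι' ℍ[ℝ]} {c : ℂ} (hA : IsNondegenerate A)
    (hAU : (A * Uᴴ).map complexPart = 0) (hUT : (U * Uᴴ + T * Tᴴ).map complexPart = c • 1)
    (hc : c ≠ 0) (hR : R * T = 1) : IsNondegenerate (Matrix.fromBlocks A 0 U T) := by
  obtain ⟨L, hL⟩ := hA.exists_mul_eq_one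
  refine ⟨⟨Matrix.fromBlocks L 0 (-(R * U * L)) R, ?_⟩, ?_⟩
  · simp [fromBlocks_multiply, hL, hR, Matrix.mul_assoc]
  · rw [complexGram_fromBlocks hAU hUT, isUnit_fromBlocks_zero₁₂]
    exact ⟨hA.isUnit_complexGram, isUnit_one.smul (Units.mk0 c hc)⟩

theorem IsNondegenerate.reindex {A : Matrix ι κ ℍ[ℝ]} (hA : IsNondegenerate A) (e : ι ≃ ι')
    (f : κ ≃ κ') : IsNondegenerate (Matrix.reindex e f A) := by
  obtain ⟨L, hL⟩ := hA.exists_mul_eq_one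
  refine ⟨⟨Matrix.reindex f e L, ?_⟩, ?_⟩
  · simp [submatrix_mul_equiv, hL]
  · have hgram : complexGram (Matrix.reindex e f A) = (complexGram A).submatrix e.symm e.symm := by
      simp [complexGram, conjTranspose_submatrix, submatrix_mul_equiv, submatrix_map]
    rw [hgram, isUnit_submatrix_equiv]
    exact hA.isUnit_complexGram

end UpperBound

/-! ### Matrices with small stabilizers -/

section Extension

variable {ι κ : Type*}

theorem toComplex_surjective : Function.Surjective (toComplex : Matrix ι κ ℍ[ℝ] → _) := fun C =>
  ⟨of fun i j => ⟨(C i (.inl j)).re, (C i (.inl j)).im, (C i (.inr j)).re, (C i (.inr j)).im⟩, by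
    ext i (j | j) <;> rfl⟩

theorem map_complexPart_smul_one [DecidableEq ι] (ρ : ℝ) :
    (ρ • (1 : Matrix ι ι ℍ[ℝ])).map complexPart = (ρ : ℂ) • 1 := by
  ext i j
  by_cases h : i = j <;> simp [h, complexPart, Complex.ext_iff]

variable [Fintype κ]

theorem mul_conjTranspose_eq_smul_one (U : Matrix (Fin 1) κ ℍ[ℝ]) :
    U * Uᴴ = (∑ j, normSq (U 0 j)) • (1 : Matrix (Fin 1) (Fin 1) ℍ[ℝ]) := by
  ext1 i j
  rw [Subsingleton.elim i 0, Subsingleton.elim j 0, Matrix.smul_apply, one_apply_eq,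
    ← Algebra.algebraMap_eq_smul_one, ← quaternion_dotProduct_star_self]
  rfl

theorem exists_pos_mul_conjTranspose_eq_smul_one {U : Matrix (Fin 1) κ ℍ[ℝ]} (hU : U ≠ 0) :
    ∃ ν : ℝ, 0 < ν ∧ U * Uᴴ = ν • 1 := by
  refine ⟨_, (Finset.sum_nonneg fun j _ => normSq_nonneg).lt_of_ne' fun hν => hU ?_,
    mul_conjTranspose_eq_smul_one U⟩
  refine ext_row fun i => quaternion_eq_zero_of_dotProduct_star_self (U i) ?_
  have hUU : U * Uᴴ = 0 := by rw [mul_conjTranspose_eq_smul_one, hν, zero_smul]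
  exact congrFun (congrFun hUU i) i

variable [Fintype ι]

theorem exists_row_mul_conjTranspose_eq (A : Matrix ι κ ℍ[ℝ])
    (h : Fintype.card ι < 2 * Fintype.card κ) {ρ : ℝ} (hρ : 0 < ρ) :
    ∃ U : Matrix (Fin 1) κ ℍ[ℝ], (A * Uᴴ).map complexPart = 0 ∧ U * Uᴴ = ρ • 1 := by
  classical
  obtain ⟨C, D, hC, hCD⟩ := exists_mul_eq_zero_and_mul_eq_one (k := 1) (toComplex A)ᴴ <| by
    rw [Fintype.card_sum]
    omega
  obtain ⟨U, rfl⟩ := toComplex_surjective C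
  have hU : U ≠ 0 := by
    rintro rfl
    have : toComplex (0 : Matrix (Fin 1) κ ℍ[ℝ]) = 0 := by ext i (j | j) <;> rfl
    simp [this] at hCD
  obtain ⟨ν, hν, hUU⟩ := exists_pos_mul_conjTranspose_eq_smul_one hU
  have hAU : (A * Uᴴ).map complexPart = 0 := by
    rw [map_complexPart_mul_conjTranspose, ← conjTranspose_conjTranspose (toComplex A),
      ← conjTranspose_mul, hC, conjTranspose_zero]
  refine ⟨√(ρ / ν) • U, ?_, ?_⟩
  · rw [conjTranspose_smul, Matrix.mul_smul, Matrix.map_smul _ _ (map_smul complexPart _), hAU,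
      smul_zero]
  · rw [conjTranspose_smul, Matrix.smul_mul, Matrix.mul_smul, hUU, smul_smul, smul_smul,
      star_trivial, Real.mul_self_sqrt (by positivity), div_mul_cancel₀ _ hν.ne']

theorem exists_gt_ofReal_notMem_spectrum [DecidableEq ι] (P : Matrix ι ι ℂ) (a : ℝ) :
    ∃ x > a, (x : ℂ) ∉ spectrum ℂ P := by
  have hinf : (Complex.ofReal '' Set.Ioi a).Infinite :=
    (Set.Ioi_infinite a).image Complex.ofReal_injective.injOn
  obtain ⟨_, ⟨x, hx, rfl⟩, hxP⟩ := hinf.exists_notMem_finite P.finite_spectrum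
  exact ⟨x, hx, hxP⟩

theorem exists_mul_conjTranspose_eq_natCast_smul_one {c : ℕ} (hc : c ≤ 1) :
    ∃ T : Matrix (Fin 1) (Fin c) ℍ[ℝ], T * Tᴴ = (c : ℝ) • 1 ∧ Tᴴ * T = 1 := by
  refine ⟨of fun _ _ => 1, ?_, ?_⟩
  · rw [mul_conjTranspose_eq_smul_one]
    simp
  · interval_cases c
    · exact Subsingleton.elim _ _
    · ext1 i j
      rw [Subsingleton.elim i j]
      simp [mul_apply]

theorem exists_isNondegenerate_extension {r s c : ℕ} {A : Matrix (Fin r) (Fin s) ℍ[ℝ]}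
    (hA : IsNondegenerate A) (hrs : r < 2 * s) (hc : c ≤ 1) :
    ∃ B : Matrix (Fin (r + 1)) (Fin (s + c)) ℍ[ℝ], IsNondegenerate B ∧
      Module.finrank ℝ (stabilizer B) ≤ Module.finrank ℝ (stabilizer A) := by
  obtain ⟨L, hL⟩ := hA.exists_mul_eq_one
  obtain ⟨T, hT, hTT⟩ := exists_mul_conjTranspose_eq_natCast_smul_one hc
  obtain ⟨x, hx, hxA⟩ := exists_gt_ofReal_notMem_spectrum (complexGram A) c
  have hρ : 0 < x - c := sub_pos.2 hx
  obtain ⟨U, hAU, hU⟩ := exists_row_mul_conjTranspose_eq A (by simpa using hrs) hρ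
  have hUT : (U * Uᴴ + T * Tᴴ).map complexPart = (x : ℂ) • 1 := by
    rw [hU, hT, ← add_smul, sub_add_cancel, map_complexPart_smul_one]
  have hV : U * ((x - c)⁻¹ • Uᴴ) = 1 := by
    rw [Matrix.mul_smul, hU, inv_smul_smul₀ hρ.ne']
  have hx0 : (x : ℂ) ≠ 0 := Complex.ofReal_ne_zero.2 (c.cast_nonneg.trans_lt hx).ne'
  refine ⟨reindex finSumFinEquiv finSumFinEquiv (fromBlocks A 0 U T),
    (hA.fromBlocks hAU hUT hx0 hTT).reindex _ _, ?_⟩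
  exact (finrank_stabilizer_reindex_le _ _ _).trans
    (finrank_stabilizer_fromBlocks_le hL hAU hUT hxA hV hTT)

theorem complexGram_one [DecidableEq ι] : complexGram (1 : Matrix ι ι ℍ[ℝ]) = 1 := by
  simpa [complexGram] using map_complexPart_smul_one (ι := ι) 1

theorem isNondegenerate_one [DecidableEq ι] : IsNondegenerate (1 : Matrix ι ι ℍ[ℝ]) := by
  refine ⟨⟨1, Matrix.one_mul 1⟩, ?_⟩
  rw [complexGram_one]
  exact isUnit_one

theorem finrank_stabilizer_le_of_mul_eq_one [DecidableEq κ] {A : Matrix ι κ ℍ[ℝ]}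
    {L : Matrix κ ι ℍ[ℝ]} (hL : L * A = 1) :
    Module.finrank ℝ (stabilizer A) ≤ Module.finrank ℝ (skewHermitian ι ℂ) := by
  have hmaps : ∀ p ∈ stabilizer A, LinearMap.fst ℝ _ (Matrix κ κ ℍ[ℝ]) p ∈ skewHermitian ι ℂ :=
    fun p hp => (mem_stabilizer.1 hp).1
  refine LinearMap.finrank_le_finrank_of_injective (f := (LinearMap.fst ℝ _ _).restrict hmaps) <|
    LinearMap.ker_eq_bot.1 <| (LinearMap.ker_eq_bot').2 ?_
  rintro ⟨⟨X, Y⟩, hp⟩ hX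
  obtain rfl : X = 0 := congrArg Subtype.val hX
  have hY : Y = 0 := by
    rw [← Matrix.one_mul Y, ← hL, Matrix.mul_assoc, ← (mem_stabilizer.1 hp).2.2,
      Matrix.map_zero _ coeComplex_zero, Matrix.zero_mul, Matrix.mul_zero]
  simp [hY]

end Extension

theorem notMem_spectrum_fromBlocks_smul_one {ι ι' : Type*} [Fintype ι] [DecidableEq ι]
    [Fintype ι'] [DecidableEq ι'] {P : Matrix ι ι ℂ} {a b : ℂ}
    (hP : a ∉ spectrum ℂ P) (hab : a ≠ b) :
    a ∉ spectrum ℂ (fromBlocks P 0 0 (b • (1 : Matrix ι' ι' ℂ))) := by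
  rw [spectrum.notMem_iff, Algebra.algebraMap_eq_smul_one] at hP ⊢
  have hsub : a • 1 - fromBlocks P 0 0 (b • (1 : Matrix ι' ι' ℂ)) =
      fromBlocks (a • 1 - P) 0 0 ((a - b) • 1) := by
    rw [← fromBlocks_one, fromBlocks_smul, sub_eq_add_neg, fromBlocks_neg, fromBlocks_add]
    simp [← sub_eq_add_neg, ← sub_smul]
  rw [hsub, isUnit_fromBlocks_zero₁₂]
  exact ⟨hP, isUnit_one.smul (Units.mk0 _ (sub_ne_zero.2 hab))⟩

/-- The quaternion unit `j`. -/
@[simps]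
noncomputable def quaternionJ : ℍ[ℝ] := ⟨0, 0, 1, 0⟩

/-- The `2 × 2` matrix with rows `(1, 0)` and `(j, 1)`, the upper left part of the matrices with
three rows and trivial stabilizer from which the construction starts. -/
noncomputable def twoRows : Matrix (Fin 1 ⊕ Fin 1) (Fin 1 ⊕ Fin 1) ℍ[ℝ] :=
  fromBlocks 1 0 !![quaternionJ] 1

/-- The row `(j, j - 1)`, which is orthogonal over `ℂ` to the rows of `twoRows`. -/
noncomputable def thirdRow : Matrix (Fin 1) (Fin 1 ⊕ Fin 1) ℍ[ℝ] :=
  fromCols !![quaternionJ] !![quaternionJ - 1]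

theorem map_complexPart_one_mul_conjTranspose_quaternionJ :
    ((1 : Matrix (Fin 1) (Fin 1) ℍ[ℝ]) * !![quaternionJ]ᴴ).map complexPart = 0 := by
  ext1 i j
  rw [Subsingleton.elim i 0, Subsingleton.elim j 0]
  simp [complexPart, Complex.ext_iff]

theorem map_complexPart_quaternionJ_mul_conjTranspose_add :
    (!![quaternionJ] * !![quaternionJ]ᴴ + 1 * (1 : Matrix (Fin 1) (Fin 1) ℍ[ℝ])ᴴ).map complexPart =
      (2 : ℂ) • 1 := by
  rw [mul_conjTranspose_eq_smul_one, mul_conjTranspose_eq_smul_one, ← add_smul,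
    map_complexPart_smul_one]
  norm_num [normSq_def']

theorem isNondegenerate_twoRows : IsNondegenerate twoRows :=
  isNondegenerate_one.fromBlocks map_complexPart_one_mul_conjTranspose_quaternionJ
    map_complexPart_quaternionJ_mul_conjTranspose_add two_ne_zero (Matrix.one_mul 1)

theorem complexGram_twoRows : complexGram twoRows = fromBlocks 1 0 0 ((2 : ℂ) • 1) := by
  rw [twoRows, complexGram_fromBlocks map_complexPart_one_mul_conjTranspose_quaternionJ
    map_complexPart_quaternionJ_mul_conjTranspose_add, complexGram_one]

theorem map_complexPart_twoRows_mul_conjTranspose_thirdRow :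
    (twoRows * thirdRowᴴ).map complexPart = 0 := by
  rw [twoRows, thirdRow, conjTranspose_fromCols_eq_fromRows_conjTranspose, fromBlocks_mul_fromRows]
  ext1 i j
  rw [Subsingleton.elim j 0]
  rcases i with i | i <;> rw [Subsingleton.elim i 0] <;> simp [complexPart, Complex.ext_iff, vecMul]

theorem map_complexPart_thirdRow_mul_conjTranspose_add {c : ℕ} {T : Matrix (Fin 1) (Fin c) ℍ[ℝ]}
    (hT : T * Tᴴ = (c : ℝ) • 1) :
    (thirdRow * thirdRowᴴ + T * Tᴴ).map complexPart = ((3 + c : ℝ) : ℂ) • 1 := by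
  rw [mul_conjTranspose_eq_smul_one, hT, ← add_smul, map_complexPart_smul_one]
  norm_num [thirdRow, normSq_def']

theorem eq_zero_of_mul_quaternionJ_eq {x₁ x₂ x₃ : ℂ} (hx₁ : star x₁ = -x₁)
    (h₁₂ : x₂ * quaternionJ = quaternionJ * x₁)
    (h₂₃ : x₃ * (quaternionJ - 1) = (quaternionJ - 1) * x₂) : x₁ = 0 ∧ x₂ = 0 ∧ x₃ = 0 := by
  have hcomplex : complexPart quaternionJ = 0 := rfl
  have hj : jPart quaternionJ = 1 := rfl
  have hone : complexPart 1 = 1 := rfl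
  have hone' : jPart 1 = 0 := rfl
  have h₂ := congrArg jPart h₁₂
  have h₃ := congrArg complexPart h₂₃
  have h₃' := congrArg jPart h₂₃
  simp only [complexPart_mul, jPart_mul, map_sub, complexPart_coeComplex, jPart_coeComplex,
    hcomplex, hj, hone, hone', star_zero, mul_one, mul_zero, zero_mul, one_mul, sub_zero, zero_sub,
    add_zero, zero_add, mul_neg, neg_mul, neg_inj] at h₂ h₃ h₃'
  subst h₂ h₃
  rw [hx₁, star_neg, hx₁, neg_neg, neg_eq_self] at h₃'
  simp [h₃']

theorem notMem_spectrum_one {ι : Type*} [Fintype ι] [DecidableEq ι] [Nonempty ι] {a : ℂ}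
    (ha : a ≠ 1) : a ∉ spectrum ℂ (1 : Matrix ι ι ℂ) := by
  rwa [spectrum.one_eq, Set.mem_singleton_iff]

theorem eq_zero_of_apply_zero_zero {K : Type*} [Zero K] {X : Matrix (Fin 1) (Fin 1) K}
    (hX : X 0 0 = 0) : X = 0 := by
  ext1 i j
  rw [Subsingleton.elim i 0, Subsingleton.elim j 0, hX, Matrix.zero_apply]

theorem exists_eq_fromBlocks_of_mem_stabilizer_twoRows {p} (hp : p ∈ stabilizer twoRows) :
    ∃ X₁ ∈ skewHermitian (Fin 1) ℂ, ∃ X₂ : Matrix (Fin 1) (Fin 1) ℂ,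
      X₂.map Quaternion.coeComplex * !![quaternionJ] =
        !![quaternionJ] * X₁.map Quaternion.coeComplex ∧
      p = (fromBlocks X₁ 0 0 X₂,
        fromBlocks (X₁.map Quaternion.coeComplex) 0 0 (X₂.map Quaternion.coeComplex)) := by
  have htwo : (2 : ℂ) ∉ spectrum ℂ (complexGram (1 : Matrix (Fin 1) (Fin 1) ℍ[ℝ])) := by
    rw [complexGram_one]
    exact notMem_spectrum_one (by norm_num)
  obtain ⟨X₁, X₂, Y₁, Y₂, rfl, h₁, h₂, hXY⟩ := exists_eq_fromBlocks_of_mem_stabilizer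
    (Matrix.one_mul 1) map_complexPart_one_mul_conjTranspose_quaternionJ
    map_complexPart_quaternionJ_mul_conjTranspose_add htwo hp
  obtain ⟨hX₁, -, hXY₁⟩ := mem_stabilizer.1 h₁
  obtain ⟨-, -, hXY₂⟩ := mem_stabilizer.1 h₂
  obtain rfl : X₁.map Quaternion.coeComplex = Y₁ := by simpa using hXY₁
  obtain rfl : X₂.map Quaternion.coeComplex = Y₂ := by simpa using hXY₂
  exact ⟨X₁, hX₁, X₂, hXY, rfl⟩

theorem stabilizer_fromBlocks_twoRows_thirdRow {c : ℕ} {T : Matrix (Fin 1) (Fin c) ℍ[ℝ]}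
    (hT : T * Tᴴ = (c : ℝ) • 1) (hTT : Tᴴ * T = 1) :
    stabilizer (fromBlocks twoRows 0 thirdRow T) = ⊥ := by
  obtain ⟨L, hL⟩ := isNondegenerate_twoRows.exists_mul_eq_one
  have hnotMem : (((3 + c : ℝ)) : ℂ) ∉ spectrum ℂ (complexGram twoRows) := by
    rw [complexGram_twoRows]
    refine notMem_spectrum_fromBlocks_smul_one (notMem_spectrum_one ?_) ?_ <;> norm_cast <;> omega
  refine (Submodule.eq_bot_iff _).2 fun p hp => ?_
  obtain ⟨X, X₃, Y, Y₃, rfl, h₁₂, h₃, hXY⟩ := exists_eq_fromBlocks_of_mem_stabilizer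
    hL map_complexPart_twoRows_mul_conjTranspose_thirdRow
    (map_complexPart_thirdRow_mul_conjTranspose_add hT) hnotMem hp
  obtain ⟨X₁, hX₁, X₂, hX₁₂, hpair⟩ := exists_eq_fromBlocks_of_mem_stabilizer_twoRows h₁₂
  obtain ⟨rfl, rfl⟩ := Prod.mk.inj hpair
  have h₁₂ := congrFun (congrFun hX₁₂ 0) 0
  have h₂₃ := congrFun (congrFun hXY 0) (.inr 0)
  obtain ⟨hX₁_zero, hX₂_zero, hX₃_zero⟩ := eq_zero_of_mul_quaternionJ_eq (x₃ := X₃ 0 0)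
    (star_apply_of_mem_skewHermitian hX₁ 0 0) (by simpa [mul_apply] using h₁₂)
    (by simpa [thirdRow, mul_apply] using h₂₃)
  obtain rfl := eq_zero_of_apply_zero_zero hX₁_zero
  obtain rfl := eq_zero_of_apply_zero_zero hX₂_zero
  obtain rfl := eq_zero_of_apply_zero_zero hX₃_zero
  have hY₃ : Y₃ = 0 := by
    rw [← Matrix.one_mul Y₃, ← hTT, Matrix.mul_assoc, ← (mem_stabilizer.1 h₃).2.2,
      Matrix.map_zero _ coeComplex_zero, Matrix.zero_mul, Matrix.mul_zero]
  simp [hY₃, Matrix.map_zero _ coeComplex_zero]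

theorem exists_isNondegenerate_three {c : ℕ} (hc : c ≤ 1) :
    ∃ A : Matrix (Fin 3) (Fin (2 + c)) ℍ[ℝ], IsNondegenerate A ∧
      Module.finrank ℝ (stabilizer A) = 0 := by
  obtain ⟨T, hT, hTT⟩ := exists_mul_conjTranspose_eq_natCast_smul_one hc
  have hne : ((3 + c : ℝ) : ℂ) ≠ 0 := Complex.ofReal_ne_zero.2 (by positivity)
  let e : (Fin 1 ⊕ Fin 1) ⊕ Fin 1 ≃ Fin 3 :=
    (finSumFinEquiv.sumCongr (.refl _)).trans finSumFinEquiv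
  let f : (Fin 1 ⊕ Fin 1) ⊕ Fin c ≃ Fin (2 + c) :=
    (finSumFinEquiv.sumCongr (.refl _)).trans finSumFinEquiv
  refine ⟨reindex e f (fromBlocks twoRows 0 thirdRow T),
    (isNondegenerate_twoRows.fromBlocks map_complexPart_twoRows_mul_conjTranspose_thirdRow
      (map_complexPart_thirdRow_mul_conjTranspose_add hT) hne hTT).reindex e f, ?_⟩
  refine Nat.le_zero.1 ((finrank_stabilizer_reindex_le e f _).trans_eq ?_)
  rw [stabilizer_fromBlocks_twoRows_thirdRow hT hTT, finrank_bot]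

theorem exists_isNondegenerate {r s : ℕ} (hr : 1 ≤ r) (hsr : s ≤ r) (hrs : r ≤ 2 * s) :
    ∃ A : Matrix (Fin r) (Fin s) ℍ[ℝ], IsNondegenerate A ∧
      Module.finrank ℝ (stabilizer A) ≤ if r ≤ 2 then 1 else 0 := by
  induction r, hr using Nat.le_induction generalizing s with
  | base =>
    obtain rfl : s = 1 := by omega
    refine ⟨1, isNondegenerate_one,
      (finrank_stabilizer_le_of_mul_eq_one (Matrix.one_mul 1)).trans ?_⟩
    rw [finrank_skewHermitian_complex]
    simp
  | succ r hr ih =>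
    by_cases hr₂ : r = 2
    · subst hr₂
      obtain ⟨c, rfl⟩ : ∃ c, s = 2 + c := ⟨s - 2, by omega⟩
      obtain ⟨A, hA, hfinrank⟩ := exists_isNondegenerate_three (c := c) (by omega)
      exact ⟨A, hA, hfinrank.le⟩
    · obtain ⟨s, c, rfl, hc, hsr, hrs⟩ : ∃ s' c, s = s' + c ∧ c ≤ 1 ∧ s' ≤ r ∧ r < 2 * s' := by
        rcases hsr.eq_or_lt with rfl | hsr
        · exact ⟨r, 1, rfl, le_rfl, le_rfl, by omega⟩
        · exact ⟨s, 0, rfl, by omega, by omega, by omega⟩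
      obtain ⟨A, hA, hfinrank⟩ := ih hsr hrs.le
      obtain ⟨B, hB, hle⟩ := exists_isNondegenerate_extension hA hrs hc
      refine ⟨B, hB, (hle.trans hfinrank).trans_eq (if_congr ?_ rfl rfl)⟩
      omega

theorem exists_finrank_stabilizer_le {m n : ℕ} (hm : 1 ≤ m) (hn : 1 ≤ n) :
    ∃ A : Matrix (Fin m) (Fin n) ℍ[ℝ], Module.finrank ℝ (stabilizer A) ≤
      (if m ≤ 2 ∨ n = 1 then 1 else 0) + (m - 2 * n) ^ 2 + (n - m) * (2 * (n - m) + 1) := by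
  obtain ⟨A, hA, hfinrank⟩ := exists_isNondegenerate (r := min m (2 * n)) (s := min m n)
    (by omega) (by omega) (by omega)
  obtain ⟨L, hL⟩ := hA.exists_mul_eq_one
  let e : Fin (min m (2 * n)) ⊕ Fin (m - 2 * n) ≃ Fin m :=
    finSumFinEquiv.trans (finCongr (by omega))
  let f : Fin (min m n) ⊕ Fin (n - m) ≃ Fin n := finSumFinEquiv.trans (finCongr (by omega))
  refine ⟨reindex e f (fromBlocks A 0 0 0), ?_⟩
  calc Module.finrank ℝ (stabilizer (reindex e f (fromBlocks A 0 0 0)))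
      ≤ Module.finrank ℝ (stabilizer A) + (Module.finrank ℝ (skewHermitian (Fin (m - 2 * n)) ℂ) +
          Module.finrank ℝ (skewHermitian (Fin (n - m)) ℍ[ℝ])) :=
        (finrank_stabilizer_reindex_le e f _).trans
          (finrank_stabilizer_fromBlocks_zero_le hL hA.isUnit_complexGram)
    _ ≤ _ := by
      rw [finrank_skewHermitian_complex, finrank_skewHermitian_quaternion, ← add_assoc]
      gcongr
      exact hfinrank.trans_eq (if_congr (by omega) rfl rfl)

theorem stabilizer_dimension_eq_add {m n : ℕ} (hm : 1 ≤ m) (hn : 1 ≤ n) :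
    (if 2 ≤ n ∧ 2 * n ≤ m then (m - 2 * n) ^ 2
       else if 3 ≤ m ∧ m ≤ n then (n - m) * (2 * (n - m) + 1)
       else if n = 1 ∧ 2 ≤ m then 1 + (m - 2) ^ 2
       else if m ≤ 2 ∧ m ≤ n then 1 + (n - m) * (2 * (n - m) + 1)
       else 0) =
      (if m ≤ 2 ∨ n = 1 then 1 else 0) + (m - 2 * n) ^ 2 + (n - m) * (2 * (n - m) + 1) := by
  have hm₀ : m ≤ 2 * n → m - 2 * n = 0 := Nat.sub_eq_zero_of_le
  have hn₀ : n ≤ m → n - m = 0 := Nat.sub_eq_zero_of_le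
  split_ifs <;> grind

theorem stmt8 (m n : ℕ) (hm : 1 ≤ m) (hn : 1 ≤ n) :
    IsLeast {d : ℕ | ∃ A : Matrix (Fin m) (Fin n) (Quaternion ℝ),
        d = Module.finrank ℝ (Submodule.span ℝ (stabSet8 A))}
      (if 2 ≤ n ∧ 2 * n ≤ m then (m - 2 * n) ^ 2
       else if 3 ≤ m ∧ m ≤ n then (n - m) * (2 * (n - m) + 1)
       else if n = 1 ∧ 2 ≤ m then 1 + (m - 2) ^ 2
       else if m ≤ 2 ∧ m ≤ n then 1 + (n - m) * (2 * (n - m) + 1)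
       else 0) := by
  rw [stabilizer_dimension_eq_add hm hn]
  obtain ⟨A, hA⟩ := exists_finrank_stabilizer_le hm hn
  refine ⟨⟨A, ?_⟩, ?_⟩
  · rw [span_stabSet8]
    exact (le_finrank_stabilizer hm hn A).antisymm hA
  · rintro _ ⟨B, rfl⟩
    rw [span_stabSet8]
    exact le_finrank_stabilizer hm hn B
end

section
/- (Monotonicity Lemma, real case.) Let k ≥ 1 and let G be a compact (closed) subgroup of the orthogonal group O(k). For each n ≥ 1, let c(n) denote the cohomogeneity of the action of G × SO(n) on Matrix (Fin k) (Fin n) ℝ given by (g,h)·A = g A hᵀ, i.e. c(n) = kn minus the supremum over A of the Hausdorff dimension of the orbit of A. Then c(n) ≤ c(n+1) for all n ≥ 1. -/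
open Matrix ENNReal

attribute [local instance] Matrix.normedAddCommGroup

/-- The orbit of `A` under the action `(g,h)·A = g A hᵀ` of `G × SO(n)` on `k × n`
real matrices, for a subgroup `G` of `O(k)`. -/
def orbit9 {k n : ℕ} (G : Subgroup (Matrix.orthogonalGroup (Fin k) ℝ))
    (A : Matrix (Fin k) (Fin n) ℝ) : Set (Matrix (Fin k) (Fin n) ℝ) :=
  {B | ∃ g ∈ G, ∃ h ∈ Matrix.specialOrthogonalGroup (Fin n) ℝ,
    B = (g : Matrix (Fin k) (Fin k) ℝ) * A * (h : Matrix (Fin n) (Fin n) ℝ)ᵀ}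

/-- The cohomogeneity of the action of `G × SO(n)` on `k × n` real matrices: the real
dimension `k·n` minus the supremum of the Hausdorff dimensions of the orbits. -/
noncomputable def cohom9 (k : ℕ) (G : Subgroup (Matrix.orthogonalGroup (Fin k) ℝ))
    (n : ℕ) : ℝ≥0∞ :=
  (k * n : ℕ) - sSup {d : ℝ≥0∞ | ∃ A : Matrix (Fin k) (Fin n) ℝ, d = dimH (orbit9 G A)}

/-!
Every matrix `B` in the orbit of a `k × (n + 1)` matrix `A` has a unit right singular vector `u`
such that the Householder reflection `H` exchanging `e₀` and `u` brings `B` to the form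
`B = [w | C] H` with `w = Bu`, `Cᵀw = 0` and `CCᵀ = BBᵀ - wwᵀ`. Choosing `u` compatibly along the
orbit, the Gram matrices `CCᵀ` are `G`-conjugate to each other, so `C` lies in the union of two
orbits of `G × SO(n)`. It remains to recover `w` and the direction `(1, z)` of the reflection from
`C` and `k` real parameters. If `u` is chosen so that `e₀ - tu` lies in the row space of `B` for
some `t`, then `z` lies in the range of `Cᵀ`. As `w` lies in the kernel of `Cᵀ`, a single vector
`x ∈ ℝᵏ` encodes both: `z = Cᵀx`, and `w` is the projection of `x` to `ker Cᵀ`. This projection is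
`p(CCᵀ)` for a polynomial `p` which depends only on the common characteristic polynomial of the
matrices `CCᵀ`. Hence the orbit is contained in a `C¹` image of the product of two orbits with `ℝᵏ`,
and in passing from `n` to `n + 1` the dimension of orbits grows by at most `k`, just as `kn` does.
-/

section HausdorffDimension

open MeasureTheory OuterMeasure Metric Set
open Filter Topology
open scoped NNReal

variable {E F : Type*} [EMetricSpace E] [EMetricSpace F] {s : ℝ≥0} {Y : Set F}

/-- `Y` has upper box dimension at most `s`, in the quantitative form that its `ε`-covering
numbers are `O(ε⁻ˢ)`. It controls the Hausdorff dimension of products with `Y`. -/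
def HasBoxDimBound (s : ℝ≥0) (Y : Set F) : Prop :=
  ∃ K : ℝ≥0, ∀ ε : ℝ≥0, 0 < ε → ε ≤ 1 →
    (coveringNumber ε Y : ℝ≥0∞) * (ε : ℝ≥0∞) ^ (s : ℝ) ≤ K

lemma ediam_prod_le {δ : ℝ≥0∞} {S : Set E} {T : Set F} (hS : ediam S ≤ δ) (hT : ediam T ≤ δ) :
    ediam (S ×ˢ T) ≤ δ :=
  ediam_le fun _ hx _ hy ↦ max_le ((edist_le_ediam_of_mem hx.1 hy.1).trans hS)
    ((edist_le_ediam_of_mem hx.2 hy.2).trans hT)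

lemma pre_prod_le_coveringNumber_mul {m : ℝ≥0∞ → ℝ≥0∞} (hm : Monotone m) {r : ℝ≥0∞} {δ : ℝ≥0}
    (hδ : δ ≤ r) {S : Set E} (hS : ediam S ≤ δ) (hfin : coveringNumber (δ / 2) Y ≠ ⊤) :
    mkMetric'.pre (fun T ↦ m (ediam T)) r (S ×ˢ Y) ≤ coveringNumber (δ / 2) Y * m δ := by
  have hcover := isCover_iff_subset_iUnion_closedEBall.1 (isCover_minimalCover hfin)
  have hfinite := finite_minimalCover (ε := δ / 2) (A := Y)
  calc
    _ ≤ mkMetric'.pre (fun T ↦ m (ediam T)) r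
          (⋃ y ∈ hfinite.toFinset, S ×ˢ closedEBall y ↑(δ / 2)) := by
      refine measure_mono fun x hx ↦ ?_
      simpa [hx.1] using hcover hx.2
    _ ≤ ∑ _y ∈ hfinite.toFinset, m δ := by
      refine (measure_biUnion_finset_le _ _).trans (Finset.sum_le_sum fun y _ ↦ ?_)
      have hpiece : ediam (S ×ˢ closedEBall y ↑(δ / 2)) ≤ δ :=
        ediam_prod_le hS (ediam_closedEBall_le.trans_eq (by
          rw [ENNReal.coe_div two_ne_zero, ENNReal.coe_ofNat,
            ENNReal.mul_div_cancel two_ne_zero ofNat_ne_top]))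
      exact (mkMetric'.pre_le (hpiece.trans hδ)).trans (hm hpiece)
    _ = coveringNumber (δ / 2) Y * m δ := by
      rw [Finset.sum_const, nsmul_eq_mul, ← encard_minimalCover hfin,
        hfinite.encard_eq_coe_toFinset_card]
      rfl

lemma pre_prod_le_mul_rpow {d : ℝ≥0} {K r : ℝ≥0∞} {δ : ℝ≥0} (h0 : 0 < δ) (hδ : δ ≤ r) {S : Set E}
    (hS : ediam S ≤ δ) (hKtop : K ≠ ⊤)
    (hK : coveringNumber (δ / 2) Y * ((δ / 2 : ℝ≥0) : ℝ≥0∞) ^ (s : ℝ) ≤ K) :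
    mkMetric'.pre (fun T ↦ ediam T ^ (d + s : ℝ)) r (S ×ˢ Y) ≤
      2 ^ (s : ℝ) * K * (δ : ℝ≥0∞) ^ (d : ℝ) := by
  have hfin : coveringNumber (δ / 2) Y ≠ ⊤ := by
    intro htop
    have hpos : ((δ / 2 : ℝ≥0) : ℝ≥0∞) ^ (s : ℝ) ≠ 0 := by simp [h0.ne']
    exact hKtop (top_unique (by rwa [htop, ENat.toENNReal_top, ENNReal.top_mul hpos] at hK))
  have hhalf : (δ : ℝ≥0∞) = 2 * (δ / 2 : ℝ≥0) := by
    exact_mod_cast (mul_div_cancel₀ δ two_ne_zero).symm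
  calc
    _ ≤ coveringNumber (δ / 2) Y * (δ : ℝ≥0∞) ^ (d + s : ℝ) :=
      pre_prod_le_coveringNumber_mul (ENNReal.monotone_rpow_of_nonneg (by positivity)) hδ hS hfin
    _ = 2 ^ (s : ℝ) * (coveringNumber (δ / 2) Y * ((δ / 2 : ℝ≥0) : ℝ≥0∞) ^ (s : ℝ)) *
        (δ : ℝ≥0∞) ^ (d : ℝ) := by
      rw [ENNReal.rpow_add_of_nonneg _ _ d.coe_nonneg s.coe_nonneg, mul_left_comm (2 ^ (s : ℝ)),
        ← ENNReal.mul_rpow_of_nonneg _ _ s.coe_nonneg, ← hhalf]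
      ring
    _ ≤ _ := by gcongr

lemma HasBoxDimBound.exists_pre_prod_le (hY : HasBoxDimBound s Y) (d : ℝ≥0) :
    ∃ c : ℝ≥0∞, c ≠ 0 ∧ c ≠ ⊤ ∧ ∀ r : ℝ≥0∞, 0 < r → r ≤ 1 → ∀ S : Set E, ediam S ≤ r →
      mkMetric'.pre (fun T ↦ ediam T ^ (d + s : ℝ)) r (S ×ˢ Y) ≤ c * ediam S ^ (d : ℝ) := by
  obtain ⟨K, hK⟩ := hY
  have hctop : 2 ^ (s : ℝ) * ((K + 1 : ℝ≥0) : ℝ≥0∞) ≠ ⊤ :=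
    mul_ne_top (rpow_ne_top_of_nonneg s.coe_nonneg ofNat_ne_top) coe_ne_top
  refine ⟨2 ^ (s : ℝ) * (K + 1 : ℝ≥0), by simp, hctop, fun r hr0 hr1 S hS ↦ ?_⟩
  have bound (δ : ℝ≥0) (h0 : 0 < δ) (hδ : δ ≤ r) (hSδ : ediam S ≤ δ) :
      mkMetric'.pre (fun T ↦ ediam T ^ (d + s : ℝ)) r (S ×ˢ Y) ≤
        2 ^ (s : ℝ) * (K + 1 : ℝ≥0) * (δ : ℝ≥0∞) ^ (d : ℝ) := by
    have h1 : δ / 2 ≤ 1 := (half_le_self δ.2).trans (by exact_mod_cast hδ.trans hr1)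
    exact pre_prod_le_mul_rpow h0 hδ hSδ coe_ne_top
      ((hK _ (half_pos h0) h1).trans (by exact_mod_cast le_self_add))
  rcases eq_or_ne (ediam S) 0 with hS0 | hS0
  · have hlim : Tendsto (fun δ : ℝ≥0 ↦ 2 ^ (s : ℝ) * (K + 1 : ℝ≥0) * (δ : ℝ≥0∞) ^ (d : ℝ))
        (𝓝[>] 0) (𝓝 (2 ^ (s : ℝ) * (K + 1 : ℝ≥0) * ediam S ^ (d : ℝ))) := by
      refine ENNReal.Tendsto.const_mul ?_ (.inr hctop)
      rw [hS0, ← ENNReal.coe_zero]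
      exact (ENNReal.tendsto_coe.2 tendsto_id).ennrpow_const _ |>.mono_left nhdsWithin_le_nhds
    refine ge_of_tendsto hlim ?_
    filter_upwards [self_mem_nhdsWithin, nhdsWithin_le_nhds
      (ENNReal.tendsto_coe.2 tendsto_id (Iic_mem_nhds hr0))] with δ h0 hδ
    exact bound δ h0 hδ (hS0.trans_le zero_le)
  · lift ediam S to ℝ≥0 using ne_top_of_le_ne_top one_ne_top (hS.trans hr1) with δ
    exact bound δ (pos_iff_ne_zero.2 (by exact_mod_cast hS0)) hS le_rfl

lemma HasBoxDimBound.exists_hausdorffMeasure_prod_le [MeasurableSpace E] [BorelSpace E]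
    [MeasurableSpace (E × F)] [BorelSpace (E × F)] (hY : HasBoxDimBound s Y) (d : ℝ≥0) :
    ∃ c : ℝ≥0∞, c ≠ ⊤ ∧ ∀ X : Set E, μH[d + s] (X ×ˢ Y) ≤ c * μH[d] X := by
  obtain ⟨c, hc0, hctop, hc⟩ := hY.exists_pre_prod_le (E := E) d
  refine ⟨c, hctop, fun X ↦ ?_⟩
  have hpre (r : ℝ≥0∞) (hr : 0 < r) :
      mkMetric'.pre (fun T ↦ ediam T ^ (d + s : ℝ)) r (X ×ˢ Y) ≤
        (mkMetric (c • fun t ↦ t ^ (d : ℝ)) : OuterMeasure E) X := by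
    set ρ := min r 1
    have hρ : 0 < ρ := lt_min hr one_pos
    let ν : OuterMeasure E := OuterMeasure.map Prod.fst (OuterMeasure.restrict (univ ×ˢ Y)
      (mkMetric'.pre (fun T ↦ ediam T ^ (d + s : ℝ)) ρ))
    have hν (S : Set E) : ν S = mkMetric'.pre (fun T ↦ ediam T ^ (d + s : ℝ)) ρ (S ×ˢ Y) := by
      simp only [ν, OuterMeasure.map_apply, OuterMeasure.restrict_apply]
      rw [← prod_univ, prod_inter_prod, inter_univ, univ_inter]
    have hνle : ν ≤ mkMetric'.pre (fun T ↦ c * ediam T ^ (d : ℝ)) ρ :=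
      mkMetric'.le_pre.2 fun S hS ↦ (hν S).trans_le (hc ρ hρ (min_le_right _ _) S hS)
    calc
      _ ≤ ν X := (mkMetric'.mono_pre _ (min_le_left _ _) _).trans_eq (hν X).symm
      _ ≤ mkMetric'.pre (fun T ↦ c * ediam T ^ (d : ℝ)) ρ X := hνle X
      _ ≤ _ := le_iSup₂ (f := fun r (_ : r > 0) ↦ mkMetric'.pre (fun T ↦ c * ediam T ^ (d : ℝ)) r)
        ρ hρ X
  calc
    _ = (mkMetric fun t ↦ t ^ (d + s : ℝ) : OuterMeasure (E × F)) (X ×ˢ Y) := by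
      rw [coe_mkMetric]; rfl
    _ ≤ (mkMetric (c • fun t ↦ t ^ (d : ℝ)) : OuterMeasure E) X := by
      rw [mkMetric, mkMetric', OuterMeasure.iSup_apply]
      exact iSup_le fun r ↦ by rw [OuterMeasure.iSup_apply]; exact iSup_le (hpre r)
    _ = c * μH[d] X := by
      rw [mkMetric_smul _ hctop hc0, _root_.smul_apply, coe_mkMetric]; rfl

theorem HasBoxDimBound.dimH_prod_le (hY : HasBoxDimBound s Y) (X : Set E) :
    dimH (X ×ˢ Y) ≤ dimH X + s := by
  borelize E (E × F)
  refine ENNReal.le_of_forall_pos_le_add fun ε hε hlt ↦ ?_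
  lift dimH X to ℝ≥0 using (ENNReal.add_ne_top.1 hlt.ne).1 with D hD
  obtain ⟨c, -, hle⟩ := hY.exists_hausdorffMeasure_prod_le (E := E) (D + ε)
  have hX : μH[(D + ε : ℝ≥0)] X = 0 :=
    hausdorffMeasure_of_dimH_lt (by rw [← hD]; exact_mod_cast lt_add_of_pos_right D hε)
  have hXY : μH[(D + ε + s : ℝ≥0)] (X ×ˢ Y) = 0 := by
    rw [NNReal.coe_add]
    simpa only [hX, mul_zero, nonpos_iff_eq_zero] using hle X
  calc
    _ ≤ ((D + ε + s : ℝ≥0) : ℝ≥0∞) :=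
      dimH_le_of_hausdorffMeasure_ne_top (hXY.trans_ne zero_ne_top)
    _ = _ := by push_cast; ring

lemma coveringNumber_pi_Icc_le (ι : Type*) [Fintype ι] (R : ℝ≥0) {ε : ℝ≥0} (hε : 0 < ε) :
    coveringNumber ε (Icc (fun _ : ι ↦ -(R : ℝ)) fun _ ↦ R) ≤
      ((⌊(2 * R / ε : ℝ)⌋₊ + 1) ^ Fintype.card ι : ℕ) := by
  have hε' : (0 : ℝ) < ε := hε
  set N := ⌊(2 * R / ε : ℝ)⌋₊
  let grid (j : ι → Fin (N + 1)) : ι → ℝ := fun i ↦ j i * ε - R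
  have hN : (N : ℝ) * ε ≤ 2 * R := (le_div_iff₀ hε').1 (Nat.floor_le (by positivity))
  have hgrid : range grid ⊆ Icc (fun _ ↦ -(R : ℝ)) fun _ ↦ R := by
    rintro _ ⟨j, rfl⟩
    refine ⟨fun i ↦ ?_, fun i ↦ ?_⟩
    · have : 0 ≤ (j i : ℝ) * ε := by positivity
      simp only [grid]
      linarith
    · have : (j i : ℝ) * ε ≤ N * ε := by
        gcongr
        exact_mod_cast (j i).is_le
      simp only [grid]
      linarith
  have hcover : IsCover ε (Icc (fun _ : ι ↦ -(R : ℝ)) fun _ ↦ R) (range grid) := by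
    intro x hx
    have hj (i : ι) : ⌊(x i + R) / ε⌋₊ < N + 1 := by
      have hxR : x i ≤ R := hx.2 i
      refine Nat.lt_succ_of_le (Nat.floor_mono ?_)
      gcongr
      linarith
    refine ⟨_, ⟨fun i ↦ ⟨_, hj i⟩, rfl⟩, edist_pi_le_iff.2 fun i ↦ ?_⟩
    have hxR : -(R : ℝ) ≤ x i := hx.1 i
    have hnonneg : 0 ≤ (x i + R) / ε := div_nonneg (by linarith) hε'.le
    have hlow := (le_div_iff₀ hε').1 (Nat.floor_le hnonneg)
    have hupp := (div_lt_iff₀ hε').1 (Nat.lt_floor_add_one ((x i + R) / ε))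
    rw [edist_dist, Real.dist_eq, ENNReal.ofReal_le_iff_le_toReal coe_ne_top, abs_le]
    simp only [coe_toReal]
    constructor <;> simp only [grid] <;> linarith
  calc
    _ ≤ (range grid).encard := hcover.coveringNumber_le_encard hgrid
    _ ≤ (univ : Set (ι → Fin (N + 1))).encard := by
      rw [← image_univ]
      exact encard_image_le _ _
    _ = _ := by simp [encard_univ]

lemma hasBoxDimBound_pi_Icc (ι : Type*) [Fintype ι] (R : ℝ≥0) :
    HasBoxDimBound (Fintype.card ι) (Icc (fun _ : ι ↦ -(R : ℝ)) fun _ ↦ R) := by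
  refine ⟨(2 * R + 1) ^ Fintype.card ι, fun ε h0 h1 ↦ ?_⟩
  set N := ⌊(2 * R / ε : ℝ)⌋₊
  have hN : ((N + 1 : ℕ) : ℝ≥0) * ε ≤ 2 * R + 1 := by
    have hfloor : (N : ℝ) * ε ≤ 2 * R :=
      (le_div_iff₀ (NNReal.coe_pos.2 h0)).1 (Nat.floor_le (by positivity))
    rw [← NNReal.coe_le_coe] at h1 ⊢
    push_cast at h1 ⊢
    linarith
  calc
    _ ≤ (((N + 1) ^ Fintype.card ι : ℕ) : ℝ≥0∞) * (ε : ℝ≥0∞) ^ Fintype.card ι := by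
      rw [NNReal.coe_natCast, ENNReal.rpow_natCast]
      gcongr
      exact_mod_cast coveringNumber_pi_Icc_le ι R h0
    _ = (((N + 1 : ℕ) * ε : ℝ≥0) : ℝ≥0∞) ^ Fintype.card ι := by
      push_cast
      rw [mul_pow]
    _ ≤ _ := by
      rw [ENNReal.coe_pow]
      gcongr

theorem dimH_prod_univ_pi_le {ι : Type*} [Fintype ι] (X : Set E) :
    dimH (X ×ˢ (univ : Set (ι → ℝ))) ≤ dimH X + Fintype.card ι := by
  have hunion : (univ : Set (ι → ℝ)) =
      ⋃ N : ℕ, Icc (fun _ : ι ↦ -((N : ℝ≥0) : ℝ)) fun _ ↦ (N : ℝ≥0) := by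
    refine (eq_univ_of_forall fun y ↦ ?_).symm
    obtain ⟨N, hN⟩ := exists_nat_ge ‖y‖
    have hy (i : ι) := abs_le.1 ((norm_le_pi_norm y i).trans hN)
    exact mem_iUnion.2 ⟨N, fun i ↦ (hy i).1, fun i ↦ (hy i).2⟩
  rw [hunion, prod_iUnion, dimH_iUnion]
  exact iSup_le fun N ↦ mod_cast (hasBoxDimBound_pi_Icc ι N).dimH_prod_le X

end HausdorffDimension

attribute [local instance] Matrix.normedSpace

section MatrixSmoothness

variable {T : Type*} [NormedAddCommGroup T] [NormedSpace ℝ T] {r : WithTop ℕ∞}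
variable {l m n : Type*} [Fintype l] [Fintype m] [Fintype n]

lemma contDiff_matrix_iff {f : T → Matrix m n ℝ} :
    ContDiff ℝ r f ↔ ∀ i j, ContDiff ℝ r fun x ↦ f x i j :=
  contDiff_pi.trans (forall_congr' fun _ ↦ contDiff_pi)

lemma contDiff_matrix_transpose {f : T → Matrix m n ℝ} (hf : ContDiff ℝ r f) :
    ContDiff ℝ r fun x ↦ (f x)ᵀ :=
  contDiff_matrix_iff.2 fun i j ↦ contDiff_matrix_iff.1 hf j i

lemma contDiff_dotProduct {f g : T → m → ℝ} (hf : ContDiff ℝ r f) (hg : ContDiff ℝ r g) :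
    ContDiff ℝ r fun x ↦ f x ⬝ᵥ g x :=
  ContDiff.sum fun i _ ↦ (contDiff_pi.1 hf i).mul (contDiff_pi.1 hg i)

lemma contDiff_matrix_mulVec {f : T → Matrix m n ℝ} {g : T → n → ℝ} (hf : ContDiff ℝ r f)
    (hg : ContDiff ℝ r g) : ContDiff ℝ r fun x ↦ f x *ᵥ g x :=
  contDiff_pi.2 fun i ↦ contDiff_dotProduct (contDiff_pi.1 hf i) hg

lemma contDiff_matrix_mul {f : T → Matrix l m ℝ} {g : T → Matrix m n ℝ} (hf : ContDiff ℝ r f)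
    (hg : ContDiff ℝ r g) : ContDiff ℝ r fun x ↦ f x * g x :=
  contDiff_matrix_iff.2 fun i j ↦ contDiff_dotProduct (contDiff_pi.1 hf i)
    (contDiff_pi.1 (contDiff_matrix_transpose hg) j)

lemma contDiff_matrix_aeval [DecidableEq n] {f : T → Matrix n n ℝ} (hf : ContDiff ℝ r f)
    (p : Polynomial ℝ) : ContDiff ℝ r fun x ↦ Polynomial.aeval (f x) p := by
  have hpow (k : ℕ) : ContDiff ℝ r fun x ↦ f x ^ k := by
    induction k with
    | zero => simpa only [pow_zero] using contDiff_const
    | succ k ih => simpa only [pow_succ] using contDiff_matrix_mul ih hf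
  simp only [Polynomial.aeval_eq_sum_range]
  exact ContDiff.sum fun k _ ↦ (hpow k).const_smul _

end MatrixSmoothness

section Householder

variable {K m : Type*} [Field K] [Fintype m] [DecidableEq m]

/-- The Householder reflection in the hyperplane orthogonal to `v`; it is the identity when `v` is
isotropic, since then `2 / (v ⬝ᵥ v) = 0`. -/
def householder (v : m → K) : Matrix m m K :=
  1 - (2 / (v ⬝ᵥ v)) • vecMulVec v v

lemma householder_transpose (v : m → K) : (householder v)ᵀ = householder v := by
  simp [householder, transpose_vecMulVec]

lemma householder_mul_self (v : m → K) : householder v * householder v = 1 := by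
  have hscalar : 2 / (v ⬝ᵥ v) * (2 / (v ⬝ᵥ v) * (v ⬝ᵥ v)) = 2 / (v ⬝ᵥ v) + 2 / (v ⬝ᵥ v) := by
    rcases eq_or_ne (v ⬝ᵥ v) 0 with h | h
    · simp [h]
    · field_simp
      norm_num
  simp only [householder, sub_mul, mul_sub, one_mul, mul_one, Matrix.smul_mul, Matrix.mul_smul,
    vecMulVec_mul_vecMulVec, vecMulVec_smul, smul_smul, hscalar, add_smul]
  abel

lemma householder_smul {c : K} (hc : c ≠ 0) (v : m → K) :
    householder (c • v) = householder v := by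
  have hscalar : 2 / (c * (c * (v ⬝ᵥ v))) * (c * c) = 2 / (v ⬝ᵥ v) := by
    rw [← mul_assoc c, mul_comm (c * c), ← div_div, div_mul_cancel₀ _ (mul_ne_zero hc hc)]
  simp only [householder, smul_dotProduct, dotProduct_smul, smul_vecMulVec, vecMulVec_smul,
    smul_smul, smul_eq_mul, hscalar]

lemma householder_sub_mulVec {x y : m → K} (hxy : x ⬝ᵥ x = y ⬝ᵥ y)
    (hne : (x - y) ⬝ᵥ (x - y) ≠ 0) : householder (x - y) *ᵥ x = y := by
  have hdot : (x - y) ⬝ᵥ (x - y) = 2 * ((x - y) ⬝ᵥ x) := by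
    simp only [sub_dotProduct, dotProduct_sub, ← hxy, dotProduct_comm y x]
    ring
  have hcoeff : 2 / ((x - y) ⬝ᵥ (x - y)) * ((x - y) ⬝ᵥ x) = 1 := by
    rw [div_mul_eq_mul_div, ← hdot, div_self hne]
  simp only [householder, sub_mulVec, one_mulVec, smul_mulVec, vecMulVec_mulVec, op_smul_eq_smul,
    smul_smul, hcoeff, one_smul]
  exact sub_sub_cancel x y

end Householder

section ConsCol

variable {R m : Type*} {n : ℕ}

/-- The block matrix `[w | C]`. -/
def consCol (w : m → R) (C : Matrix m (Fin n) R) : Matrix m (Fin (n + 1)) R :=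
  Matrix.of fun i ↦ vecCons (w i) (C i)

lemma consCol_eq_self (D : Matrix m (Fin (n + 1)) R) :
    consCol (fun i ↦ D i 0) (D.submatrix id Fin.succ) = D := by
  ext i j
  refine Fin.cases ?_ (fun j ↦ ?_) j <;> rfl

lemma consCol_mul_transpose [CommSemiring R] (w : m → R) (C : Matrix m (Fin n) R) :
    consCol w C * (consCol w C)ᵀ = vecMulVec w w + C * Cᵀ := by
  ext i j
  simp [consCol, mul_apply, Fin.sum_univ_succ, vecMulVec_apply]

lemma transpose_consCol_mulVec [CommSemiring R] [Fintype m] (w : m → R) (C : Matrix m (Fin n) R)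
    (x : m → R) : (consCol w C)ᵀ *ᵥ x = vecCons (w ⬝ᵥ x) (Cᵀ *ᵥ x) := by
  ext j
  refine Fin.cases ?_ (fun j ↦ ?_) j <;> rfl

end ConsCol

section Pivot

variable {m : Type*} [Fintype m] {n : ℕ}

/-- The Householder reflection of `ℝⁿ⁺¹` in the direction `(1, z)`; the vector `z` is an affine
coordinate on all directions outside the hyperplane `x₀ = 0`. -/
noncomputable def chartReflection (z : Fin n → ℝ) : Matrix (Fin (n + 1)) (Fin (n + 1)) ℝ :=
  householder (vecCons 1 z)

/-- `u` is a unit right singular vector of `B` whose residual `e₀ - t • u` lies in the row space of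
`B`. Reflecting `e₀` to `u` then splits off `B *ᵥ u` as the first column of `B`, in a direction
which the remaining columns determine. -/
structure IsPivot (B : Matrix m (Fin (n + 1)) ℝ) (u : Fin (n + 1) → ℝ) : Prop where
  dotProduct_self : u ⬝ᵥ u = 1
  apply_zero_ne_one : u 0 ≠ 1
  exists_eigenvalue : ∃ μ : ℝ, Bᵀ *ᵥ (B *ᵥ u) = μ • u
  exists_residual : ∃ (x : m → ℝ) (t : ℝ), Bᵀ *ᵥ x + t • u = Pi.single 0 1

variable {B : Matrix m (Fin (n + 1)) ℝ} {u : Fin (n + 1) → ℝ}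

lemma IsPivot.householder_mulVec_single (hu : IsPivot B u) :
    householder (Pi.single 0 1 - u) *ᵥ Pi.single 0 1 = u := by
  refine householder_sub_mulVec (by simp [hu.dotProduct_self]) fun h ↦ hu.apply_zero_ne_one ?_
  simpa using (congrFun (sub_eq_zero.1 (dotProduct_self_eq_zero.1 h)) 0).symm

lemma IsPivot.householder_mulVec (hu : IsPivot B u) :
    householder (Pi.single 0 1 - u) *ᵥ u = Pi.single 0 1 := by
  conv_lhs => rw [← hu.householder_mulVec_single, mulVec_mulVec, hu.householder_mulVec_single,
    householder_mul_self, one_mulVec]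

theorem IsPivot.exists_eq (hu : IsPivot B u) :
    ∃ (C : Matrix m (Fin n) ℝ) (x : m → ℝ),
      B = consCol (B *ᵥ u) C * chartReflection (Cᵀ *ᵥ x) ∧ Cᵀ *ᵥ (B *ᵥ u) = 0 ∧
      vecMulVec (B *ᵥ u) (B *ᵥ u) + C * Cᵀ = B * Bᵀ := by
  obtain ⟨μ, hμ⟩ := hu.exists_eigenvalue
  obtain ⟨x, t, hx⟩ := hu.exists_residual
  set H := householder (Pi.single 0 1 - u)
  obtain ⟨C, hC⟩ : ∃ C, consCol (B *ᵥ u) C = B * H := by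
    refine ⟨(B * H).submatrix id Fin.succ, ?_⟩
    convert consCol_eq_self (B * H)
    rw [← hu.householder_mulVec_single, mulVec_mulVec, mulVec_single_one]
    rfl
  have hrow (y : m → ℝ) : vecCons (B *ᵥ u ⬝ᵥ y) (Cᵀ *ᵥ y) = H *ᵥ (Bᵀ *ᵥ y) := by
    rw [← transpose_consCol_mulVec, hC, transpose_mul, householder_transpose, mulVec_mulVec]
  have hCw : Cᵀ *ᵥ (B *ᵥ u) = 0 := by
    ext j
    have h := congrFun (hrow (B *ᵥ u)) j.succ
    rwa [hμ, mulVec_smul, hu.householder_mulVec, cons_val_succ, Pi.smul_apply,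
      Pi.single_eq_of_ne (Fin.succ_ne_zero j), smul_zero] at h
  have hs : 1 - u 0 ≠ 0 := sub_ne_zero.2 hu.apply_zero_ne_one.symm
  have hdir : vecCons 1 (Cᵀ *ᵥ (-(1 - u 0)⁻¹ • x)) = (1 - u 0)⁻¹ • (Pi.single 0 1 - u) := by
    ext j
    refine Fin.cases ?_ (fun j ↦ ?_) j
    · simp [hs]
    · have h := congrFun (hrow x) j.succ
      rw [eq_sub_of_add_eq hx, mulVec_sub, mulVec_smul, hu.householder_mulVec,
        hu.householder_mulVec_single] at h
      replace h : (Cᵀ *ᵥ x) j = u j.succ := by simpa using h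
      simp [mulVec_neg, mulVec_smul, h]
  refine ⟨C, -(1 - u 0)⁻¹ • x, ?_, hCw, ?_⟩
  · rw [chartReflection, hdir, householder_smul (inv_ne_zero hs), hC, Matrix.mul_assoc,
      householder_mul_self, Matrix.mul_one]
  · rw [← consCol_mul_transpose, hC, transpose_mul, householder_transpose, Matrix.mul_assoc,
      ← Matrix.mul_assoc H, householder_mul_self, Matrix.one_mul]

lemma exists_smul_dotProduct_self_eq_one {ι : Type*} [Fintype ι] {v : ι → ℝ} (hv : v ≠ 0) (i : ι) :
    ∃ c : ℝ, c ≠ 0 ∧ (c • v) ⬝ᵥ (c • v) = 1 ∧ (c • v) i ≤ 0 := by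
  have hpos : 0 < √(v ⬝ᵥ v) := Real.sqrt_pos.2 (by simpa using dotProduct_star_self_pos_iff.2 hv)
  have hunit (c : ℝ) (hc : c * c = 1) : ((c / √(v ⬝ᵥ v)) • v) ⬝ᵥ ((c / √(v ⬝ᵥ v)) • v) = 1 := by
    have hsq := Real.mul_self_sqrt (Real.sqrt_pos.1 hpos).le
    rw [smul_dotProduct, dotProduct_smul, smul_smul, div_mul_div_comm, hc, hsq, smul_eq_mul,
      one_div_mul_cancel (Real.sqrt_pos.1 hpos).ne']
  rcases le_total (v i) 0 with hi | hi
  · refine ⟨1 / √(v ⬝ᵥ v), by positivity, hunit 1 (by norm_num), ?_⟩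
    exact mul_nonpos_of_nonneg_of_nonpos (by positivity) hi
  · refine ⟨-1 / √(v ⬝ᵥ v), div_ne_zero (by norm_num) hpos.ne', hunit (-1) (by norm_num), ?_⟩
    exact mul_nonpos_of_nonpos_of_nonneg (div_nonpos_of_nonpos_of_nonneg (by norm_num) hpos.le) hi

lemma exists_transpose_mulVec_add_eq {ι : Type*} [Fintype ι] (B : Matrix m ι ℝ) (y : ι → ℝ) :
    ∃ (x : m → ℝ) (f : ι → ℝ), Bᵀ *ᵥ x + f = y ∧ B *ᵥ f = 0 := by
  have hrange : LinearMap.range (B * Bᵀ).mulVecLin = LinearMap.range B.mulVecLin := by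
    refine Submodule.eq_of_le_of_finrank_eq ?_ (rank_self_mul_transpose B)
    rw [mulVecLin_mul]
    exact LinearMap.range_comp_le_range _ _
  obtain ⟨x, hx⟩ : B *ᵥ y ∈ LinearMap.range (B * Bᵀ).mulVecLin := hrange ▸ ⟨y, rfl⟩
  refine ⟨x, y - Bᵀ *ᵥ x, add_sub_cancel _ _, ?_⟩
  rw [mulVec_sub, ← hx, mulVecLin_apply, mulVec_mulVec, sub_self]

lemma exists_isPivot_mulVec_eq_zero {v : Fin (n + 1) → ℝ} (hv : v ≠ 0) (hBv : B *ᵥ v = 0) :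
    ∃ u, IsPivot B u ∧ B *ᵥ u = 0 := by
  obtain ⟨x, f, hx, hf⟩ := exists_transpose_mulVec_add_eq B (Pi.single 0 1)
  obtain ⟨v, hv, hBv, t, rfl⟩ : ∃ v, v ≠ 0 ∧ B *ᵥ v = 0 ∧ ∃ t : ℝ, f = t • v := by
    by_cases h0 : f = 0
    · exact ⟨v, hv, hBv, 0, by rw [h0, zero_smul]⟩
    · exact ⟨f, h0, hf, 1, (one_smul ℝ f).symm⟩
  obtain ⟨c, hc, hunit, hsign⟩ := exists_smul_dotProduct_self_eq_one hv 0
  have hBu : B *ᵥ (c • v) = 0 := by rw [mulVec_smul, hBv, smul_zero]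
  refine ⟨c • v, ⟨hunit, (hsign.trans_lt one_pos).ne, ⟨0, by simp [hBu]⟩, x, t / c, ?_⟩, hBu⟩
  rw [smul_smul, div_mul_cancel₀ t hc, hx]

lemma isPivot_of_injective (hB : Function.Injective B.mulVec) (hu : u ⬝ᵥ u = 1) (h0 : u 0 ≠ 1)
    {μ : ℝ} (hμ : Bᵀ *ᵥ (B *ᵥ u) = μ • u) : IsPivot B u := by
  obtain ⟨x, f, hx, hf⟩ := exists_transpose_mulVec_add_eq B (Pi.single 0 1)
  obtain rfl : f = 0 := hB (by rw [hf, mulVec_zero])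
  exact ⟨hu, h0, ⟨μ, hμ⟩, x, 0, by rw [zero_smul, hx]⟩

lemma exists_unit_eigenvector_transpose_mul (A : Matrix m (Fin (n + 1)) ℝ) :
    ∃ (v : Fin (n + 1) → ℝ) (μ : ℝ), v ⬝ᵥ v = 1 ∧ Aᵀ *ᵥ (A *ᵥ v) = μ • v := by
  have hA : (Aᵀ * A).IsHermitian := isHermitian_conjTranspose_mul_self A
  refine ⟨hA.eigenvectorBasis 0, hA.eigenvalues 0, ?_, ?_⟩
  · have := hA.eigenvectorBasis.orthonormal.1 0
    rw [EuclideanSpace.norm_eq, Real.sqrt_eq_one] at this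
    simpa [dotProduct, sq] using this
  · rw [mulVec_mulVec]
    exact hA.mulVec_eigenvectorBasis 0

variable {A : Matrix m (Fin (n + 1)) ℝ} {g : Matrix m m ℝ}
  {h : Matrix (Fin (n + 1)) (Fin (n + 1)) ℝ}

lemma mul_mul_transpose_mulVec_mulVec (hh : h ∈ orthogonalGroup (Fin (n + 1)) ℝ)
    (v : Fin (n + 1) → ℝ) : (g * A * hᵀ) *ᵥ (h *ᵥ v) = g *ᵥ (A *ᵥ v) := by
  have hhh : hᵀ * h = 1 := (mem_orthogonalGroup_iff' _ _).1 hh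
  rw [mulVec_mulVec, Matrix.mul_assoc, hhh, Matrix.mul_one, ← mulVec_mulVec]

variable [DecidableEq m]

lemma exists_isPivot_of_injective (hA : Function.Injective A.mulVec)
    {v : Fin (n + 1) → ℝ} {μ : ℝ} (hv : v ⬝ᵥ v = 1) (hμ : Aᵀ *ᵥ (A *ᵥ v) = μ • v)
    (hg : g ∈ orthogonalGroup m ℝ) (hh : h ∈ orthogonalGroup (Fin (n + 1)) ℝ) :
    ∃ u, IsPivot (g * A * hᵀ) u ∧ vecMulVec ((g * A * hᵀ) *ᵥ u) ((g * A * hᵀ) *ᵥ u) =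
      g * vecMulVec (A *ᵥ v) (A *ᵥ v) * gᵀ := by
  have hgg : gᵀ * g = 1 := (mem_orthogonalGroup_iff' _ _).1 hg
  have hhh : hᵀ * h = 1 := (mem_orthogonalGroup_iff' _ _).1 hh
  have hhv : (h *ᵥ v) ⬝ᵥ (h *ᵥ v) = 1 := by
    rw [dotProduct_mulVec, vecMul_mulVec, hhh, vecMul_one, hv]
  have hne : h *ᵥ v ≠ 0 := fun h0 ↦ by simp [h0] at hhv
  obtain ⟨c, -, hunit, hsign⟩ := exists_smul_dotProduct_self_eq_one hne 0
  have hcc : c * c = 1 := by simpa [hhv] using hunit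
  refine ⟨c • h *ᵥ v, isPivot_of_injective (μ := μ) ?_ hunit (hsign.trans_lt one_pos).ne ?_, ?_⟩
  · intro x y hxy
    simp only [← mulVec_mulVec] at hxy
    exact mulVec_injective_of_isUnit (.of_mul_eq_one _ hhh)
      (hA (mulVec_injective_of_isUnit (.of_mul_eq_one_right _ hgg) hxy))
  · rw [mulVec_smul, mul_mul_transpose_mulVec_mulVec hh, mulVec_smul, transpose_mul, transpose_mul,
      transpose_transpose, ← mulVec_mulVec, ← mulVec_mulVec, mulVec_mulVec _ gᵀ, hgg, one_mulVec,
      hμ, mulVec_smul, smul_comm]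
  · rw [mulVec_smul, mul_mul_transpose_mulVec_mulVec hh, smul_vecMulVec, vecMulVec_smul, smul_smul,
      hcc, one_smul, mul_vecMulVec, vecMulVec_mul, vecMul_transpose]

theorem exists_forall_isPivot (A : Matrix m (Fin (n + 1)) ℝ) :
    ∃ w : m → ℝ, ∀ g ∈ orthogonalGroup m ℝ, ∀ h ∈ orthogonalGroup (Fin (n + 1)) ℝ,
      ∃ u, IsPivot (g * A * hᵀ) u ∧
        vecMulVec ((g * A * hᵀ) *ᵥ u) ((g * A * hᵀ) *ᵥ u) = g * vecMulVec w w * gᵀ := by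
  by_cases hA : Function.Injective A.mulVec
  · obtain ⟨v, μ, hv, hμ⟩ := exists_unit_eigenvector_transpose_mul A
    exact ⟨A *ᵥ v, fun g hg h hh ↦ exists_isPivot_of_injective hA hv hμ hg hh⟩
  · obtain ⟨v, hAv, hv⟩ : ∃ v, A *ᵥ v = 0 ∧ v ≠ 0 := by
      simpa using (injective_iff_map_eq_zero A.mulVecLin).not.1 hA
    refine ⟨0, fun g _ h hh ↦ ?_⟩
    have hne : h *ᵥ v ≠ 0 := fun h0 ↦
      hv (mulVec_injective_of_isUnit (.of_mul_eq_one_right _ ((mem_orthogonalGroup_iff' _ _).1 hh))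
        (h0.trans (mulVec_zero h).symm))
    have hker : (g * A * hᵀ) *ᵥ (h *ᵥ v) = 0 := by
      rw [mul_mul_transpose_mulVec_mulVec hh, hAv, mulVec_zero]
    obtain ⟨u, hu, hBu⟩ := exists_isPivot_mulVec_eq_zero hne hker
    exact ⟨u, hu, by simp [hBu]⟩

end Pivot

section KernelProjection

open Polynomial

variable {m : Type*} [Fintype m] [DecidableEq m]

lemma mul_eq_zero_of_pow_mul_eq_zero_of_isHermitian {M N : Matrix m m ℝ} (hM : M.IsHermitian)
    {e : ℕ} (h : M ^ e * N = 0) : M * N = 0 := by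
  induction e with
  | zero => rw [show N = 0 by simpa using h, Matrix.mul_zero]
  | succ e ih =>
    cases e with
    | zero => simpa using h
    | succ e =>
      refine ih ?_
      rw [pow_succ', Matrix.mul_assoc, ← conjTranspose_mul_self_mul_eq_zero, hM.eq,
        ← Matrix.mul_assoc, Matrix.mul_assoc M M, ← pow_succ', ← pow_succ', h]

lemma aeval_mulVec_of_mulVec_eq_zero {R : Type*} [CommRing R] {M : Matrix m m R} {v : m → R}
    (h : M *ᵥ v = 0) (p : R[X]) : aeval M p *ᵥ v = p.coeff 0 • v := by
  conv_lhs => rw [← divX_mul_X_add p]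
  simp [add_mulVec, ← mulVec_mulVec, h, Algebra.algebraMap_eq_smul_one, smul_mulVec]

theorem exists_mul_aeval_eq_zero_of_aeval_eq_zero {q : ℝ[X]} (hq : q ≠ 0) :
    ∃ p : ℝ[X], p.coeff 0 = 1 ∧
      ∀ M : Matrix m m ℝ, M.IsHermitian → aeval M q = 0 → M * aeval M p = 0 := by
  obtain ⟨p, hqp, hdvd⟩ := exists_eq_pow_rootMultiplicity_mul_and_not_dvd q hq 0
  rw [C_0, sub_zero] at hqp hdvd
  have hp0 : p.coeff 0 ≠ 0 := fun h ↦ hdvd (X_dvd_iff.2 h)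
  refine ⟨C (p.coeff 0)⁻¹ * p, by simp [hp0], fun M hM hMq ↦ ?_⟩
  rw [hqp, map_mul, map_pow, aeval_X] at hMq
  rw [C_mul', map_smul, Matrix.mul_smul, mul_eq_zero_of_pow_mul_eq_zero_of_isHermitian hM hMq,
    smul_zero]

end KernelProjection

section Parametrization

open Polynomial

variable {m : Type*} [Fintype m] {n : ℕ}

lemma contDiff_consCol {T : Type*} [NormedAddCommGroup T] [NormedSpace ℝ T] {r : WithTop ℕ∞}
    {w : T → m → ℝ} {C : T → Matrix m (Fin n) ℝ} (hw : ContDiff ℝ r w) (hC : ContDiff ℝ r C) :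
    ContDiff ℝ r fun t ↦ consCol (w t) (C t) :=
  contDiff_matrix_iff.2 fun i ↦ Fin.cases (contDiff_pi.1 hw i) (contDiff_matrix_iff.1 hC i)

lemma contDiff_chartReflection {r : WithTop ℕ∞} :
    ContDiff ℝ r (chartReflection : (Fin n → ℝ) → Matrix (Fin (n + 1)) (Fin (n + 1)) ℝ) := by
  have hv : ContDiff ℝ r fun z : Fin n → ℝ ↦ (vecCons 1 z : Fin (n + 1) → ℝ) :=
    contDiff_pi.2 (Fin.cases contDiff_const (contDiff_pi.1 contDiff_id))
  have hne (z : Fin n → ℝ) : (vecCons 1 z : Fin (n + 1) → ℝ) ⬝ᵥ vecCons 1 z ≠ 0 := fun h ↦ by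
    simpa using congrFun (dotProduct_self_eq_zero.1 h) 0
  refine contDiff_const.sub (ContDiff.smul (contDiff_const.div (contDiff_dotProduct hv hv) hne) ?_)
  exact contDiff_matrix_iff.2 fun i j ↦ (contDiff_pi.1 hv i).mul (contDiff_pi.1 hv j)

variable [DecidableEq m] {p : ℝ[X]}

/-- The matrix `[p(CCᵀ)x | C]`, reflected in the direction `(1, Cᵀx)`. When `p(CCᵀ)` is the
orthogonal projection onto `ker Cᵀ`, the first column and the direction of reflection are given by
complementary components of `x`, so they can be prescribed independently. -/
noncomputable def parametrization (p : ℝ[X]) (y : Matrix m (Fin n) ℝ × (m → ℝ)) :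
    Matrix m (Fin (n + 1)) ℝ :=
  consCol (aeval (y.1 * y.1ᵀ) p *ᵥ y.2) y.1 * chartReflection (y.1ᵀ *ᵥ y.2)

theorem exists_parametrization_eq (hp0 : p.coeff 0 = 1) {C : Matrix m (Fin n) ℝ}
    (hp : C * Cᵀ * aeval (C * Cᵀ) p = 0) {w : m → ℝ} (hw : Cᵀ *ᵥ w = 0) (x : m → ℝ) :
    ∃ y, parametrization p (C, y) = consCol w C * chartReflection (Cᵀ *ᵥ x) := by
  set P := aeval (C * Cᵀ) p with hP
  have hfix {v : m → ℝ} (hv : Cᵀ *ᵥ v = 0) : P *ᵥ v = v := by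
    rw [hP, aeval_mulVec_of_mulVec_eq_zero (by rw [← mulVec_mulVec, hv, mulVec_zero]), hp0,
      one_smul]
  have hker : Cᵀ *ᵥ (P *ᵥ x) = 0 := by
    refine (self_mul_conjTranspose_mulVec_eq_zero C (P *ᵥ x)).1 ?_
    rw [conjTranspose_eq_transpose_of_trivial, mulVec_mulVec, hp, zero_mulVec]
  have hcol : P *ᵥ (w + (x - P *ᵥ x)) = w := by
    rw [mulVec_add, mulVec_sub, hfix hw, hfix hker, sub_self, add_zero]
  have hdir : Cᵀ *ᵥ (w + (x - P *ᵥ x)) = Cᵀ *ᵥ x := by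
    rw [mulVec_add, mulVec_sub, hw, hker, zero_add, sub_zero]
  exact ⟨w + (x - P *ᵥ x), by rw [parametrization, hcol, hdir]⟩

lemma contDiff_parametrization {r : WithTop ℕ∞} :
    ContDiff ℝ r (parametrization p : Matrix m (Fin n) ℝ × (m → ℝ) → _) := by
  have hCT : ContDiff ℝ r fun y : Matrix m (Fin n) ℝ × (m → ℝ) ↦ y.1ᵀ :=
    contDiff_matrix_transpose contDiff_fst
  have hP := contDiff_matrix_aeval (contDiff_matrix_mul contDiff_fst hCT) p
  exact contDiff_matrix_mul (contDiff_consCol (contDiff_matrix_mulVec hP contDiff_snd) contDiff_fst)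
    (contDiff_chartReflection.comp (contDiff_matrix_mulVec hCT contDiff_snd))

theorem dimH_image_parametrization_le (X : Set (Matrix m (Fin n) ℝ)) :
    dimH (parametrization p '' X ×ˢ Set.univ) ≤ dimH X + Fintype.card m :=
  ((contDiff_parametrization (r := 1)).contDiffOn.dimH_image_le convex_univ
    (Set.subset_univ _)).trans (dimH_prod_univ_pi_le X)

end Parametrization

section GramMatrix

lemma exists_linearIsometry_apply_eq {𝕜 E V : Type*} [RCLike 𝕜] [AddCommGroup E] [Module 𝕜 E]
    [NormedAddCommGroup V] [InnerProductSpace 𝕜 V] [FiniteDimensional 𝕜 V] {f g : E →ₗ[𝕜] V}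
    (hfg : ∀ x, ‖f x‖ = ‖g x‖) : ∃ T : V →ₗᵢ[𝕜] V, ∀ x, T (g x) = f x := by
  have hker : LinearMap.ker g ≤ LinearMap.ker f := fun x hx ↦ by
    rw [LinearMap.mem_ker, ← norm_eq_zero, hfg, LinearMap.mem_ker.1 hx, norm_zero]
  let L : LinearMap.range g →ₗ[𝕜] V :=
    (LinearMap.ker g).liftQ f hker ∘ₗ g.quotKerEquivRange.symm.toLinearMap
  have hL (x : E) : L ⟨g x, LinearMap.mem_range_self g x⟩ = f x := by
    simp only [L, LinearMap.comp_apply, LinearEquiv.coe_coe]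
    rw [LinearMap.quotKerEquivRange_symm_apply_image, Submodule.mkQ_apply, Submodule.liftQ_apply]
  let T : LinearMap.range g →ₗᵢ[𝕜] V := ⟨L, by
    rintro ⟨_, x, rfl⟩
    rw [hL, hfg]
    rfl⟩
  exact ⟨T.extend, fun x ↦ (T.extend_apply ⟨g x, LinearMap.mem_range_self g x⟩).trans (hL x)⟩

variable {m n : Type*} [Fintype n] [DecidableEq n]

theorem exists_eq_mul_transpose_of_mul_transpose_eq [Finite m] {X Y : Matrix m n ℝ}
    (h : X * Xᵀ = Y * Yᵀ) : ∃ U ∈ orthogonalGroup n ℝ, X = Y * Uᵀ := by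
  classical
  have := Fintype.ofFinite m
  have hnorm (Z : Matrix m n ℝ) (x : EuclideanSpace ℝ m) :
      ‖toEuclideanLin Zᵀ x‖ ^ 2 = x ⬝ᵥ (Z * Zᵀ) *ᵥ x := by
    rw [EuclideanSpace.real_norm_sq_eq, ← mulVec_mulVec, dotProduct_mulVec, ← mulVec_transpose,
      dotProduct]
    simp only [toLpLin_apply, sq]
  obtain ⟨T, hT⟩ := exists_linearIsometry_apply_eq (f := toEuclideanLin Xᵀ)
    (g := toEuclideanLin Yᵀ) fun x ↦ by
      rw [← sq_eq_sq₀ (norm_nonneg _) (norm_nonneg _), hnorm, hnorm, h]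
  let b := EuclideanSpace.basisFun n ℝ
  let U := LinearMap.toMatrix b.toBasis b.toBasis T.toLinearMap
  have hU : U * Yᵀ = Xᵀ := by
    refine ext_of_mulVec_single fun i ↦ ?_
    have hcol := LinearMap.toMatrix_mulVec_repr b.toBasis b.toBasis T.toLinearMap
      (toEuclideanLin Yᵀ (EuclideanSpace.single i 1))
    rw [LinearIsometry.coe_toLinearMap, hT] at hcol
    rw [← mulVec_mulVec]
    exact hcol
  refine ⟨U, (T.toLinearIsometryEquiv rfl).toMatrix_mem_unitaryGroup b b, ?_⟩
  rw [← transpose_transpose X, ← hU, transpose_mul, transpose_transpose]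

lemma exists_mem_orthogonalGroup_det_eq_neg_one [Nonempty n] :
    ∃ J ∈ orthogonalGroup n ℝ, J.det = -1 := by
  obtain ⟨i⟩ := ‹Nonempty n›
  refine ⟨diagonal (Function.update 1 i (-1)), ?_, ?_⟩
  · rw [mem_orthogonalGroup_iff, diagonal_transpose, diagonal_mul_diagonal, ← diagonal_one]
    congr 1
    ext j
    rcases eq_or_ne j i with rfl | hj <;> simp [*]
  · simp [det_diagonal, Finset.prod_update_of_mem]

theorem exists_forall_eq_consCol_mul_chartReflection [Fintype m] [DecidableEq m]
    {n : ℕ} (A : Matrix m (Fin (n + 1)) ℝ) :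
    ∃ w : m → ℝ, ∀ g ∈ orthogonalGroup m ℝ, ∀ h ∈ orthogonalGroup (Fin (n + 1)) ℝ,
      ∃ (v : m → ℝ) (C : Matrix m (Fin n) ℝ) (x : m → ℝ),
        g * A * hᵀ = consCol v C * chartReflection (Cᵀ *ᵥ x) ∧ Cᵀ *ᵥ v = 0 ∧
        C * Cᵀ = g * (A * Aᵀ - vecMulVec w w) * gᵀ := by
  obtain ⟨w, hw⟩ := exists_forall_isPivot A
  refine ⟨w, fun g hg h hh ↦ ?_⟩
  have hhh : hᵀ * h = 1 := (mem_orthogonalGroup_iff' _ _).1 hh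
  have hgram : g * A * hᵀ * (g * A * hᵀ)ᵀ = g * (A * Aᵀ) * gᵀ := by
    simp only [transpose_mul, transpose_transpose, Matrix.mul_assoc]
    rw [← Matrix.mul_assoc hᵀ h, hhh, Matrix.one_mul]
  obtain ⟨u, hu, hwu⟩ := hw g hg h hh
  obtain ⟨C, x, heq, hker, hC⟩ := hu.exists_eq
  refine ⟨_, C, x, heq, hker, ?_⟩
  rw [Matrix.mul_sub, Matrix.sub_mul, ← hwu, ← hgram, ← hC, add_sub_cancel_left]

end GramMatrix

section Orbits

variable {k n : ℕ} {G : Subgroup (orthogonalGroup (Fin k) ℝ)}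

/-- The matrices whose Gram matrix of rows is a `G`-conjugate of that of `A`. This is the orbit of
`A` under `G × O(n)`, hence a union of at most two orbits of `G × SO(n)`. -/
def gramOrbit (G : Subgroup (orthogonalGroup (Fin k) ℝ)) (A : Matrix (Fin k) (Fin n) ℝ) :
    Set (Matrix (Fin k) (Fin n) ℝ) :=
  {C | ∃ g ∈ G, C * Cᵀ = (g : Matrix (Fin k) (Fin k) ℝ) * (A * Aᵀ) *
    (g : Matrix (Fin k) (Fin k) ℝ)ᵀ}

lemma gramOrbit_subset (A : Matrix (Fin k) (Fin n) ℝ) {J : Matrix (Fin n) (Fin n) ℝ}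
    (hJ : J ∈ orthogonalGroup (Fin n) ℝ) (hdet : J.det = -1) :
    gramOrbit G A ⊆ orbit9 G A ∪ orbit9 G (A * J) := by
  rintro C ⟨g, hg, hC⟩
  obtain ⟨U, hU, rfl⟩ := exists_eq_mul_transpose_of_mul_transpose_eq (X := C)
    (Y := (g : Matrix (Fin k) (Fin k) ℝ) * A)
    (by simpa only [transpose_mul, Matrix.mul_assoc] using hC)
  have hUdet : U.det * U.det = 1 := by
    simpa using congrArg det ((mem_orthogonalGroup_iff _ _).1 hU)
  rcases mul_self_eq_one_iff.1 hUdet with h | h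
  · exact .inl ⟨g, hg, U, mem_specialOrthogonalGroup_iff.2 ⟨hU, h⟩, rfl⟩
  · have hJJ : J * Jᵀ = 1 := (mem_orthogonalGroup_iff _ _).1 hJ
    refine .inr ⟨g, hg, U * J, mem_specialOrthogonalGroup_iff.2 ⟨mul_mem hU hJ, ?_⟩, ?_⟩
    · rw [det_mul, h, hdet, neg_one_mul, neg_neg]
    · simp only [transpose_mul, Matrix.mul_assoc]
      rw [← Matrix.mul_assoc J, hJJ, Matrix.one_mul]

lemma dimH_gramOrbit_le (hn : n ≠ 0) (A : Matrix (Fin k) (Fin n) ℝ) :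
    dimH (gramOrbit G A) ≤ sSup {d | ∃ A : Matrix (Fin k) (Fin n) ℝ, d = dimH (orbit9 G A)} := by
  have : NeZero n := ⟨hn⟩
  obtain ⟨J, hJ, hdet⟩ := exists_mem_orthogonalGroup_det_eq_neg_one (n := Fin n)
  refine (dimH_mono (gramOrbit_subset A hJ hdet)).trans ?_
  rw [dimH_union]
  exact max_le (le_sSup ⟨A, rfl⟩) (le_sSup ⟨A * J, rfl⟩)

theorem exists_orbit9_subset_image_parametrization (A : Matrix (Fin k) (Fin (n + 1)) ℝ) :
    ∃ (A' : Matrix (Fin k) (Fin n) ℝ) (p : Polynomial ℝ),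
      orbit9 G A ⊆ parametrization p '' gramOrbit G A' ×ˢ Set.univ := by
  obtain ⟨w, hw⟩ := exists_forall_eq_consCol_mul_chartReflection A
  obtain ⟨_, A', _, -, -, hA'⟩ := hw 1 (one_mem _) 1 (one_mem _)
  replace hA' : A' * A'ᵀ = A * Aᵀ - vecMulVec w w := by simpa using hA'
  obtain ⟨p, hp0, hp⟩ := exists_mul_aeval_eq_zero_of_aeval_eq_zero (m := Fin k)
    (charpoly_monic (A' * A'ᵀ)).ne_zero
  refine ⟨A', p, ?_⟩
  rintro _ ⟨g, hg, h, hh, rfl⟩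
  obtain ⟨v, C, x, heq, hker, hC⟩ := hw g g.2 h (mem_specialOrthogonalGroup_iff.1 hh).1
  rw [← hA'] at hC
  have hcharpoly : (C * Cᵀ).charpoly = (A' * A'ᵀ).charpoly := by
    have hgg : (g : Matrix (Fin k) (Fin k) ℝ)ᵀ * g = 1 := (mem_orthogonalGroup_iff' _ _).1 g.2
    rw [hC, charpoly_mul_comm, ← Matrix.mul_assoc, hgg, Matrix.one_mul]
  have hproj := hp (C * Cᵀ) (isHermitian_mul_conjTranspose_self C)
    (hcharpoly ▸ aeval_self_charpoly _)
  obtain ⟨y, hy⟩ := exists_parametrization_eq hp0 hproj hker x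
  exact ⟨(C, y), ⟨⟨g, hg, hC⟩, trivial⟩, hy.trans heq.symm⟩

theorem dimH_orbit9_succ_le (hn : n ≠ 0) (A : Matrix (Fin k) (Fin (n + 1)) ℝ) :
    dimH (orbit9 G A) ≤
      sSup {d | ∃ A : Matrix (Fin k) (Fin n) ℝ, d = dimH (orbit9 G A)} + k := by
  obtain ⟨A', p, hA'⟩ := exists_orbit9_subset_image_parametrization (G := G) A
  calc
    _ ≤ dimH (parametrization p '' gramOrbit G A' ×ˢ Set.univ) := dimH_mono hA'
    _ ≤ dimH (gramOrbit G A') + k := by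
      simpa only [Fintype.card_fin] using dimH_image_parametrization_le (gramOrbit G A')
    _ ≤ _ := by gcongr; exact dimH_gramOrbit_le hn A'

end Orbits

theorem stmt9_general (k : ℕ) (G : Subgroup (orthogonalGroup (Fin k) ℝ)) :
    Monotone (cohom9 k G) := by
  refine monotone_nat_of_le_succ fun n ↦ ?_
  rcases eq_or_ne n 0 with rfl | hn
  · simp [cohom9]
  have hsup : sSup {d | ∃ A : Matrix (Fin k) (Fin (n + 1)) ℝ, d = dimH (orbit9 G A)} ≤
      sSup {d | ∃ A : Matrix (Fin k) (Fin n) ℝ, d = dimH (orbit9 G A)} + k :=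
    sSup_le fun _ ⟨A, hA⟩ ↦ hA.trans_le (dimH_orbit9_succ_le hn A)
  calc
    _ = ((k * n : ℕ) + k : ℝ≥0∞) -
        (sSup {d | ∃ A : Matrix (Fin k) (Fin n) ℝ, d = dimH (orbit9 G A)} + k) :=
      (ENNReal.add_sub_add_eq_sub_right (natCast_ne_top k)).symm
    _ ≤ cohom9 k G (n + 1) := by
      rw [cohom9, mul_add_one, Nat.cast_add]
      exact tsub_le_tsub_left hsup _

theorem stmt9 (k : ℕ) (hk : 1 ≤ k)
    (G : Subgroup (Matrix.orthogonalGroup (Fin k) ℝ))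
    (hG : IsClosed {M : Matrix (Fin k) (Fin k) ℝ | ∃ g ∈ G, M = g}) :
    ∀ n : ℕ, 1 ≤ n → cohom9 k G n ≤ cohom9 k G (n + 1) :=
  fun n _ ↦ stmt9_general k G n.le_succ
end

section
/- (Monotonicity Lemma, complex case.) Let k ≥ 1 and let G be a compact (closed) subgroup of the unitary group U(k). For each n ≥ 1, let c(n) denote the cohomogeneity of the action of G × U(n) on Matrix (Fin k) (Fin n) ℂ given by (g,h)·A = g A h*, i.e. c(n) = 2kn minus the supremum over A of the Hausdorff dimension of the orbit of A. Then c(n) ≤ c(n+1) for all n ≥ 1. -/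
open Matrix ENNReal

attribute [local instance] Matrix.normedAddCommGroup

/-- The orbit of `A` under the action `(g,h)·A = g A h*` of `G × U(n)` on `k × n`
complex matrices, for a subgroup `G` of `U(k)`. -/
def orbit10 {k n : ℕ} (G : Subgroup (Matrix.unitaryGroup (Fin k) ℂ))
    (A : Matrix (Fin k) (Fin n) ℂ) : Set (Matrix (Fin k) (Fin n) ℂ) :=
  {B | ∃ g ∈ G, ∃ h ∈ Matrix.unitaryGroup (Fin n) ℂ,
    B = (g : Matrix (Fin k) (Fin k) ℂ) * A * (h : Matrix (Fin n) (Fin n) ℂ)ᴴ}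

/-- The cohomogeneity of the action of `G × U(n)` on `k × n` complex matrices: the real
dimension `2·k·n` minus the supremum of the Hausdorff dimensions of the orbits. -/
noncomputable def cohom10 (k : ℕ) (G : Subgroup (Matrix.unitaryGroup (Fin k) ℂ))
    (n : ℕ) : ℝ≥0∞ :=
  (2 * k * n : ℕ) - sSup {d : ℝ≥0∞ | ∃ A : Matrix (Fin k) (Fin n) ℂ, d = dimH (orbit10 G A)}

/-!
The dimension of an orbit is that of its tangent space `T_A = 𝔤 A + A 𝔲(n)`, so it suffices to
find, for each `A` with `n + 1` columns, a matrix `B` with `n` columns such that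
`dim T_A ≤ 2 k + dim T_B`. Moving `A` within its orbit by `U(n + 1)`, make its columns orthogonal,
and let `B` be `A` without one column `v`: a zero column if there is one, any column otherwise. The
`v`-columns of tangent vectors contribute at most `2 k` dimensions. If the `v`-column of
`X A + A Y*` vanishes, skew-symmetry of `X` and `Y` and orthogonality of the columns show that the
part of `X A + A Y*` not yet in `T_B`, namely `v y*` with `y` the entries of `Y` coupling `v` to
`B`, is a linear function of the tangent vector `X B + B Y'*` of `T_B`, where `Y'` is the block of
`Y` belonging to `B`. Hence these tangent vectors span at most `dim T_B` dimensions.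
-/

section Exponential

open Filter Topology

variable {E : Type*} [NormedRing E] [NormedAlgebra ℝ E] [CompleteSpace E]

/-- The exponential of a real Banach algebra as a map into its group of units. -/
noncomputable def expUnit (X : E) : Eˣ :=
  letI : NormedAlgebra ℚ E := .restrictScalars ℚ ℝ E
  { val := NormedSpace.exp X
    inv := NormedSpace.exp (-X)
    val_inv := by
      rw [← NormedSpace.exp_add_of_commute (Commute.neg_right (.refl X)), add_neg_cancel,
        NormedSpace.exp_zero]
    inv_val := by
      rw [← NormedSpace.exp_add_of_commute (Commute.neg_left (.refl X)), neg_add_cancel,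
        NormedSpace.exp_zero] }

@[simp]
lemma val_expUnit (X : E) : (expUnit X : E) = NormedSpace.exp X := rfl

@[simp]
lemma expUnit_zero : expUnit (0 : E) = 1 := Units.ext NormedSpace.exp_zero

lemma expUnit_neg (X : E) : expUnit (-X) = (expUnit X)⁻¹ := Units.ext rfl

lemma expUnit_zsmul (z : ℤ) (X : E) : expUnit (z • X) = expUnit X ^ z := by
  let _ : NormedAlgebra ℚ E := .restrictScalars ℚ ℝ E
  have expUnit_nsmul (n : ℕ) : expUnit (n • X) = expUnit X ^ n :=
    Units.ext (by simpa using NormedSpace.exp_nsmul n X)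
  obtain ⟨n, rfl | rfl⟩ := z.eq_nat_or_neg
  · rw [natCast_zsmul, zpow_natCast, expUnit_nsmul]
  · rw [neg_smul, expUnit_neg, natCast_zsmul, expUnit_nsmul, _root_.zpow_neg, zpow_natCast]

lemma continuous_expUnit : Continuous (expUnit : E → Eˣ) :=
  letI : NormedAlgebra ℚ E := .restrictScalars ℚ ℝ E
  Units.continuous_iff.2
    ⟨NormedSpace.exp_continuous, NormedSpace.exp_continuous.comp continuous_neg⟩

lemma hasDerivAt_exp_smul_zero (X : E) :
    HasDerivAt (fun t : ℝ => NormedSpace.exp (t • X)) X 0 := by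
  simpa using hasDerivAt_exp_smul_const (𝕂 := ℝ) X (0 : ℝ)

lemma hasStrictFDerivAt_exp_comp_zero {F : Type*} [NormedAddCommGroup F] [NormedSpace ℝ F]
    (L : F →L[ℝ] E) : HasStrictFDerivAt (fun x => NormedSpace.exp (L x)) L 0 := by
  have h_exp : HasStrictFDerivAt (NormedSpace.exp : E → E) (1 : E →L[ℝ] E) (L 0) := by
    simpa using hasStrictFDerivAt_exp_zero (𝕂 := ℝ) (𝔸 := E)
  exact h_exp.comp 0 L.hasStrictFDerivAt

lemma exists_log_near_one : ∃ log : E → E, log 1 = 0 ∧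
    HasFDerivAt log (ContinuousLinearMap.id ℝ E) 1 ∧
    ∀ᶠ g : Eˣ in 𝓝 1, expUnit (log g) = g := by
  have h_exp : HasStrictFDerivAt (NormedSpace.exp : E → E)
      ((ContinuousLinearEquiv.refl ℝ E : E ≃L[ℝ] E) : E →L[ℝ] E) 0 :=
    hasStrictFDerivAt_exp_zero (𝕂 := ℝ)
  have h_inv := h_exp.eventually_right_inverse
  have h_deriv := h_exp.to_localInverse.hasFDerivAt
  have h_one := h_exp.localInverse_apply_image
  rw [NormedSpace.exp_zero] at h_inv h_deriv h_one
  exact ⟨_, h_one, h_deriv,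
    ((Units.continuous_val.tendsto 1).eventually h_inv).mono fun g hg => Units.ext hg⟩

end Exponential

section LieSpace

open Filter Topology

lemma tendsto_floor_zsmul {ι F : Type*} [NormedAddCommGroup F] [NormedSpace ℝ F] {l : Filter ι}
    {c : ι → ℝ} {x : ι → F} {z : F} (hx : Tendsto x l (𝓝 0))
    (hcx : Tendsto (fun i => c i • x i) l (𝓝 z)) :
    Tendsto (fun i => ⌊c i⌋ • x i) l (𝓝 z) := by
  have h_fract : Tendsto (fun i => Int.fract (c i) • x i) l (𝓝 0) := by
    refine squeeze_zero_norm (fun i => ?_) (by simpa using hx.norm)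
    rw [norm_smul, Real.norm_of_nonneg (Int.fract_nonneg _)]
    exact mul_le_of_le_one_left (norm_nonneg _) (Int.fract_lt_one _).le
  simpa [← sub_smul, Int.self_sub_fract, Int.cast_smul_eq_zsmul] using hcx.sub h_fract

variable {E : Type*} [NormedRing E] [NormedAlgebra ℝ E] [CompleteSpace E]

lemma expUnit_mem_of_tendsto (G : ClosedSubgroup Eˣ) {ι : Type*} {l : Filter ι} [l.NeBot]
    {g : ι → Eˣ} {c : ι → ℝ} {Z : E} (hgG : ∀ i, g i ∈ G) (hg : Tendsto g l (𝓝 1))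
    (hZ : Tendsto (fun i => c i • ((g i : E) - 1)) l (𝓝 Z)) : expUnit Z ∈ G := by
  obtain ⟨log, log_one, h_deriv, h_log⟩ := exists_log_near_one (E := E)
  have hg_val : Tendsto (fun i => (g i : E)) l (𝓝 1) := (Units.continuous_val.tendsto 1).comp hg
  have h_log_zero : Tendsto (fun i => log (g i)) l (𝓝 0) := by
    simpa only [log_one, Function.comp_def] using h_deriv.continuousAt.tendsto.comp hg_val
  have h_smul_log : Tendsto (fun i => c i • log (g i)) l (𝓝 Z) := by
    simpa [log_one] using (hasFDerivWithinAt_univ.2 h_deriv).lim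
      (by simpa using hg_val.sub_const 1) (.of_forall fun _ => Set.mem_univ _) hZ
  -- `g i ^ ⌊c i⌋ = exp (⌊c i⌋ • log (g i))` tends to `exp Z`.
  refine G.isClosed'.mem_of_tendsto
    ((continuous_expUnit.tendsto Z).comp (tendsto_floor_zsmul h_log_zero h_smul_log)) ?_
  filter_upwards [hg.eventually h_log] with i hi
  rw [Function.comp_apply, expUnit_zsmul, hi]
  exact zpow_mem (hgG i) _

/-- The Lie algebra of a closed subgroup of the unit group of a real Banach algebra, regarded
only as a real vector space: the generators of the one-parameter subgroups of `G`. -/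
def lieSpace (G : ClosedSubgroup Eˣ) : Submodule ℝ E where
  carrier := {X | ∀ t : ℝ, expUnit (t • X) ∈ G}
  zero_mem' t := by simp
  smul_mem' c X hX t := by simpa only [smul_smul] using hX (t * c)
  add_mem' {X Y} hX hY t := by
    have h_deriv : HasDerivAt (fun s : ℝ => (expUnit (s • X) * expUnit (s • Y) : E)) (X + Y) 0 :=
      ((hasDerivAt_exp_smul_zero X).mul (hasDerivAt_exp_smul_zero Y)).congr_deriv (by simp)
    have h_cont : Continuous fun s : ℝ => expUnit (s • X) * expUnit (s • Y) := by
      have := continuous_expUnit (E := E)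
      fun_prop
    refine expUnit_mem_of_tendsto G (l := 𝓝[≠] (0 : ℝ)) (c := fun s => t * s⁻¹)
      (fun s => mul_mem (hX s) (hY s)) ?_ ?_
    · simpa using (h_cont.tendsto 0).mono_left nhdsWithin_le_nhds
    · simpa [smul_smul] using h_deriv.tendsto_slope_zero.const_smul t

lemma mem_lieSpace {G : ClosedSubgroup Eˣ} {X : E} :
    X ∈ lieSpace G ↔ ∀ t : ℝ, expUnit (t • X) ∈ G := Iff.rfl

lemma expUnit_mem_of_mem_lieSpace {G : ClosedSubgroup Eˣ} {X : E} (hX : X ∈ lieSpace G) :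
    expUnit X ∈ G := by simpa using hX 1

lemma mem_lieSpace_of_tendsto {G : ClosedSubgroup Eˣ} {ι : Type*} {l : Filter ι} [l.NeBot]
    {z : ι → E} {c : ι → ℝ} {Z : E} (hzG : ∀ i, expUnit (z i) ∈ G) (hz : Tendsto z l (𝓝 0))
    (hZ : Tendsto (fun i => c i • z i) l (𝓝 Z)) : Z ∈ lieSpace G := by
  intro t
  refine expUnit_mem_of_tendsto G (l := l) (c := fun i => t * c i) hzG ?_ ?_
  · simpa [Function.comp_def] using (continuous_expUnit.tendsto (0 : E)).comp hz
  · have h_exp : HasFDerivAt (NormedSpace.exp : E → E) (1 : E →L[ℝ] E) 0 :=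
      hasFDerivAt_exp_zero (𝕂 := ℝ)
    simpa [smul_smul] using ((hasFDerivWithinAt_univ.2 h_exp).lim hz
      (.of_forall fun _ => Set.mem_univ _) hZ).const_smul t

lemma eventually_expUnit_mem_imp_eq_zero {G : ClosedSubgroup Eˣ} {q : Submodule ℝ E}
    [FiniteDimensional ℝ q] (hq : Disjoint (lieSpace G) q) :
    ∀ᶠ Z : q in 𝓝 0, expUnit (Z : E) ∈ G → Z = 0 := by
  by_contra h_freq
  obtain ⟨z, hz_zero, hz⟩ := exists_seq_forall_of_frequently (not_eventually.1 h_freq)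
  push Not at hz
  have h_sphere (n : ℕ) : ‖z n‖⁻¹ • z n ∈ Metric.sphere (0 : q) 1 := by
    rw [mem_sphere_zero_iff_norm, norm_smul, norm_inv, norm_norm,
      inv_mul_cancel₀ (norm_ne_zero_iff.2 (hz n).2)]
  obtain ⟨w, hw, φ, hφ, h_lim⟩ := (isCompact_sphere (0 : q) 1).tendsto_subseq h_sphere
  have h_val : Continuous (Subtype.val : q → E) := continuous_subtype_val
  have hw_mem : (w : E) ∈ lieSpace G :=
    mem_lieSpace_of_tendsto (z := fun n => (z (φ n) : E)) (fun n => (hz (φ n)).1)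
      ((h_val.tendsto 0).comp (hz_zero.comp hφ.tendsto_atTop)) ((h_val.tendsto w).comp h_lim)
  have hw_zero : w = 0 := Subtype.ext (Submodule.disjoint_def.1 hq _ hw_mem w.2)
  simp [hw_zero] at hw

lemma nhds_one_le_map_expUnit_mul [FiniteDimensional ℝ E] {m s q : Submodule ℝ E}
    (h_top : m ⊔ s ⊔ q = ⊤) :
    𝓝 (1 : Eˣ) ≤ Filter.map (fun x : m × s × q =>
      expUnit (x.1 : E) * expUnit (x.2.1 : E) * expUnit (x.2.2 : E)) (𝓝 0) := by
  let fst : m × s × q →L[ℝ] E := m.subtypeL ∘L .fst ℝ m (s × q)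
  let snd : m × s × q →L[ℝ] E := s.subtypeL ∘L .fst ℝ s q ∘L .snd ℝ m (s × q)
  let thd : m × s × q →L[ℝ] E := q.subtypeL ∘L .snd ℝ s q ∘L .snd ℝ m (s × q)
  have h_deriv := ((hasStrictFDerivAt_exp_comp_zero fst).mul'
    (hasStrictFDerivAt_exp_comp_zero snd)).mul' (hasStrictFDerivAt_exp_comp_zero thd)
  have h_nhds := h_deriv.map_nhds_eq_of_surj <| by
    rw [LinearMap.range_eq_top]
    intro x
    obtain ⟨y, hy, c, hc, rfl⟩ := Submodule.mem_sup.1 (h_top ▸ Submodule.mem_top (x := x))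
    obtain ⟨a, ha, b, hb, rfl⟩ := Submodule.mem_sup.1 hy
    refine ⟨(⟨a, ha⟩, ⟨b, hb⟩, ⟨c, hc⟩), ?_⟩
    simp [fst, snd, thd]
    abel
  have h_val : Filter.map Units.val (Filter.map (fun x : m × s × q =>
      expUnit (x.1 : E) * expUnit (x.2.1 : E) * expUnit (x.2.2 : E)) (𝓝 0)) = 𝓝 1 := by
    simpa [fst, snd, thd, Filter.map_map, Function.comp_def, Pi.mul_def] using h_nhds
  rw [Units.isOpenEmbedding_val.nhds_eq_comap, Units.val_one, ← h_val,
    Filter.comap_map Units.val_injective]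

lemma eventually_mem_imp_eq_expUnit_mul [FiniteDimensional ℝ E] {G : ClosedSubgroup Eˣ}
    {m s : Submodule ℝ E} (h : lieSpace G = m ⊔ s) :
    ∀ᶠ g : Eˣ in 𝓝 1, g ∈ G → ∃ X ∈ m, ∃ Y ∈ s, g = expUnit X * expUnit Y := by
  obtain ⟨q, hq⟩ := (lieSpace G).exists_isCompl
  have h_transversal : ∀ᶠ x : m × s × q in 𝓝 0, expUnit (x.2.2 : E) ∈ G → x.2.2 = 0 :=
    ((continuous_snd.comp continuous_snd).tendsto (0 : m × s × q)).eventually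
      (eventually_expUnit_mem_imp_eq_zero hq.disjoint)
  have h_nhds := nhds_one_le_map_expUnit_mul (h ▸ hq.sup_eq_top) (image_mem_map h_transversal)
  filter_upwards [h_nhds]
  rintro _ ⟨⟨X, Y, Z⟩, hZ, rfl⟩ hXYZ
  have hXY : expUnit (X : E) * expUnit (Y : E) ∈ G :=
    mul_mem (expUnit_mem_of_mem_lieSpace (h ▸ Submodule.mem_sup_left X.2))
      (expUnit_mem_of_mem_lieSpace (h ▸ Submodule.mem_sup_right Y.2))
  have hZ_zero : Z = 0 := hZ ((mul_mem_cancel_left hXY).1 hXYZ)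
  exact ⟨X, X.2, Y, Y.2, by simp [hZ_zero]⟩

end LieSpace

section OrbitDimension

open Filter Topology

lemma exists_sup_eq_and_le_ker {K V V₂ : Type*} [DivisionRing K] [AddCommGroup V] [Module K V]
    [AddCommGroup V₂] [Module K V₂] (P : Submodule K V) [FiniteDimensional K P] (L : V →ₗ[K] V₂) :
    ∃ m s : Submodule K V, P = m ⊔ s ∧ s ≤ LinearMap.ker L ∧
      Module.finrank K m ≤ Module.finrank K (P.map L) := by
  obtain ⟨σ, hσ⟩ := (L.submoduleMap P).exists_rightInverse_of_surjective
    (LinearMap.range_eq_top.2 (L.submoduleMap_surjective P))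
  have hσ_apply (y : P.map L) : L (σ y) = y := congrArg Subtype.val (LinearMap.congr_fun hσ y)
  refine ⟨LinearMap.range (P.subtype ∘ₗ σ), P ⊓ LinearMap.ker L, le_antisymm ?_ (sup_le ?_ ?_),
    inf_le_right, LinearMap.finrank_range_le _⟩
  · intro x hx
    let y : P.map L := ⟨L x, x, hx, rfl⟩
    refine Submodule.mem_sup.2 ⟨σ y, ⟨y, rfl⟩, x - σ y, ⟨P.sub_mem hx (σ y).2, ?_⟩, by abel⟩
    simp [y, hσ_apply]
  · rintro _ ⟨y, rfl⟩
    exact (σ y).2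
  · exact inf_le_left

variable {E W : Type*} [NormedRing E] [NormedAlgebra ℝ E] [NormedAddCommGroup W] [NormedSpace ℝ W]

lemma map_exp_apply_eq_self [CompleteSpace E] {ρ : E →* (W →L[ℝ] W)} {w : W} {f' : E →L[ℝ] W}
    (hf' : HasFDerivAt (fun x => ρ x w) f' 1) {Y : E} (hY : f' Y = 0) :
    ρ (NormedSpace.exp Y) w = w := by
  let _ : NormedAlgebra ℚ E := .restrictScalars ℚ ℝ E
  let γ : ℝ → W := fun t => ρ (NormedSpace.exp (t • Y)) w
  have hγ_zero : HasDerivAt γ 0 0 := by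
    have hf'_exp : HasFDerivAt (fun x => ρ x w) f' (NormedSpace.exp ((0 : ℝ) • Y)) := by
      simpa using hf'
    exact (hf'_exp.comp_hasDerivAt 0 (hasDerivAt_exp_smul_zero Y)).congr_deriv hY
  have hγ_add (s t : ℝ) : γ s = ρ (NormedSpace.exp (t • Y)) (γ (s - t)) := by
    have h_comm : Commute (t • Y) ((s - t) • Y) := ((Commute.refl Y).smul_left _).smul_right _
    simp only [γ, ← mul_apply_eq_comp, ← map_mul,
      ← NormedSpace.exp_add_of_commute h_comm, ← add_smul, add_sub_cancel]
  have hγ (t : ℝ) : HasDerivAt γ 0 t := by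
    have h_shift : HasDerivAt (fun s => γ (s - t)) 0 t :=
      HasDerivAt.comp_sub_const t t (by rwa [sub_self])
    simpa only [Function.comp_def, ← hγ_add, map_zero] using
      (ρ (NormedSpace.exp (t • Y))).hasFDerivAt.comp_hasDerivAt t h_shift
  simpa [γ] using
    is_const_of_deriv_eq_zero (fun t => (hγ t).differentiableAt) (fun t => (hγ t).deriv) 1 0

variable [FiniteDimensional ℝ E] {G : ClosedSubgroup Eˣ}

lemma le_dimH_image_closedSubgroup [CompleteSpace E] {f : E → W} {f' : E →L[ℝ] W}
    (hf : HasStrictFDerivAt f f' 1) :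
    (Module.finrank ℝ ((lieSpace G).map (f' : E →ₗ[ℝ] W)) : ℝ≥0∞) ≤
      dimH ((fun g : Eˣ => f g) '' G) := by
  set R := (lieSpace G).map (f' : E →ₗ[ℝ] W)
  obtain ⟨π, hπ⟩ := Submodule.ClosedComplemented.of_finiteDimensional R
  let F : lieSpace G → R := fun X => π (f (expUnit (X : E)))
  have hF : HasStrictFDerivAt F ((π ∘L f') ∘L (lieSpace G).subtypeL) 0 := by
    have hf_exp : HasStrictFDerivAt f f' (NormedSpace.exp ((lieSpace G).subtypeL 0)) := by
      simpa using hf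
    exact (π.hasStrictFDerivAt.comp _ hf_exp).comp 0
      (hasStrictFDerivAt_exp_comp_zero (lieSpace G).subtypeL)
  have h_surj : ((π ∘L f') ∘L (lieSpace G).subtypeL).range = ⊤ := by
    rw [LinearMap.range_eq_top]
    rintro ⟨_, X, hX, rfl⟩
    exact ⟨⟨X, hX⟩, hπ ⟨f' X, X, hX, rfl⟩⟩
  have h_range : Set.range F ∈ 𝓝 (F 0) := by
    rw [← hF.map_nhds_eq_of_surj h_surj]
    exact range_mem_map
  have h_subset : Set.range F ⊆ π '' ((fun g : Eˣ => f g) '' G) := by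
    rintro _ ⟨X, rfl⟩
    exact ⟨_, ⟨_, expUnit_mem_of_mem_lieSpace X.2, rfl⟩, rfl⟩
  calc (Module.finrank ℝ R : ℝ≥0∞) = dimH (Set.range F) := (Real.dimH_of_mem_nhds h_range).symm
    _ ≤ dimH (π '' ((fun g : Eˣ => f g) '' G)) := dimH_mono h_subset
    _ ≤ dimH ((fun g : Eˣ => f g) '' G) := π.lipschitz.dimH_image_le _

lemma exists_countable_cover_expUnit_mul [CompleteSpace E] {m s : Submodule ℝ E}
    (h : lieSpace G = m ⊔ s) :
    ∃ T : Set Eˣ, T.Countable ∧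
      ∀ g ∈ G, ∃ x ∈ T, ∃ X ∈ m, ∃ Y ∈ s, g = x * (expUnit X * expUnit Y) := by
  have := FiniteDimensional.proper ℝ E
  have : SecondCountableTopology Eˣ :=
    Units.isOpenEmbedding_val.toIsEmbedding.secondCountableTopology
  let N : Eˣ → Set Eˣ := fun x =>
    {g | x⁻¹ * g ∈ G → ∃ X ∈ m, ∃ Y ∈ s, x⁻¹ * g = expUnit X * expUnit Y}
  have hN (x : Eˣ) : N x ∈ 𝓝 x := by
    have h_tendsto : Tendsto (fun g => x⁻¹ * g) (𝓝 x) (𝓝 1) := by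
      simpa using (continuous_const_mul x⁻¹).tendsto x
    exact h_tendsto.eventually (eventually_mem_imp_eq_expUnit_mul h)
  obtain ⟨T, hTG, hT, h_cover⟩ := TopologicalSpace.countable_cover_nhdsWithin (s := (G : Set Eˣ))
    fun x _ => mem_nhdsWithin_of_mem_nhds (hN x)
  refine ⟨T, hT, fun g hg => ?_⟩
  obtain ⟨x, hx, hgx⟩ := Set.mem_iUnion₂.1 (h_cover hg)
  obtain ⟨X, hX, Y, hY, h_eq⟩ := hgx (mul_mem (inv_mem (hTG hx)) hg)
  exact ⟨x, hx, X, hX, Y, hY, inv_mul_eq_iff_eq_mul.1 h_eq⟩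

lemma dimH_orbit_le [CompleteSpace E] {ρ : E →* (W →L[ℝ] W)} {w : W} {f' : E →L[ℝ] W}
    (hρ : ContDiff ℝ 1 fun x => ρ x w) (hf' : HasFDerivAt (fun x => ρ x w) f' 1) :
    dimH ((fun g : Eˣ => ρ g w) '' G) ≤
      Module.finrank ℝ ((lieSpace G).map (f' : E →ₗ[ℝ] W)) := by
  obtain ⟨m, s, h_sup, hs, hm⟩ := exists_sup_eq_and_le_ker (lieSpace G) (f' : E →ₗ[ℝ] W)
  obtain ⟨T, hT, h_cover⟩ := exists_countable_cover_expUnit_mul h_sup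
  let F : m → W := fun X => ρ (NormedSpace.exp (X : E)) w
  have hF : ContDiff ℝ 1 F := by
    have h_exp : ContDiff ℝ 1 (NormedSpace.exp : E → E) :=
      contDiff_iff_contDiffAt.2 fun x => (NormedSpace.exp_analytic (𝕂 := ℝ) x).contDiffAt
    exact hρ.comp (h_exp.comp m.subtypeL.contDiff)
  have h_subset : (fun g : Eˣ => ρ g w) '' G ⊆ ⋃ x ∈ T, ρ (x : E) '' Set.range F := by
    rintro _ ⟨g, hg, rfl⟩
    obtain ⟨x, hx, X, hX, Y, hY, rfl⟩ := h_cover g hg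
    refine Set.mem_iUnion₂.2 ⟨x, hx, F ⟨X, hX⟩, ⟨_, rfl⟩, ?_⟩
    simp [F, map_exp_apply_eq_self hf' (hs hY)]
  calc dimH ((fun g : Eˣ => ρ g w) '' G)
      ≤ ⨆ x ∈ T, dimH (ρ (x : E) '' Set.range F) := (dimH_mono h_subset).trans_eq (dimH_bUnion hT _)
    _ ≤ dimH (Set.range F) := iSup₂_le fun x _ => (ρ (x : E)).lipschitz.dimH_image_le _
    _ ≤ Module.finrank ℝ m := hF.dimH_range_le
    _ ≤ Module.finrank ℝ ((lieSpace G).map (f' : E →ₗ[ℝ] W)) := by exact_mod_cast hm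

theorem dimH_orbit_eq_finrank [CompleteSpace E] {ρ : E →* (W →L[ℝ] W)} {w : W} {f' : E →L[ℝ] W}
    (hρ : ContDiff ℝ 1 fun x => ρ x w) (hf' : HasFDerivAt (fun x => ρ x w) f' 1) :
    dimH ((fun g : Eˣ => ρ g w) '' G) =
      Module.finrank ℝ ((lieSpace G).map (f' : E →ₗ[ℝ] W)) :=
  (dimH_orbit_le hρ hf').antisymm
    (le_dimH_image_closedSubgroup (hρ.contDiffAt.hasStrictFDerivAt' hf' one_ne_zero))

end OrbitDimension

section ProductsAndUnitary

section Monoid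

variable {M N : Type*} [Monoid M] [TopologicalSpace M] [Monoid N] [TopologicalSpace N]

/-- The product of two closed subgroups of unit groups, inside the unit group of the product
monoid. -/
def prodClosedSubgroup (G : ClosedSubgroup Mˣ) (H : ClosedSubgroup Nˣ) :
    ClosedSubgroup (M × N)ˣ where
  toSubgroup := (G.toSubgroup.prod H.toSubgroup).comap MulEquiv.prodUnits.toMonoidHom
  isClosed' := (G.isClosed'.prod H.isClosed').preimage Homeomorph.prodUnits.continuous

lemma mem_prodClosedSubgroup {G : ClosedSubgroup Mˣ} {H : ClosedSubgroup Nˣ} {u : (M × N)ˣ} :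
    u ∈ prodClosedSubgroup G H ↔
      (MulEquiv.prodUnits u).1 ∈ G ∧ (MulEquiv.prodUnits u).2 ∈ H := Iff.rfl

variable [StarMul M] [ContinuousMul M] [ContinuousStar M] [T1Space M]

/-- A closed subgroup of the unitary group, viewed inside the full group of units. -/
def unitaryClosedSubgroup (G : ClosedSubgroup (unitary M)) : ClosedSubgroup Mˣ where
  toSubgroup := G.toSubgroup.map Unitary.toUnits
  isClosed' := by
    have h_image : IsClosed (Subtype.val '' (G : Set (unitary M))) :=
      isClosed_unitary.isClosedEmbedding_subtypeVal.isClosedMap _ G.isClosed'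
    convert h_image.preimage Units.continuous_val using 1
    ext u
    exact exists_congr fun g => and_congr_right fun _ => Units.ext_iff

end Monoid

variable {E E₂ W : Type*} [NormedRing E] [NormedAlgebra ℝ E] [CompleteSpace E]
  [NormedRing E₂] [NormedAlgebra ℝ E₂] [CompleteSpace E₂]
  [NormedAddCommGroup W] [NormedSpace ℝ W]

lemma prodUnits_expUnit (Z : E × E₂) :
    MulEquiv.prodUnits (expUnit Z) = (expUnit Z.1, expUnit Z.2) :=
  letI : NormedAlgebra ℚ E := .restrictScalars ℚ ℝ E
  letI : NormedAlgebra ℚ E₂ := .restrictScalars ℚ ℝ E₂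
  Prod.ext (Units.ext (Prod.fst_exp Z)) (Units.ext (Prod.snd_exp Z))

lemma lieSpace_prodClosedSubgroup (G : ClosedSubgroup Eˣ) (H : ClosedSubgroup E₂ˣ) :
    lieSpace (prodClosedSubgroup G H) = (lieSpace G).prod (lieSpace H) := by
  ext Z
  simp only [mem_lieSpace, Submodule.mem_prod, mem_prodClosedSubgroup, prodUnits_expUnit,
    Prod.smul_fst, Prod.smul_snd, forall_and]

theorem dimH_bilinear_orbit [FiniteDimensional ℝ E] [FiniteDimensional ℝ E₂]
    (G : ClosedSubgroup Eˣ) (H : ClosedSubgroup E₂ˣ) (ρ : (E × E₂) →* (W →L[ℝ] W)) (w : W)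
    (B : E →ₗ[ℝ] E₂ →ₗ[ℝ] W) (hB : ∀ x y, ρ (x, y) w = B x y) :
    dimH {v | ∃ g ∈ G, ∃ h ∈ H, v = ρ (g, h) w} =
      Module.finrank ℝ (((lieSpace G).prod (lieSpace H)).map ((B.flip 1).coprod (B 1))) := by
  have h_orbit : {v | ∃ g ∈ G, ∃ h ∈ H, v = ρ (g, h) w} =
      (fun u : (E × E₂)ˣ => ρ u w) '' prodClosedSubgroup G H := by
    ext v
    constructor
    · rintro ⟨g, hg, h, hh, rfl⟩
      exact ⟨MulEquiv.prodUnits.symm (g, h), ⟨hg, hh⟩, rfl⟩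
    · rintro ⟨u, hu, rfl⟩
      exact ⟨_, hu.1, _, hu.2, rfl⟩
  let B' := B.toContinuousBilinearMap
  have h_bilin := B'.isBoundedBilinearMap
  have h_fun : (fun z => ρ z w) = fun z : E × E₂ => B' z.1 z.2 := funext fun z => hB z.1 z.2
  have h_deriv : HasFDerivAt (fun z => ρ z w) ((B'.flip 1).coprod (B' 1)) 1 := by
    rw [h_fun]
    convert h_bilin.hasFDerivAt 1 using 1
    ext z <;> simp
  rw [h_orbit, dimH_orbit_eq_finrank (h_fun ▸ h_bilin.contDiff) h_deriv,
    lieSpace_prodClosedSubgroup]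
  rfl

variable [StarRing E] [ContinuousStar E]

lemma lieSpace_unitaryClosedSubgroup_le [StarModule ℝ E] (G : ClosedSubgroup (unitary E)) :
    lieSpace (unitaryClosedSubgroup G) ≤ skewAdjoint.submodule ℝ E := by
  let _ : NormedAlgebra ℚ E := .restrictScalars ℚ ℝ E
  intro X hX
  have h_const (t : ℝ) : NormedSpace.exp (t • star X) * NormedSpace.exp (t • X) = 1 := by
    obtain ⟨g, -, hg⟩ := hX t
    have h_exp : (g : E) = NormedSpace.exp (t • X) := congrArg Units.val hg
    have h_star := Unitary.coe_star_mul_self g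
    rwa [h_exp, NormedSpace.star_exp, star_smul, star_trivial] at h_star
  have h_deriv : HasDerivAt (fun _ : ℝ => (1 : E)) (star X + X) 0 :=
    (((hasDerivAt_exp_smul_zero (star X)).mul (hasDerivAt_exp_smul_zero X)).congr_deriv
      (by simp)).congr_of_eventuallyEq (.of_forall fun t => (h_const t).symm)
  exact eq_neg_of_add_eq_zero_left (h_deriv.unique (hasDerivAt_const 0 1))

lemma lieSpace_unitaryClosedSubgroup_top [StarModule ℝ E] :
    lieSpace (unitaryClosedSubgroup (M := E) ⟨⊤, isClosed_univ⟩) = skewAdjoint.submodule ℝ E := by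
  let _ : NormedAlgebra ℚ E := .restrictScalars ℚ ℝ E
  refine (lieSpace_unitaryClosedSubgroup_le _).antisymm fun X hX t => ?_
  have h_unitary : NormedSpace.exp (t • X) ∈ unitary E :=
    NormedSpace.exp_mem_unitary_of_mem_skewAdjoint ((skewAdjoint.submodule ℝ E).smul_mem t hX)
  exact ⟨⟨_, h_unitary⟩, trivial, Units.ext rfl⟩

variable [FiniteDimensional ℝ E] [StarRing E₂] [ContinuousStar E₂] [StarModule ℝ E₂]
  [FiniteDimensional ℝ E₂]

theorem dimH_bilinear_unitary_orbit (G : ClosedSubgroup (unitary E))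
    (ρ : (E × E₂) →* (W →L[ℝ] W)) (w : W) (B : E →ₗ[ℝ] E₂ →ₗ[ℝ] W)
    (hB : ∀ x y, ρ (x, y) w = B x y) :
    dimH {v | ∃ g ∈ G, ∃ h ∈ unitary E₂, v = ρ (g, h) w} =
      Module.finrank ℝ (((lieSpace (unitaryClosedSubgroup G)).prod
        (skewAdjoint.submodule ℝ E₂)).map ((B.flip 1).coprod (B 1))) := by
  rw [← lieSpace_unitaryClosedSubgroup_top, ← dimH_bilinear_orbit _ _ ρ w B hB]
  congr 1
  ext v
  constructor
  · rintro ⟨g, hg, h, hh, rfl⟩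
    exact ⟨Unitary.toUnits g, ⟨g, hg, rfl⟩, Unitary.toUnits ⟨h, hh⟩, ⟨⟨h, hh⟩, trivial, rfl⟩, rfl⟩
  · rintro ⟨_, ⟨g, hg, rfl⟩, _, ⟨h, -, rfl⟩, rfl⟩
    exact ⟨g, hg, h, h.2, rfl⟩

end ProductsAndUnitary

section TangentSpaces

lemma finrank_le_add_of_map_inf_ker_le {K V V₁ V₂ : Type*} [DivisionRing K] [AddCommGroup V]
    [Module K V] [AddCommGroup V₁] [Module K V₁] [AddCommGroup V₂] [Module K V₂]
    [FiniteDimensional K V₁] {P : Submodule K V} [FiniteDimensional K P] {Q : Submodule K V₂}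
    [FiniteDimensional K Q] {f : V →ₗ[K] V₁} {g : V →ₗ[K] V₂}
    (h_ker : Disjoint (LinearMap.ker f) (LinearMap.ker g))
    (h_map : (P ⊓ LinearMap.ker f).map g ≤ Q) :
    Module.finrank K P ≤ Module.finrank K V₁ + Module.finrank K Q := by
  let g' : LinearMap.ker (f.domRestrict P) →ₗ[K] Q :=
    ((g.domRestrict P).domRestrict _).codRestrict Q fun x => h_map ⟨x, ⟨x.1.2, x.2⟩, rfl⟩
  have hg' : Function.Injective g' := by
    rw [injective_iff_map_eq_zero]
    intro x hx
    exact Subtype.ext (Subtype.ext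
      (Submodule.disjoint_def.1 h_ker _ x.2 (congrArg Subtype.val hx)))
  rw [← (f.domRestrict P).finrank_range_add_finrank_ker]
  exact add_le_add (Submodule.finrank_le _) (LinearMap.finrank_le_finrank_of_injective hg')

variable {𝕜 m : Type*} [RCLike 𝕜]

section

variable {n : Type*}

lemma submatrix_mem_skewAdjoint {l : Type*} {Y : Matrix n n 𝕜}
    (hY : Y ∈ skewAdjoint (Matrix n n 𝕜)) (e : l → n) :
    Y.submatrix e e ∈ skewAdjoint (Matrix l l 𝕜) := by
  rw [skewAdjoint.mem_iff, star_eq_conjTranspose] at hY ⊢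
  rw [conjTranspose_submatrix, hY, submatrix_neg, Pi.neg_apply, Pi.neg_apply]

variable [Fintype m] [Fintype n]

/-- The derivative at the identity of `(g, h) ↦ g A h*`. -/
noncomputable def infinitesimalAction (A : Matrix m n 𝕜) :
    (Matrix m m 𝕜 × Matrix n n 𝕜) →ₗ[ℝ] Matrix m n 𝕜 where
  toFun Z := Z.1 * A + A * Z.2ᴴ
  map_add' Z Z' := by
    simp only [Prod.fst_add, Prod.snd_add, conjTranspose_add, Matrix.add_mul, Matrix.mul_add]
    abel
  map_smul' c Z := by simp [conjTranspose_smul]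

lemma infinitesimalAction_apply (A : Matrix m n 𝕜) (X : Matrix m m 𝕜) (Y : Matrix n n 𝕜) :
    infinitesimalAction A (X, Y) = X * A + A * Yᴴ := rfl

/-- The tangent space at `A` to the orbit of `A` under `G × U(n)`, where `𝔤` is the Lie algebra
of `G`. -/
noncomputable def orbitTangent (𝔤 : Submodule ℝ (Matrix m m 𝕜)) (A : Matrix m n 𝕜) :
    Submodule ℝ (Matrix m n 𝕜) :=
  (𝔤.prod (skewAdjoint.submodule ℝ (Matrix n n 𝕜))).map (infinitesimalAction A)

lemma exists_mem_unitaryGroup_conjTranspose_mul_self_eq_diagonal [DecidableEq n]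
    (A : Matrix m n 𝕜) :
    ∃ u ∈ unitaryGroup n 𝕜, ∃ d : n → 𝕜, (A * u)ᴴ * (A * u) = diagonal d := by
  have hA : (Aᴴ * A).IsHermitian := isHermitian_conjTranspose_mul_self A
  refine ⟨hA.eigenvectorUnitary, hA.eigenvectorUnitary.2, RCLike.ofReal ∘ hA.eigenvalues, ?_⟩
  rw [← hA.conjStarAlgAut_star_eigenvectorUnitary, Unitary.conjStarAlgAut_star_apply,
    conjTranspose_mul, star_eq_conjTranspose]
  simp only [Matrix.mul_assoc]

end

variable [Fintype m] {n : ℕ} (A : Matrix m (Fin (n + 1)) 𝕜) (p : Fin (n + 1))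

lemma infinitesimalAction_submatrix_succAbove (X : Matrix m m 𝕜)
    (Y : Matrix (Fin (n + 1)) (Fin (n + 1)) 𝕜) :
    (infinitesimalAction A (X, Y)).submatrix id p.succAbove =
      infinitesimalAction (A.submatrix id p.succAbove)
        (X, Y.submatrix p.succAbove p.succAbove) +
      vecMulVec (A.col p) (star (p.removeNth (Y.col p))) := by
  ext i j
  simp [infinitesimalAction_apply, Matrix.mul_apply, Fin.sum_univ_succAbove _ p, vecMulVec_apply,
    Fin.removeNth]
  ring

lemma infinitesimalAction_col (X : Matrix m m 𝕜) {Y : Matrix (Fin (n + 1)) (Fin (n + 1)) 𝕜}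
    (hY : Y ∈ skewAdjoint (Matrix (Fin (n + 1)) (Fin (n + 1)) 𝕜)) :
    (infinitesimalAction A (X, Y)).col p =
      X *ᵥ A.col p - A.submatrix id p.succAbove *ᵥ p.removeNth (Y.col p) - Y p p • A.col p := by
  have hY_star : Yᴴ = -Y := hY
  ext i
  rw [infinitesimalAction_apply, hY_star]
  simp [Matrix.mul_apply, Fin.sum_univ_succAbove _ p, Matrix.mulVec, dotProduct, Fin.removeNth]
  ring

variable {A p}

lemma star_vecMul_infinitesimalAction {X : Matrix m m 𝕜} {Y : Matrix (Fin n) (Fin n) 𝕜}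
    {B : Matrix m (Fin n) 𝕜} {v : m → 𝕜} {y : Fin n → 𝕜} {c : 𝕜}
    (hX : X ∈ skewAdjoint (Matrix m m 𝕜)) (hBv : Bᴴ *ᵥ v = 0) (hXv : X *ᵥ v = B *ᵥ y + c • v) :
    star v ᵥ* infinitesimalAction B (X, Y) = -(star y ᵥ* (Bᴴ * B)) := by
  have hX_star : Xᴴ = -X := hX
  have h_vB : star v ᵥ* B = 0 := by simpa [star_mulVec] using congrArg star hBv
  have h_vX : star v ᵥ* X = -(star y ᵥ* Bᴴ + star c • star v) := by
    rw [← star_mulVec, ← star_smul, ← star_add, ← hXv, star_mulVec, hX_star, vecMul_neg, neg_neg]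
  rw [infinitesimalAction_apply, vecMul_add, ← vecMul_vecMul, ← vecMul_vecMul, h_vB, h_vX,
    neg_vecMul, add_vecMul, smul_vecMul, h_vB, vecMul_vecMul]
  simp

lemma infinitesimalAction_submatrix_of_col_eq_zero {X : Matrix m m 𝕜}
    {Y : Matrix (Fin (n + 1)) (Fin (n + 1)) 𝕜} {B : Matrix m (Fin n) 𝕜}
    (hB : B = A.submatrix id p.succAbove) (hX : X ∈ skewAdjoint (Matrix m m 𝕜))
    (hY : Y ∈ skewAdjoint (Matrix (Fin (n + 1)) (Fin (n + 1)) 𝕜))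
    (h_orth : Bᴴ *ᵥ A.col p = 0) (h_unit : A.col p = 0 ∨ IsUnit (Bᴴ * B))
    (h_col : (infinitesimalAction A (X, Y)).col p = 0) :
    (infinitesimalAction A (X, Y)).submatrix id p.succAbove =
      infinitesimalAction B (X, Y.submatrix p.succAbove p.succAbove) -
        vecMulVec (A.col p) (star (A.col p)) *
          infinitesimalAction B (X, Y.submatrix p.succAbove p.succAbove) * (Bᴴ * B)⁻¹ := by
  have hXv : X *ᵥ A.col p = B *ᵥ p.removeNth (Y.col p) + Y p p • A.col p := by
    rwa [infinitesimalAction_col A p X hY, ← hB, sub_sub, sub_eq_zero] at h_col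
  rw [infinitesimalAction_submatrix_succAbove, ← hB, vecMulVec_mul, vecMulVec_mul,
    star_vecMul_infinitesimalAction hX h_orth hXv, neg_vecMul, vecMulVec_neg, sub_neg_eq_add,
    vecMul_vecMul]
  obtain hv | h_unit := h_unit
  · simp [hv]
  · rw [Matrix.mul_nonsing_inv _ ((isUnit_iff_isUnit_det _).1 h_unit), vecMul_one]

theorem finrank_orbitTangent_le_add {𝔤 : Submodule ℝ (Matrix m m 𝕜)}
    (h𝔤 : 𝔤 ≤ skewAdjoint.submodule ℝ (Matrix m m 𝕜)) {B : Matrix m (Fin n) 𝕜}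
    (hB : B = A.submatrix id p.succAbove) (h_orth : Bᴴ *ᵥ A.col p = 0)
    (h_unit : A.col p = 0 ∨ IsUnit (Bᴴ * B)) :
    Module.finrank ℝ (orbitTangent 𝔤 A) ≤
      Module.finrank ℝ (m → 𝕜) + Module.finrank ℝ (orbitTangent 𝔤 B) := by
  let col_p : Matrix m (Fin (n + 1)) 𝕜 →ₗ[ℝ] (m → 𝕜) :=
    { toFun := fun C => C.col p, map_add' := fun _ _ => rfl, map_smul' := fun _ _ => rfl }
  let delete_p : Matrix m (Fin (n + 1)) 𝕜 →ₗ[ℝ] Matrix m (Fin n) 𝕜 :=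
    { toFun := fun C => C.submatrix id p.succAbove
      map_add' := fun _ _ => rfl, map_smul' := fun _ _ => rfl }
  let φ : Matrix m (Fin n) 𝕜 →ₗ[ℝ] Matrix m (Fin n) 𝕜 :=
    LinearMap.id - mulRightLinearMap m ℝ (Bᴴ * B)⁻¹ ∘ₗ
      mulLeftLinearMap (Fin n) ℝ (vecMulVec (A.col p) (star (A.col p)))
  have h_ker : Disjoint (LinearMap.ker col_p) (LinearMap.ker delete_p) := by
    refine Submodule.disjoint_def.2 fun C h_col h_delete => ?_
    ext i j
    obtain rfl | ⟨j, rfl⟩ := p.eq_self_or_eq_succAbove j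
    · exact congrFun h_col i
    · exact congrFun (congrFun h_delete i) j
  have h_map : (orbitTangent 𝔤 A ⊓ LinearMap.ker col_p).map delete_p ≤
      (orbitTangent 𝔤 B).map φ := by
    rintro _ ⟨_, ⟨⟨⟨X, Y⟩, ⟨hX, hY⟩, rfl⟩, h_col⟩, rfl⟩
    exact ⟨_, ⟨(X, Y.submatrix p.succAbove p.succAbove),
        ⟨hX, submatrix_mem_skewAdjoint hY p.succAbove⟩, rfl⟩,
      (infinitesimalAction_submatrix_of_col_eq_zero hB (h𝔤 hX) hY h_orth h_unit h_col).symm⟩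
  exact (finrank_le_add_of_map_inf_ker_le h_ker h_map).trans
    (Nat.add_le_add_left (Submodule.finrank_map_le _ _) _)

open scoped ComplexOrder in
lemma exists_col_orthogonal_of_conjTranspose_mul_self_eq_diagonal
    {A : Matrix m (Fin (n + 1)) 𝕜} {d : Fin (n + 1) → 𝕜} (hA : Aᴴ * A = diagonal d) :
    ∃ p : Fin (n + 1), (A.submatrix id p.succAbove)ᴴ *ᵥ A.col p = 0 ∧
      (A.col p = 0 ∨ IsUnit ((A.submatrix id p.succAbove)ᴴ * A.submatrix id p.succAbove)) := by
  have h_orth (p : Fin (n + 1)) : (A.submatrix id p.succAbove)ᴴ *ᵥ A.col p = 0 := by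
    ext j
    have h_entry : (Aᴴ * A) (p.succAbove j) p = 0 := by
      rw [hA, diagonal_apply_ne _ (p.succAbove_ne j)]
    exact h_entry
  by_cases h_zero : ∃ p, d p = 0
  · obtain ⟨p, hp⟩ := h_zero
    have h_norm : star (A.col p) ⬝ᵥ A.col p = 0 := by
      rw [← hp, ← diagonal_apply_eq d p, ← hA]
      rfl
    exact ⟨p, h_orth p, .inl (dotProduct_star_self_eq_zero.1 h_norm)⟩
  · push Not at h_zero
    refine ⟨Fin.last n, h_orth _, .inr ?_⟩
    have h_gram : (A.submatrix id (Fin.last n).succAbove)ᴴ * A.submatrix id (Fin.last n).succAbove =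
        diagonal (d ∘ (Fin.last n).succAbove) := by
      rw [← submatrix_diagonal _ _ Fin.succAbove_right_injective, ← hA]
      rfl
    rw [h_gram, isUnit_diagonal, Pi.isUnit_iff]
    exact fun j => (h_zero _).isUnit

end TangentSpaces

section TensorAction

variable {𝕜 m n : Type*} [RCLike 𝕜] [Fintype m] [DecidableEq m] [Fintype n] [DecidableEq n]

attribute [local instance] Matrix.normedSpace

/-- The real bilinear map `(x, y) ↦ x A y*`. -/
noncomputable def tensorBilin (A : Matrix m n 𝕜) :
    Matrix m m 𝕜 →ₗ[ℝ] Matrix n n 𝕜 →ₗ[ℝ] Matrix m n 𝕜 :=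
  LinearMap.mk₂ ℝ (fun x y => x * A * yᴴ) (fun _ _ _ => by simp only [Matrix.add_mul])
    (fun _ _ _ => by simp only [Matrix.smul_mul])
    (fun _ _ _ => by simp only [conjTranspose_add, Matrix.mul_add])
    (fun _ _ _ => by simp only [conjTranspose_smul, star_trivial, Matrix.mul_smul])

/-- The orbit of `A` under the action `(g, h)·A = g A h*` of `G × U(n)`, where `U(n)` is the
unitary group over `𝕜`, that is, `O(n)` when `𝕜 = ℝ`. -/
def tensorOrbit (G : Subgroup (unitaryGroup m 𝕜)) (A : Matrix m n 𝕜) : Set (Matrix m n 𝕜) :=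
  {B | ∃ g ∈ G, ∃ h ∈ unitaryGroup n 𝕜, B = (g : Matrix m m 𝕜) * A * hᴴ}

lemma tensorOrbit_mul_unitary (G : Subgroup (unitaryGroup m 𝕜)) (A : Matrix m n 𝕜)
    {u : Matrix n n 𝕜} (hu : u ∈ unitaryGroup n 𝕜) : tensorOrbit G (A * u) = tensorOrbit G A := by
  ext B
  constructor
  · rintro ⟨g, hg, h, hh, rfl⟩
    exact ⟨g, hg, h * uᴴ, mul_mem hh (Unitary.star_mem hu), by
      simp only [conjTranspose_mul, conjTranspose_conjTranspose, Matrix.mul_assoc]⟩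
  · rintro ⟨g, hg, h, hh, rfl⟩
    have h_cancel : u * (uᴴ * hᴴ) = hᴴ := by
      rw [← Matrix.mul_assoc, ← star_eq_conjTranspose, mem_unitaryGroup_iff.1 hu, Matrix.one_mul]
    exact ⟨g, hg, h * u, mul_mem hh hu, by
      simp only [conjTranspose_mul, Matrix.mul_assoc, h_cancel]⟩

/-- The action `(x, y)·A = x A y*`, as a monoid homomorphism on all pairs of square matrices. -/
noncomputable def tensorAction :
    Matrix m m 𝕜 × Matrix n n 𝕜 →* Matrix m n 𝕜 →L[ℝ] Matrix m n 𝕜 where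
  toFun z := LinearMap.toContinuousLinearMap
    (mulRightLinearMap m ℝ z.2ᴴ ∘ₗ mulLeftLinearMap n ℝ z.1)
  map_one' := by ext; simp
  map_mul' z z' := by ext; simp [Matrix.mul_assoc]

-- The elementwise norm is not submultiplicative, so it gives no exponential on square matrices.
attribute [local instance] Matrix.linftyOpNormedRing Matrix.linftyOpNormedAlgebra

lemma continuousStar_linftyOp : @ContinuousStar (Matrix m m 𝕜)
    Matrix.linftyOpNormedRing.toPseudoMetricSpace.toUniformSpace.toTopologicalSpace _ :=
  ⟨continuous_id.matrix_conjTranspose⟩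

lemma completeSpace_linftyOp : @CompleteSpace (Matrix m m 𝕜)
    Matrix.linftyOpNormedRing.toPseudoMetricSpace.toUniformSpace :=
  FiniteDimensional.complete ℝ _

attribute [local instance] continuousStar_linftyOp completeSpace_linftyOp

theorem dimH_tensorOrbit (G : ClosedSubgroup (unitaryGroup m 𝕜)) (A : Matrix m n 𝕜) :
    dimH (tensorOrbit G.toSubgroup A) =
      Module.finrank ℝ (orbitTangent (lieSpace (unitaryClosedSubgroup G)) A) := by
  have h_deriv : ((tensorBilin A).flip 1).coprod (tensorBilin A 1) = infinitesimalAction A := by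
    ext <;> simp [tensorBilin, infinitesimalAction]
  have h_dim := dimH_bilinear_unitary_orbit G tensorAction A (tensorBilin A) fun _ _ => rfl
  rwa [h_deriv] at h_dim

theorem exists_dimH_tensorOrbit_le_add (G : ClosedSubgroup (unitaryGroup m 𝕜)) {n : ℕ}
    (A : Matrix m (Fin (n + 1)) 𝕜) : ∃ B : Matrix m (Fin n) 𝕜,
      dimH (tensorOrbit G.toSubgroup A) ≤
        Module.finrank ℝ (m → 𝕜) + dimH (tensorOrbit G.toSubgroup B) := by
  obtain ⟨u, hu, d, hd⟩ := exists_mem_unitaryGroup_conjTranspose_mul_self_eq_diagonal A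
  obtain ⟨p, h_orth, h_unit⟩ := exists_col_orthogonal_of_conjTranspose_mul_self_eq_diagonal hd
  refine ⟨(A * u).submatrix id p.succAbove, ?_⟩
  rw [← tensorOrbit_mul_unitary _ A hu, dimH_tensorOrbit, dimH_tensorOrbit]
  exact_mod_cast finrank_orbitTangent_le_add (lieSpace_unitaryClosedSubgroup_le G) rfl h_orth h_unit

end TensorAction

section Cohomogeneity

variable {𝕜 m : Type*} [RCLike 𝕜] [Fintype m] [DecidableEq m]

/-- The cohomogeneity of the action of `G × U(n)` on `m × n` matrices over `𝕜`: the real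
dimension of the space minus the largest Hausdorff dimension of an orbit. -/
noncomputable def tensorCohomogeneity (G : Subgroup (unitaryGroup m 𝕜)) (n : ℕ) : ℝ≥0∞ :=
  Module.finrank ℝ (Matrix m (Fin n) 𝕜) - ⨆ A : Matrix m (Fin n) 𝕜, dimH (tensorOrbit G A)

lemma isClosed_of_isClosed_coe {X : Type*} [TopologicalSpace X] {p : X → Prop}
    {S : Set (Subtype p)} (hS : IsClosed {x | ∃ y ∈ S, x = (y : X)}) : IsClosed S := by
  convert hS.preimage continuous_subtype_val using 1
  ext y
  exact ⟨fun hy => ⟨y, hy, rfl⟩, fun ⟨z, hz, hyz⟩ => Subtype.ext hyz ▸ hz⟩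

theorem stmt10_general (G : ClosedSubgroup (unitaryGroup m 𝕜)) (n : ℕ) :
    tensorCohomogeneity G.toSubgroup n ≤ tensorCohomogeneity G.toSubgroup (n + 1) := by
  have h_sup : ⨆ A : Matrix m (Fin (n + 1)) 𝕜, dimH (tensorOrbit G.toSubgroup A) ≤
      Module.finrank ℝ (m → 𝕜) + ⨆ B : Matrix m (Fin n) 𝕜, dimH (tensorOrbit G.toSubgroup B) := by
    refine iSup_le fun A => ?_
    obtain ⟨B, hB⟩ := exists_dimH_tensorOrbit_le_add G A
    exact hB.trans (by gcongr; exact le_iSup (fun B => dimH (tensorOrbit G.toSubgroup B)) B)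
  have h_finrank : Module.finrank ℝ (Matrix m (Fin (n + 1)) 𝕜) =
      Module.finrank ℝ (m → 𝕜) + Module.finrank ℝ (Matrix m (Fin n) 𝕜) := by
    simp only [Module.finrank_matrix, Module.finrank_pi_fintype, Finset.sum_const,
      Finset.card_univ, Fintype.card_fin, smul_eq_mul]
    ring
  calc tensorCohomogeneity G.toSubgroup n
      = (Module.finrank ℝ (m → 𝕜) + Module.finrank ℝ (Matrix m (Fin n) 𝕜) : ℝ≥0∞) -
          (Module.finrank ℝ (m → 𝕜) +
            ⨆ B : Matrix m (Fin n) 𝕜, dimH (tensorOrbit G.toSubgroup B)) :=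
        (ENNReal.add_sub_add_eq_sub_left (ENNReal.natCast_ne_top _)).symm
    _ ≤ tensorCohomogeneity G.toSubgroup (n + 1) := by
        rw [tensorCohomogeneity, h_finrank, Nat.cast_add]
        exact tsub_le_tsub_left h_sup _

lemma cohom10_eq_tensorCohomogeneity (k : ℕ) (G : Subgroup (unitaryGroup (Fin k) ℂ)) (n : ℕ) :
    cohom10 k G n = tensorCohomogeneity G n := by
  have h_finrank : Module.finrank ℝ (Matrix (Fin k) (Fin n) ℂ) = 2 * k * n := by
    simp only [Module.finrank_matrix, Fintype.card_fin, Complex.finrank_real_complex]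
    ring
  rw [cohom10, tensorCohomogeneity, h_finrank, iSup]
  congr 2
  exact Set.ext fun d => exists_congr fun A => eq_comm

end Cohomogeneity

theorem stmt10 (k : ℕ) (hk : 1 ≤ k)
    (G : Subgroup (Matrix.unitaryGroup (Fin k) ℂ))
    (hG : IsClosed {M : Matrix (Fin k) (Fin k) ℂ | ∃ g ∈ G, M = g}) :
    ∀ n : ℕ, 1 ≤ n → cohom10 k G n ≤ cohom10 k G (n + 1) := by
  intro n _
  simpa only [cohom10_eq_tensorCohomogeneity] using
    stmt10_general ⟨G, isClosed_of_isClosed_coe hG⟩ n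
end
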